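/- arXiv:math/9809080 — 3 statements merged into one kernel-verified Lean document; each statement's English description precedes it below -/
import Mathlib

section
/- Let u ∈ 𝒜 be a Haar unitary and let p = p* ∈ 𝒜 satisfy φ(p^k) = 0 for every odd k ≥ 1, with {u, u*} free from {p}; set c := up (so c is R-diagonal). Let a ∈ 𝒜 be such that {a, a*} is free from {c, c*} with respect to φ. Then the self-adjoint matrices A := [[0, a],[a*, 0]] and S := [[0, c],[c*, 0]] in M₂(𝒜) are free with respect to φ₂: the sets {A} and {S} are free in (M₂(𝒜), φ₂). (Proposition 5.1.) -/
open scoped BigOperators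
open ComplexOrder

noncomputable section

variable {A : Type*} [Ring A] [Algebra ℂ A] [StarRing A]

/-- Freeness of a family of subsets of `T` with respect to a state `φ`. -/
def AreFree {T : Type*} [Ring T] [Algebra ℂ T] {ι : Type*} (φ : T → ℂ) (S : ι → Set T) :
    Prop :=
  ∀ (n : ℕ) (t : Fin (n + 1) → ι) (z : Fin (n + 1) → T),
    (∀ m, z m ∈ Algebra.adjoin ℂ (S (t m))) →
    (∀ m, φ (z m) = 0) →
    (∀ m : Fin n, t m.castSucc ≠ t m.succ) →
    φ ((List.ofFn z).prod) = 0

/-- 2×2 matrices over `A`. -/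
abbrev M₂ (A : Type*) := Matrix (Fin 2) (Fin 2) A

/-- The state `φ₂ = tr ⊗ φ` on `M₂(𝒜)`. -/
def phi2 (φ : A →ₗ[ℂ] ℂ) (X : M₂ A) : ℂ := (φ (X 0 0) + φ (X 1 1)) / 2

/-- The matrix `[[0, a], [a*, 0]]`. -/
def Amat (a : A) : M₂ A := !![0, a; star a, 0]

/-- Alternating products of centred elements, with first and last index recorded. -/
inductive AltP {T : Type*} [Ring T] [Algebra ℂ T] {ι : Type*} (φ : T → ℂ) (S : ι → Set T) :
    ι → ι → T → Prop
  | single (t : ι) (x : T) (hx : x ∈ Algebra.adjoin ℂ (S t)) (h0 : φ x = 0) : AltP φ S t t x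
  | cons (t t' e : ι) (x y : T) (hx : x ∈ Algebra.adjoin ℂ (S t)) (h0 : φ x = 0) (hne : t ≠ t')
      (hy : AltP φ S t' e y) : AltP φ S t e (x * y)

theorem AltP.append {T : Type*} [Ring T] [Algebra ℂ T] {ι : Type*} {φ : T → ℂ} {S : ι → Set T}
    {s e s' e' : ι} {x y : T} (hx : AltP φ S s e x) (hy : AltP φ S s' e' y) (h : e ≠ s') :
    AltP φ S s e' (x * y) := by
  induction hx with
  | single t x hx h0 => exact AltP.cons _ _ _ _ _ hx h0 h hy
  | cons t t' e x y' hx h0 hne hy' ih =>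
    rw [mul_assoc]
    exact AltP.cons _ _ _ _ _ hx h0 hne (ih h)

theorem AltP.data {T : Type*} [Ring T] [Algebra ℂ T] {ι : Type*} {φ : T → ℂ} {S : ι → Set T}
    {s e : ι} {x : T} (hx : AltP φ S s e x) :
    ∃ (n : ℕ) (t : Fin (n + 1) → ι) (z : Fin (n + 1) → T), t 0 = s ∧
    (∀ m, z m ∈ Algebra.adjoin ℂ (S (t m))) ∧
    (∀ m, φ (z m) = 0) ∧
    (∀ m : Fin n, t m.castSucc ≠ t m.succ) ∧ (List.ofFn z).prod = x := by
  induction hx with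
  | single t x hx h0 =>
    exact ⟨0, fun _ => t, fun _ => x, rfl, fun _ => hx, fun _ => h0, fun m => m.elim0, by simp⟩
  | cons t t' e x y hx h0 hne hy ih =>
    obtain ⟨n, τ, z, h1, h2, h3, h4, h5⟩ := ih
    refine ⟨n + 1, Fin.cons t τ, Fin.cons x z, rfl, ?_, ?_, ?_, ?_⟩
    · intro m
      refine Fin.cases ?_ (fun m => ?_) m
      · simpa using hx
      · simpa using h2 m
    · intro m
      refine Fin.cases ?_ (fun m => ?_) m
      · simpa using h0
      · simpa using h3 m
    · intro m
      refine Fin.cases ?_ (fun m => ?_) m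
      · simpa [h1] using hne
      · rw [← Fin.succ_castSucc, Fin.cons_succ, Fin.cons_succ]
        exact h4 m
    · rw [List.ofFn_succ, List.prod_cons, ← h5]
      simp only [Fin.cons_zero, Fin.cons_succ]

theorem AreFree.altP {T : Type*} [Ring T] [Algebra ℂ T] {ι : Type*} {φ : T → ℂ} {S : ι → Set T}
    (h : AreFree φ S) {s e : ι} {x : T} (hx : AltP φ S s e x) : φ x = 0 := by
  obtain ⟨n, τ, z, h1, h2, h3, h4, h5⟩ := hx.data
  rw [← h5]
  exact h n τ z h2 h3 h4

theorem AltP.of_data {T : Type*} [Ring T] [Algebra ℂ T] {ι : Type*} {φ : T → ℂ} {S : ι → Set T}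
    (n : ℕ) (t : Fin (n + 1) → ι) (z : Fin (n + 1) → T)
    (h2 : ∀ m, z m ∈ Algebra.adjoin ℂ (S (t m)))
    (h3 : ∀ m, φ (z m) = 0)
    (h4 : ∀ m : Fin n, t m.castSucc ≠ t m.succ) :
    ∃ e, AltP φ S (t 0) e (List.ofFn z).prod := by
  induction n with
  | zero => exact ⟨t 0, by simpa using AltP.single _ _ (h2 0) (h3 0)⟩
  | succ n ih =>
    obtain ⟨e, he⟩ := ih (fun m => t m.succ) (fun m => z m.succ) (fun m => h2 _) (fun m => h3 _)
      (fun m => by rw [Fin.succ_castSucc]; exact h4 m.succ)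
    refine ⟨e, ?_⟩
    rw [List.ofFn_succ, List.prod_cons]
    exact AltP.cons _ _ _ _ _ (h2 0) (h3 0) (h4 0) he

/-- Induction principle: a linear property of powers extends to the algebra they generate. -/
theorem adjoin_singleton_linear {T : Type*} [Ring T] [Algebra ℂ T] (x : T) (q : T → Prop)
    (hadd : ∀ y z, q y → q z → q (y + z)) (hsmul : ∀ (c : ℂ) y, q y → q (c • y))
    (hpow : ∀ n : ℕ, q (x ^ n)) {y : T} (hy : y ∈ Algebra.adjoin ℂ {x}) : q y := by
  rw [Algebra.adjoin_singleton_eq_range_aeval] at hy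
  obtain ⟨P, rfl⟩ := hy
  change q (Polynomial.aeval x P)
  induction P using Polynomial.induction_on' with
  | add P Q hP hQ => rw [map_add]; exact hadd _ _ hP hQ
  | monomial n c =>
    rw [Polynomial.aeval_monomial, ← Algebra.smul_def]
    exact hsmul _ _ (hpow n)

theorem Amat_entry_mem (b : A) {X : M₂ A} (hX : X ∈ Algebra.adjoin ℂ {Amat b}) (i j : Fin 2) :
    X i j ∈ Algebra.adjoin ℂ {b, star b} := by
  have hb : b ∈ Algebra.adjoin ℂ ({b, star b} : Set A) := Algebra.subset_adjoin (by simp)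
  have hb' : star b ∈ Algebra.adjoin ℂ ({b, star b} : Set A) := Algebra.subset_adjoin (by simp)
  revert i j
  refine adjoin_singleton_linear (Amat b)
    (fun X => ∀ i j, X i j ∈ Algebra.adjoin ℂ {b, star b}) ?_ ?_ ?_ hX
  · intro y z hy hz i j
    exact add_mem (hy i j) (hz i j)
  · intro c y hy i j
    exact Subalgebra.smul_mem _ (hy i j) c
  · intro n
    induction n with
    | zero =>
      intro i j
      rw [pow_zero, Matrix.one_apply]
      split_ifs
      · exact one_mem _
      · exact zero_mem _
    | succ n ih =>
      intro i j
      rw [pow_succ, Matrix.mul_apply]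
      refine sum_mem fun k _ => mul_mem (ih i k) ?_
      fin_cases k <;> fin_cases j <;> simp [Amat, hb, hb', zero_mem]

theorem Amat_diag (φ : A →ₗ[ℂ] ℂ) (hφtr : ∀ x y : A, φ (x * y) = φ (y * x)) (b : A) {X : M₂ A}
    (hX : X ∈ Algebra.adjoin ℂ {Amat b}) : φ (X 0 0) = φ (X 1 1) := by
  refine adjoin_singleton_linear (Amat b) (fun X => φ (X 0 0) = φ (X 1 1)) ?_ ?_ ?_ hX
  · intro y z hy hz
    simp [hy, hz]
  · intro c y hy
    simp [hy]
  · intro n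
    cases n with
    | zero => simp
    | succ n =>
      have h1 : ((Amat b) ^ (n + 1)) 0 0 = ((Amat b) ^ n) 0 1 * star b := by
        rw [pow_succ, Matrix.mul_apply]; simp [Amat]
      have h2 : ((Amat b) ^ (n + 1)) 1 1 = star b * ((Amat b) ^ n) 0 1 := by
        rw [pow_succ', Matrix.mul_apply]; simp [Amat]
      rw [h1, h2, hφtr]

theorem Amat_centred (φ : A →ₗ[ℂ] ℂ) (hφtr : ∀ x y : A, φ (x * y) = φ (y * x)) (b : A) {X : M₂ A}
    (hX : X ∈ Algebra.adjoin ℂ {Amat b}) (h0 : phi2 φ X = 0) (i : Fin 2) : φ (X i i) = 0 := by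
  have h := Amat_diag φ hφtr b hX
  unfold phi2 at h0
  rw [h] at h0
  have h1 : φ (X 1 1) = 0 := by
    have : (φ (X 1 1) + φ (X 1 1)) / 2 = φ (X 1 1) := by ring
    rw [← this, h0]
  fin_cases i
  · exact h.trans h1
  · exact h1

theorem Amat_selfadj_offdiag (φ : A →ₗ[ℂ] ℂ) (p : A) (hp : star p = p)
    (hodd : ∀ k : ℕ, Odd k → φ (p ^ k) = 0) {X : M₂ A}
    (hX : X ∈ Algebra.adjoin ℂ {Amat p}) : φ (X 0 1) = 0 ∧ φ (X 1 0) = 0 := by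
  have key : ∀ n : ℕ, (Amat p) ^ (2 * n) = !![p ^ (2 * n), 0; 0, p ^ (2 * n)] := by
    intro n
    induction n with
    | zero => simp [Matrix.one_fin_two]
    | succ n ih =>
      rw [mul_add, pow_add, ih]
      simp [Amat, hp, pow_two, pow_add]
  refine adjoin_singleton_linear (Amat p) (fun X => φ (X 0 1) = 0 ∧ φ (X 1 0) = 0) ?_ ?_ ?_ hX
  · intro y z hy hz
    simp [hy, hz]
  · intro c y hy
    simp [hy]
  · intro n
    rcases Nat.even_or_odd' n with ⟨k, rfl | rfl⟩
    · rw [key]; simp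
    · have := hodd (2 * k + 1) ⟨k, rfl⟩
      rw [pow_succ] at this
      rw [pow_succ, key]; simp [Amat, hp, this]

/-- The diagonal unitary `diag(u, 1)`, as a family. -/
def Uf (u : A) (i : Fin 2) : A := if i = 0 then u else 1

theorem conj_mem (u p : A) (hu : star u * u = 1) (hu' : u * star u = 1) (hp : star p = p)
    {X : M₂ A} (hX : X ∈ Algebra.adjoin ℂ {Amat (u * p)}) :
    ∃ f ∈ Algebra.adjoin ℂ {Amat p}, ∀ i j, X i j = Uf u i * f i j * star (Uf u j) := by
  refine adjoin_singleton_linear (Amat (u * p)) (fun X => ∃ f ∈ Algebra.adjoin ℂ {Amat p},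
    ∀ i j, X i j = Uf u i * f i j * star (Uf u j)) ?_ ?_ ?_ hX
  · rintro y z ⟨f, hf, hy⟩ ⟨g, hg, hz⟩
    exact ⟨f + g, add_mem hf hg, fun i j => by
      rw [Matrix.add_apply, hy, hz, Matrix.add_apply, mul_add, add_mul]⟩
  · rintro c y ⟨f, hf, hy⟩
    exact ⟨c • f, Subalgebra.smul_mem _ hf c, fun i j => by
      rw [Matrix.smul_apply, hy, Matrix.smul_apply, mul_smul_comm, smul_mul_assoc]⟩
  · intro n
    refine ⟨Amat p ^ n, Subalgebra.pow_mem _ (Algebra.subset_adjoin (Set.mem_singleton _)) n, ?_⟩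
    induction n with
    | zero =>
      intro i j
      fin_cases i <;> fin_cases j <;> simp [Uf, hu']
    | succ n ih =>
      intro i j
      rw [pow_succ, pow_succ, Matrix.mul_apply, Matrix.mul_apply]
      simp only [Fin.sum_univ_two, ih]
      have hx : ∀ x : A, star u * (u * x) = x := fun x => by rw [← mul_assoc, hu, one_mul]
      fin_cases i <;> fin_cases j <;> simp [Uf, Amat, hp, mul_assoc, hx]

/-- Words in `c, c*` that are alternating products with non-matching inner indices. -/
def Wd (φ : A →ₗ[ℂ] ℂ) (u p : A) (i j : Fin 2) (w : A) : Prop :=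
  w ∈ Algebra.adjoin ℂ {u * p, star (u * p)} ∧
    ∃ v, AltP (fun x => φ x) (![{u, star u}, {p}] : Fin 2 → Set A) 1 1 v ∧
      w = Uf u i * v * star (Uf u j)

theorem AltP_u (φ : A →ₗ[ℂ] ℂ) (u p : A)
    (hHaar : ∀ n : ℕ, 1 ≤ n → φ (u ^ n) = 0 ∧ φ (star u ^ n) = 0) :
    AltP (fun x => φ x) (![{u, star u}, {p}] : Fin 2 → Set A) 0 0 u ∧
    AltP (fun x => φ x) (![{u, star u}, {p}] : Fin 2 → Set A) 0 0 (star u) := by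
  have h := hHaar 1 le_rfl
  simp only [pow_one] at h
  exact ⟨AltP.single _ _ (Algebra.subset_adjoin (by simp)) h.1,
    AltP.single _ _ (Algebra.subset_adjoin (by simp)) h.2⟩

theorem Wd.mul {φ : A →ₗ[ℂ] ℂ} {u p : A}
    (hHaar : ∀ n : ℕ, 1 ≤ n → φ (u ^ n) = 0 ∧ φ (star u ^ n) = 0)
    {i j j' k : Fin 2} {w w' : A} (hw : Wd φ u p i j w) (hw' : Wd φ u p j' k w') (hj : j ≠ j') :
    Wd φ u p i k (w * w') := by
  obtain ⟨h1, v, hv, rfl⟩ := hw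
  obtain ⟨h1', v', hv', rfl⟩ := hw'
  obtain ⟨hu1, hu2⟩ := AltP_u φ u p hHaar
  refine ⟨mul_mem h1 h1', v * (star (Uf u j) * Uf u j') * v', ?_, by simp only [mul_assoc]⟩
  have : AltP (fun x => φ x) (![{u, star u}, {p}] : Fin 2 → Set A) 0 0
      (star (Uf u j) * Uf u j') := by
    fin_cases j <;> fin_cases j' <;> simp [Uf] at hj ⊢ <;> assumption
  exact (hv.append this (by simp)).append hv' (by simp)

theorem Wd.phi {φ : A →ₗ[ℂ] ℂ} (hφtr : ∀ x y : A, φ (x * y) = φ (y * x)) {u p : A}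
    (hu : star u * u = 1)
    (hHaar : ∀ n : ℕ, 1 ≤ n → φ (u ^ n) = 0 ∧ φ (star u ^ n) = 0)
    (hfree_up : AreFree (fun x => φ x) (![{u, star u}, {p}] : Fin 2 → Set A))
    {i j : Fin 2} {w : A} (hw : Wd φ u p i j w) : φ w = 0 := by
  obtain ⟨h1, v, hv, rfl⟩ := hw
  obtain ⟨hu1, hu2⟩ := AltP_u φ u p hHaar
  have e0 : φ v = 0 := hfree_up.altP hv
  have e1 : φ (u * v) = 0 := hfree_up.altP (hu1.append hv (by simp))
  have e2 : φ (v * star u) = 0 := hfree_up.altP (hv.append hu2 (by simp))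
  have e3 : φ (u * v * star u) = 0 := by rw [hφtr, ← mul_assoc, hu, one_mul, e0]
  fin_cases i <;> fin_cases j <;> simp [Uf, e0, e1, e2, e3]

theorem Wd_entry {φ : A →ₗ[ℂ] ℂ} (hφtr : ∀ x y : A, φ (x * y) = φ (y * x)) {u p : A}
    (hu : star u * u = 1) (hu' : u * star u = 1) (hp : star p = p)
    (hodd : ∀ k : ℕ, Odd k → φ (p ^ k) = 0)
    {X : M₂ A} (hX : X ∈ Algebra.adjoin ℂ {Amat (u * p)}) (h0 : phi2 φ X = 0) (i j : Fin 2) :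
    Wd φ u p i j (X i j) := by
  have hc := Amat_centred φ hφtr _ hX h0
  obtain ⟨f, hf, hXf⟩ := conj_mem u p hu hu' hp hX
  obtain ⟨ho1, ho2⟩ := Amat_selfadj_offdiag φ p hp hodd hf
  have hd1 : φ (f 1 1) = 0 := by
    have := hc 1
    rw [hXf] at this
    simpa [Uf] using this
  have hd0 : φ (f 0 0) = 0 := (Amat_diag φ hφtr p hf).trans hd1
  refine ⟨Amat_entry_mem _ hX i j, f i j, AltP.single _ _ ?_ ?_, hXf i j⟩
  · simpa [hp] using Amat_entry_mem p hf i j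
  · fin_cases i <;> fin_cases j <;> simp [ho1, ho2, hd0, hd1]

/-- The reduced words starting with a `c`-word. -/
def DS (φ : A →ₗ[ℂ] ℂ) (u p a : A) (i : Fin 2) : Set A :=
  {y | ∃ k w r, Wd φ u p i k w ∧ y = w * r ∧ (r = 1 ∨ ∃ e,
    AltP (fun x => φ x) (![{a, star a}, {u * p, star (u * p)}] : Fin 2 → Set A) 0 e r)}

/-- The reduced words arising from a product starting with `Amat a`. -/
def DA (φ : A →ₗ[ℂ] ℂ) (u p a : A) (i : Fin 2) : Set A :=
  {y | (∃ e, AltP (fun x => φ x) (![{a, star a}, {u * p, star (u * p)}] : Fin 2 → Set A) 0 e y) ∨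
    ∃ j, j ≠ i ∧ y ∈ DS φ u p a j}

theorem span_mul {T : Type*} [Ring T] [Algebra ℂ T] {S : Set T} {N : Submodule ℂ T} {x y : T}
    (hy : y ∈ Submodule.span ℂ S) (h : ∀ s ∈ S, x * s ∈ N) : x * y ∈ N := by
  induction hy using Submodule.span_induction with
  | mem s hs => exact h s hs
  | zero => simp
  | add a b _ _ ha hb => rw [mul_add]; exact add_mem ha hb
  | smul c a _ ha => rw [mul_smul_comm]; exact N.smul_mem c ha

theorem span_phi {φ : A →ₗ[ℂ] ℂ} {S : Set A} {y : A}
    (hy : y ∈ Submodule.span ℂ S) (h : ∀ s ∈ S, φ s = 0) : φ y = 0 :=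
  (Submodule.span_le (p := LinearMap.ker φ)).2 (fun s hs => h s hs) hy

theorem split_center {φ : A →ₗ[ℂ] ℂ} (hφ1 : φ 1 = 1) (x : A) :
    φ (x - φ x • (1 : A)) = 0 := by
  simp [hφ1]

theorem main_ind
    (φ : A →ₗ[ℂ] ℂ)
    (hφ1 : φ 1 = 1)
    (hφtr : ∀ x y : A, φ (x * y) = φ (y * x))
    (u p a : A)
    (hu : star u * u = 1) (hu' : u * star u = 1)
    (hHaar : ∀ n : ℕ, 1 ≤ n → φ (u ^ n) = 0 ∧ φ (star u ^ n) = 0)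
    (hp : star p = p)
    (hodd : ∀ k : ℕ, Odd k → φ (p ^ k) = 0)
    (hfree_up : AreFree (fun x => φ x) (![{u, star u}, {p}] : Fin 2 → Set A))
    {s e : Fin 2} {X : M₂ A}
    (hX : AltP (fun X => phi2 φ X) (![{Amat a}, {Amat (u * p)}] : Fin 2 → Set (M₂ A)) s e X) :
    (s = 1 → ∀ i j, X i j ∈ Submodule.span ℂ (DS φ u p a i)) ∧
    (s = 0 → (X ∈ Algebra.adjoin ℂ {Amat a} ∧ phi2 φ X = 0) ∨
      ∀ i j, X i j ∈ Submodule.span ℂ (DA φ u p a i)) := by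
  have hDSmul : ∀ {i k : Fin 2} {x y : A}, Wd φ u p i k x → y ∈ DA φ u p a k →
      x * y ∈ Submodule.span ℂ (DS φ u p a i) := by
    intro i k x y hx hy
    refine Submodule.subset_span ?_
    rcases hy with he | ⟨j, hj, k', w, r, hw, rfl, hr⟩
    · exact ⟨k, x, y, hx, rfl, Or.inr he⟩
    · exact ⟨k', x * w, r, hx.mul hHaar hw hj.symm, by rw [mul_assoc], hr⟩
  have hDSalt : ∀ {k : Fin 2} {y : A}, y ∈ DS φ u p a k →
      ∃ e, AltP (fun x => φ x) (![{a, star a}, {u * p, star (u * p)}] : Fin 2 → Set A) 1 e y := by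
    rintro k y ⟨k', w, r, hw, rfl, hr⟩
    have h1 : AltP (fun x => φ x) (![{a, star a}, {u * p, star (u * p)}] : Fin 2 → Set A) 1 1 w :=
      AltP.single _ _ hw.1 (hw.phi hφtr hu hHaar hfree_up)
    rcases hr with rfl | ⟨e, he⟩
    · exact ⟨1, by simpa using h1⟩
    · exact ⟨e, h1.append he (by simp)⟩
  have hDAmul : ∀ {i k : Fin 2} {x y : A}, x ∈ Algebra.adjoin ℂ {a, star a} → φ x = 0 →
      y ∈ DS φ u p a k → x * y ∈ Submodule.span ℂ (DA φ u p a i) := by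
    intro i k x y hx h0 hy
    obtain ⟨e, he⟩ := hDSalt hy
    exact Submodule.subset_span (Or.inl ⟨e, AltP.cons 0 1 e x y hx h0 (by simp) he⟩)
  have hAA : ∀ {x y : M₂ A}, x ∈ Algebra.adjoin ℂ {Amat a} → phi2 φ x = 0 →
      (∀ i j, y i j ∈ Submodule.span ℂ (DS φ u p a i)) →
      ∀ i j, (x * y) i j ∈ Submodule.span ℂ (DA φ u p a i) := by
    intro x y hx h0 hy i j
    rw [Matrix.mul_apply]
    refine sum_mem fun k _ => span_mul (hy k j) fun s hs => ?_
    have hm := Amat_entry_mem a hx i k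
    by_cases hik : i = k
    · subst hik
      exact hDAmul hm (Amat_centred φ hφtr a hx h0 i) hs
    · have h1 : x i k * s = (x i k - φ (x i k) • (1 : A)) * s + φ (x i k) • s := by
        rw [sub_mul, smul_mul_assoc, one_mul, sub_add_cancel]
      rw [h1]
      refine add_mem (hDAmul (sub_mem hm (Subalgebra.smul_mem _ (one_mem _) _))
        (split_center hφ1 _) hs) (Submodule.smul_mem _ _ (Submodule.subset_span ?_))
      exact Or.inr ⟨k, fun h => hik h.symm, hs⟩
  have hSA : ∀ {x y : M₂ A}, x ∈ Algebra.adjoin ℂ {Amat (u * p)} → phi2 φ x = 0 →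
      (∀ i j, y i j ∈ Submodule.span ℂ (insert 1 (DA φ u p a i))) →
      ∀ i j, (x * y) i j ∈ Submodule.span ℂ (DS φ u p a i) := by
    intro x y hx h0 hy i j
    rw [Matrix.mul_apply]
    refine sum_mem fun k _ => span_mul (hy k j) fun s hs => ?_
    have hw := Wd_entry hφtr hu hu' hp hodd hx h0 i k
    rcases hs with rfl | hs
    · exact Submodule.subset_span ⟨k, _, 1, hw, rfl, Or.inl rfl⟩
    · exact hDSmul hw hs
  have hA1 : ∀ {x : M₂ A}, x ∈ Algebra.adjoin ℂ {Amat a} →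
      ∀ i j, x i j ∈ Submodule.span ℂ (insert 1 (DA φ u p a i)) := by
    intro x hx i j
    have hm := Amat_entry_mem a hx i j
    have h1 : x i j = (x i j - φ (x i j) • (1 : A)) + φ (x i j) • 1 := by
      rw [sub_add_cancel]
    rw [h1]
    refine add_mem (Submodule.subset_span (Or.inr (Or.inl ⟨0, AltP.single _ _ ?_ ?_⟩)))
      (Submodule.smul_mem _ _ (Submodule.subset_span (Or.inl rfl)))
    · exact sub_mem hm (Subalgebra.smul_mem _ (one_mem _) _)
    · exact split_center hφ1 _
  induction hX with
  | single t x hx h0 =>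
    refine ⟨?_, ?_⟩
    · rintro rfl i j
      exact Submodule.subset_span
        ⟨j, x i j, 1, Wd_entry hφtr hu hu' hp hodd hx h0 i j, (mul_one _).symm, Or.inl rfl⟩
    · rintro rfl
      exact Or.inl ⟨hx, h0⟩
  | cons t t' e x y hx h0 hne hy ih =>
    refine ⟨?_, ?_⟩
    · rintro rfl
      have ht : t' = 0 := by omega
      refine hSA hx h0 ?_
      rcases ih.2 ht with ⟨h1, _⟩ | h
      · exact hA1 h1
      · exact fun i j => Submodule.span_mono (Set.subset_insert _ _) (h i j)
    · rintro rfl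
      have ht : t' = 1 := by omega
      exact Or.inr (hAA hx h0 (ih.1 ht))

theorem DS_phi
    {φ : A →ₗ[ℂ] ℂ}
    (hφtr : ∀ x y : A, φ (x * y) = φ (y * x))
    {u p a : A}
    (hu : star u * u = 1)
    (hHaar : ∀ n : ℕ, 1 ≤ n → φ (u ^ n) = 0 ∧ φ (star u ^ n) = 0)
    (hfree_up : AreFree (fun x => φ x) (![{u, star u}, {p}] : Fin 2 → Set A))
    (hfree_ac : AreFree (fun x => φ x)
      (![{a, star a}, {u * p, star (u * p)}] : Fin 2 → Set A))
    {i : Fin 2} {y : A} (hy : y ∈ DS φ u p a i) : φ y = 0 := by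
  obtain ⟨k', w, r, hw, rfl, hr⟩ := hy
  have h0 : φ w = 0 := hw.phi hφtr hu hHaar hfree_up
  rcases hr with rfl | ⟨e, he⟩
  · rw [mul_one, h0]
  · exact hfree_ac.altP (AltP.cons 1 0 e w r hw.1 h0 (by simp) he)

/-- Proposition 5.1: if `c = up` is R-diagonal (with `u` a Haar unitary, `p = p*` with
symmetric distribution, `{u,u*}` free from `{p}`), and `{a,a*}` is free from `{c,c*}`,
then the self-adjoint matrices `A = [[0,a],[a*,0]]` and `S = [[0,c],[c*,0]]` are free
in `(M₂(𝒜), φ₂)`. -/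
theorem hermitization_free_of_R_diagonal
    (φ : A →ₗ[ℂ] ℂ)
    (hφ1 : φ 1 = 1)
    (hφpos : ∀ x : A, 0 ≤ φ (star x * x))
    (hφtr : ∀ x y : A, φ (x * y) = φ (y * x))
    (u p a : A)
    (hu : star u * u = 1) (hu' : u * star u = 1)
    (hHaar : ∀ n : ℕ, 1 ≤ n → φ (u ^ n) = 0 ∧ φ (star u ^ n) = 0)
    (hp : star p = p)
    (hodd : ∀ k : ℕ, Odd k → φ (p ^ k) = 0)
    (hfree_up : AreFree (fun x => φ x) (![{u, star u}, {p}] : Fin 2 → Set A))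
    (hfree_ac : AreFree (fun x => φ x)
      (![{a, star a}, {u * p, star (u * p)}] : Fin 2 → Set A)) :
    AreFree (fun X => phi2 φ X)
      (![{Amat a}, {Amat (u * p)}] : Fin 2 → Set (M₂ A)) := by
  intro n t z h2 h3 h4
  obtain ⟨e, he⟩ := AltP.of_data n t z h2 h3 h4
  have key := main_ind φ hφ1 hφtr u p a hu hu' hHaar hp hodd hfree_up he
  generalize (List.ofFn z).prod = X at key
  have hS : ∀ {i : Fin 2} {y : A}, y ∈ DS φ u p a i → φ y = 0 :=
    fun hy => DS_phi hφtr hu hHaar hfree_up hfree_ac hy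
  have hA : ∀ {i : Fin 2} {y : A}, y ∈ DA φ u p a i → φ y = 0 := by
    rintro i y (⟨e, he⟩ | ⟨j, _, hj⟩)
    · exact hfree_ac.altP he
    · exact hS hj
  have hfin : phi2 φ X = 0 ∨ ∀ i, φ (X i i) = 0 := by
    have ht : t 0 = 0 ∨ t 0 = 1 := by
      generalize t 0 = i
      fin_cases i <;> simp
    rcases ht with ht | ht
    · rcases key.2 ht with ⟨_, h⟩ | h
      · exact Or.inl h
      · exact Or.inr fun i => span_phi (h i i) fun s hs => hA hs
    · exact Or.inr fun i => span_phi (key.1 ht i i) fun s hs => hS hs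
  rcases hfin with h | h
  · exact h
  · simp [phi2, h]
end
end

section
/- Let ℬ ⊆ 𝒜 be a unital *-subalgebra and d ≥ 1. Let s_ii ∈ 𝒜 (1 ≤ i ≤ d) be self-adjoint elements that are standard semicircular in moments, and for each pair i < j let x_ij, y_ij ∈ 𝒜 be self-adjoint, standard semicircular in moments; set s_ij := (x_ij + i·y_ij)/√2 for i < j and s_ji := s_ij* (so each s_ij with i < j is circular of variance 1). Assume the family of sets {s₁₁}, …, {s_dd}, {x_ij} (i < j), {y_ij} (i < j), ℬ is free with respect to φ. Then the self-adjoint matrix S := (s_ij)_{i,j=1}^{d} ∈ M_d(𝒜) is semicircular of variance d in (M_d(𝒜), φ_d), i.e. φ_d(S^{2m}) = d^m · Cₘ and φ_d(S^{2m+1}) = 0 for all m ≥ 0; and moreover {S} and M_d(ℬ) are free with respect to φ_d. (Proposition 5.3, 2°.) -/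
open scoped BigOperators
open ComplexOrder

noncomputable section

variable {A : Type*} [Ring A] [Algebra ℂ A] [StarRing A] [StarModule ℂ A]

/-- `s` is standard semicircular in moments with respect to the state `φ`:
`φ(s^{2m}) = Cₘ` and `φ(s^{2m+1}) = 0`. -/
def SemicircMoments {T : Type*} [Monoid T] (φ : T → ℂ) (s : T) : Prop :=
  ∀ m : ℕ, φ (s ^ (2 * m)) = catalan m ∧ φ (s ^ (2 * m + 1)) = 0

/-- `(x + i y)/√2`: the circular element built from `x` and `y`. -/
def circ (x y : A) : A := ((Real.sqrt 2 : ℂ))⁻¹ • (x + Complex.I • y)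

/-- The normalized trace `φ_d = tr ⊗ φ` on `M_d(𝒜)`. -/
def phid {d : ℕ} (φ : A →ₗ[ℂ] ℂ) (X : Matrix (Fin d) (Fin d) A) : ℂ :=
  (∑ i, φ (X i i)) / d

set_option linter.unusedSectionVars false
set_option linter.unusedVariables false

section Aux
open TensorProduct

variable {T : Type*} [Ring T] [Algebra ℂ T] {ι : Type*}

/-- The list of second components multiplied together. -/
def wprod (l : List (ι × T)) : T := (l.map Prod.snd).prod

/-- Alternating centred words. -/
structure Alt (f : T →ₗ[ℂ] ℂ) (V : ι → Subalgebra ℂ T) (l : List (ι × T)) : Prop where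
  chain : l.IsChain (fun p q => p.1 ≠ q.1)
  mem : ∀ p ∈ l, p.2 ∈ V p.1
  cent : ∀ p ∈ l, f p.2 = 0

/-- List form of freeness. -/
def FreeL (f : T →ₗ[ℂ] ℂ) (V : ι → Subalgebra ℂ T) : Prop :=
  ∀ l : List (ι × T), Alt f V l → l ≠ [] → f (wprod l) = 0

lemma wprod_nil : wprod ([] : List (ι × T)) = 1 := by simp [wprod]
lemma wprod_cons (p : ι × T) (l : List (ι × T)) : wprod (p :: l) = p.2 * wprod l := by
  simp [wprod]
lemma wprod_append (l l' : List (ι × T)) : wprod (l ++ l') = wprod l * wprod l' := by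
  simp [wprod]

lemma AreFree.toFreeL {f : T →ₗ[ℂ] ℂ} {X : ι → Set T} (h : AreFree (fun z => f z) X) :
    FreeL f (fun t => Algebra.adjoin ℂ (X t)) := by
  intro l hl hne
  obtain ⟨n, hn⟩ : ∃ n, l.length = n + 1 := Nat.exists_eq_succ_of_ne_zero (by simpa using hne)
  have key := h n (fun i => (l.get (i.cast hn.symm)).1) (fun i => (l.get (i.cast hn.symm)).2)
    (fun m => hl.mem _ (List.get_mem _ _)) (fun m => hl.cent _ (List.get_mem _ _))
    (fun m => by
      have := List.isChain_iff_getElem.1 hl.chain m.1 (by have := m.2; omega)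
      simpa using this)
  have e : List.ofFn (fun i : Fin (n+1) => (l.get (i.cast hn.symm)).2) = l.map Prod.snd := by
    apply List.ext_getElem
    · simp [hn]
    · intro i h1 h2
      simp [-List.ofFn_succ]
  simp only [e] at key
  exact key

lemma FreeL.toAreFree {f : T →ₗ[ℂ] ℂ} {X : ι → Set T}
    (h : FreeL f (fun t => Algebra.adjoin ℂ (X t))) : AreFree (fun z => f z) X := by
  intro n t z hz hc hch
  have := h (List.ofFn fun i => (t i, z i)) ⟨?_, ?_, ?_⟩ (by simp)
  · have e : (List.ofFn fun i => (t i, z i)).map Prod.snd = List.ofFn z := by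
      rw [List.map_ofFn]; rfl
    simp only [wprod, e] at this
    exact this
  · rw [List.isChain_iff_getElem]
    intro i hi
    simp at hi
    simp only [List.getElem_ofFn]
    exact hch ⟨i, by omega⟩
  · intro p hp
    rw [List.mem_ofFn] at hp
    obtain ⟨i, rfl⟩ := hp
    exact hz i
  · intro p hp
    rw [List.mem_ofFn] at hp
    obtain ⟨i, rfl⟩ := hp
    exact hc i

lemma Alt.tail {f : T →ₗ[ℂ] ℂ} {V : ι → Subalgebra ℂ T} {p : ι × T} {l : List (ι × T)}
    (h : Alt f V (p :: l)) : Alt f V l :=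
  ⟨h.chain.tail, fun q hq => h.mem q (by simp [hq]), fun q hq => h.cent q (by simp [hq])⟩

lemma Alt.left {f : T →ₗ[ℂ] ℂ} {V : ι → Subalgebra ℂ T} {l l' : List (ι × T)}
    (h : Alt f V (l ++ l')) : Alt f V l :=
  ⟨h.chain.left_of_append, fun q hq => h.mem q (by simp [hq]), fun q hq => h.cent q (by simp [hq])⟩

/-- replacing the head by another one of the same index -/
lemma Alt.repl {f : T →ₗ[ℂ] ℂ} {V : ι → Subalgebra ℂ T} {p : ι × T} {l : List (ι × T)}
    (h : Alt f V (p :: l)) (a : T) (ha : a ∈ V p.1) (ha0 : f a = 0) : Alt f V ((p.1, a) :: l) := by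
  refine ⟨?_, ?_, ?_⟩
  · have := h.chain
    rw [List.isChain_cons] at this ⊢
    exact this
  · intro q hq
    rcases List.mem_cons.1 hq with rfl | hq
    · exact ha
    · exact h.mem q (by simp [hq])
  · intro q hq
    rcases List.mem_cons.1 hq with rfl | hq
    · exact ha0
    · exact h.cent q (by simp [hq])

lemma cent_mem {f : T →ₗ[ℂ] ℂ} (V : Subalgebra ℂ T) {a : T} (ha : a ∈ V) :
    a - f a • (1 : T) ∈ V := V.sub_mem ha (V.smul_mem V.one_mem _)

lemma cent_zero {f : T →ₗ[ℂ] ℂ} (f1 : f 1 = 1) (a : T) : f (a - f a • (1 : T)) = 0 := by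
  simp [f1]

/-- span of alternating centred words -/
def AltSpan (f : T →ₗ[ℂ] ℂ) (V : ι → Subalgebra ℂ T) : Submodule ℂ T :=
  Submodule.span ℂ {x | ∃ l, Alt f V l ∧ x = wprod l}

lemma AltSpan.mem {f : T →ₗ[ℂ] ℂ} {V : ι → Subalgebra ℂ T} {l : List (ι × T)} (h : Alt f V l) :
    wprod l ∈ AltSpan f V := Submodule.subset_span ⟨l, h, rfl⟩

lemma AltSpan.letter_mul {f : T →ₗ[ℂ] ℂ} (f1 : f 1 = 1) {V : ι → Subalgebra ℂ T} {t : ι} {a : T}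
    (ha : a ∈ V t) {w : T} (hw : w ∈ AltSpan f V) : a * w ∈ AltSpan f V := by
  induction hw using Submodule.span_induction with
  | zero => simp
  | add x y _ _ hx hy => rw [mul_add]; exact Submodule.add_mem _ hx hy
  | smul c x _ hx => rw [mul_smul_comm]; exact Submodule.smul_mem _ _ hx
  | mem x hx =>
    obtain ⟨l, hl, rfl⟩ := hx
    have hgen : ∀ (t : ι) (a : T) (l : List (ι × T)), a ∈ V t → Alt f V l →
        (∀ q ∈ l.head?, t ≠ q.1) → a * wprod l ∈ AltSpan f V := by
      intro t a l ha hl hne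
      have e : a * wprod l = wprod ((t, a - f a • (1 : T)) :: l) + f a • wprod l := by
        rw [wprod_cons]; simp [sub_mul]
      rw [e]
      refine Submodule.add_mem _ (AltSpan.mem ⟨?_, ?_, ?_⟩) (Submodule.smul_mem _ _ (AltSpan.mem hl))
      · rw [List.isChain_cons]
        exact ⟨hne, hl.chain⟩
      · intro q hq
        rcases List.mem_cons.1 hq with rfl | hq
        · exact cent_mem _ ha
        · exact hl.mem q hq
      · intro q hq
        rcases List.mem_cons.1 hq with rfl | hq
        · exact cent_zero f1 a
        · exact hl.cent q hq
    cases l with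
    | nil => exact hgen t a [] ha hl (by simp)
    | cons p l =>
      by_cases htp : t = p.1
      · rw [wprod_cons, ← mul_assoc]
        refine hgen t (a * p.2) l ((V t).mul_mem ha (htp ▸ hl.mem p (by simp))) hl.tail ?_
        have := hl.chain
        rw [List.isChain_cons] at this
        rw [htp]
        exact this.1
      · exact hgen t a (p :: l) ha hl (by simpa using htp)

lemma AltSpan.of_list {f : T →ₗ[ℂ] ℂ} (f1 : f 1 = 1) {V : ι → Subalgebra ℂ T}
    (l : List (ι × T)) (hl : ∀ p ∈ l, p.2 ∈ V p.1) : wprod l ∈ AltSpan f V := by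
  induction l with
  | nil => exact AltSpan.mem ⟨by simp, by simp, by simp⟩
  | cons p l ih =>
    rw [wprod_cons]
    exact AltSpan.letter_mul f1 (hl p (by simp)) (ih fun q hq => hl q (by simp [hq]))

/-- a word times an arbitrary letter has zero trace -/
lemma FreeL.mul_head {f : T →ₗ[ℂ] ℂ} (f1 : f 1 = 1) {V : ι → Subalgebra ℂ T} (h : FreeL f V)
    {l : List (ι × T)} (hl : Alt f V l) (hne : l ≠ []) {t : ι} {a : T} (ha : a ∈ V t)
    (ht : ∀ q ∈ l.head?, t ≠ q.1) : f (a * wprod l) = 0 := by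
  have e : a * wprod l = wprod ((t, a - f a • (1 : T)) :: l) + f a • wprod l := by
    rw [wprod_cons]; simp [sub_mul]
  rw [e, map_add, map_smul, h l hl hne, h _ ⟨?_, ?_, ?_⟩ (by simp)]
  · simp
  · rw [List.isChain_cons]
    exact ⟨ht, hl.chain⟩
  · intro q hq
    rcases List.mem_cons.1 hq with rfl | hq
    · exact cent_mem _ ha
    · exact hl.mem q hq
  · intro q hq
    rcases List.mem_cons.1 hq with rfl | hq
    · exact cent_zero f1 a
    · exact hl.cent q hq

/-- same on the right -/
lemma FreeL.mul_last {f : T →ₗ[ℂ] ℂ} (f1 : f 1 = 1) {V : ι → Subalgebra ℂ T} (h : FreeL f V)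
    {l : List (ι × T)} (hne : l ≠ []) {p : ι × T} (hl : Alt f V (l ++ [p])) {a : T}
    (ha : a ∈ V p.1) : f (wprod l * a) = 0 := by
  have e : wprod l * a = wprod (l ++ [(p.1, a - f a • (1 : T))]) + f a • wprod l := by
    rw [wprod_append, wprod_cons, wprod_nil]; simp [mul_sub]
  rw [e, map_add, map_smul, h l hl.left hne, h _ ⟨?_, ?_, ?_⟩ (by simp)]
  · simp
  · have := hl.chain
    rw [List.isChain_append] at this ⊢
    refine ⟨this.1, by simp, ?_⟩
    simpa using this.2.2
  · intro q hq
    rcases List.mem_append.1 hq with hq | hq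
    · exact hl.mem q (by simp [hq])
    · rw [List.mem_singleton.1 hq]; exact cent_mem _ ha
  · intro q hq
    rcases List.mem_append.1 hq with hq | hq
    · exact hl.cent q (by simp [hq])
    · rw [List.mem_singleton.1 hq]; exact cent_zero f1 a

end Aux

section Aux2
open TensorProduct

variable {T : Type*} [Ring T] [Algebra ℂ T] {ι : Type*}

/-- `φ ⊗ φ` -/
def tau (f : T →ₗ[ℂ] ℂ) : T ⊗[ℂ] T →ₗ[ℂ] ℂ := LinearMap.mul' ℂ ℂ ∘ₗ TensorProduct.map f f

lemma tau_tmul (f : T →ₗ[ℂ] ℂ) (a b : T) : tau f (a ⊗ₜ b) = f a * f b := by simp [tau]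

variable (T) in
/-- 2×2 matrices encoding an element together with its free difference quotient. -/
abbrev EE := Matrix (Fin 2) (Fin 2) (T ⊗[ℂ] T)

/-- lift of `a` with derivative `c (1 ⊗ 1)` -/
def lft (a : T) (c : ℂ) : EE T := !![a ⊗ₜ 1, c • 1; 0, 1 ⊗ₜ a]

/-- Schwinger-Dyson defect -/
def Psi (f : T →ₗ[ℂ] ℂ) (h : T) : EE T →ₗ[ℂ] ℂ where
  toFun M := tau f ((h ⊗ₜ 1) * M 0 0) - tau f (M 0 1)
  map_add' M N := by simp [mul_add]; ring
  map_smul' c M := by simp [mul_sub]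

/-- base element -/
def bas (f : T →ₗ[ℂ] ℂ) : EE T →ₗ[ℂ] T where
  toFun M := TensorProduct.rid ℂ T (LinearMap.lTensor T f (M 0 0))
  map_add' M N := by simp
  map_smul' c M := by simp

/-- the elements of the correct shape -/
structure Good (f : T →ₗ[ℂ] ℂ) (V : Subalgebra ℂ T) (M : EE T) : Prop where
  mem : bas f M ∈ V
  e00 : M 0 0 = bas f M ⊗ₜ 1
  e11 : M 1 1 = 1 ⊗ₜ bas f M
  e10 : M 1 0 = 0
  e01 : M 0 1 ∈ Submodule.span ℂ {x : T ⊗[ℂ] T | ∃ a ∈ V, ∃ b ∈ V, x = a ⊗ₜ b}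

lemma bas_of {f : T →ₗ[ℂ] ℂ} (f1 : f 1 = 1) {M : EE T} {a : T} (h : M 0 0 = a ⊗ₜ 1) :
    bas f M = a := by simp [bas, h, f1]

lemma Good.mk' {f : T →ₗ[ℂ] ℂ} (f1 : f 1 = 1) {V : Subalgebra ℂ T} {M : EE T} {a : T}
    (ha : a ∈ V) (h0 : M 0 0 = a ⊗ₜ 1) (h1 : M 1 1 = 1 ⊗ₜ a) (h10 : M 1 0 = 0)
    (h01 : M 0 1 ∈ Submodule.span ℂ {x : T ⊗[ℂ] T | ∃ a ∈ V, ∃ b ∈ V, x = a ⊗ₜ b}) :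
    Good f V M := by
  have := bas_of f1 h0
  constructor <;> simp_all

lemma Good.lft {f : T →ₗ[ℂ] ℂ} (f1 : f 1 = 1) {V : Subalgebra ℂ T} {a : T} (ha : a ∈ V) (c : ℂ) :
    Good f V (lft a c) := by
  refine Good.mk' f1 ha (by simp [_root_.lft]) (by simp [_root_.lft]) (by simp [_root_.lft]) ?_
  simp only [_root_.lft, Matrix.of_apply, Matrix.cons_val', Matrix.cons_val_zero,
    Matrix.cons_val_one]
  exact Submodule.smul_mem _ _ (Submodule.subset_span ⟨1, V.one_mem, 1, V.one_mem, rfl⟩)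

lemma Good.one {f : T →ₗ[ℂ] ℂ} (f1 : f 1 = 1) {V : Subalgebra ℂ T} : Good f V 1 :=
  Good.mk' f1 V.one_mem (by simp [Algebra.TensorProduct.one_def])
    (by simp [Algebra.TensorProduct.one_def]) (by simp) (by simp)

lemma Good.smul {f : T →ₗ[ℂ] ℂ} (f1 : f 1 = 1) {V : Subalgebra ℂ T} {M : EE T} (c : ℂ)
    (h : Good f V M) : Good f V (c • M) := by
  refine Good.mk' f1 (V.smul_mem h.mem c) ?_ ?_ ?_ ?_
  · simp [h.e00, TensorProduct.smul_tmul']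
  · simp [h.e11]
  · simp [h.e10]
  · exact Submodule.smul_mem _ _ h.e01

lemma Good.add {f : T →ₗ[ℂ] ℂ} (f1 : f 1 = 1) {V : Subalgebra ℂ T} {M N : EE T}
    (h : Good f V M) (k : Good f V N) : Good f V (M + N) := by
  refine Good.mk' f1 (V.add_mem h.mem k.mem) ?_ ?_ ?_ ?_
  · simp [h.e00, k.e00, TensorProduct.add_tmul]
  · simp [h.e11, k.e11, TensorProduct.tmul_add]
  · simp [h.e10, k.e10]
  · exact Submodule.add_mem _ h.e01 k.e01

lemma tspan_mul_left {V : Subalgebra ℂ T} {a : T} (ha : a ∈ V) {m : T ⊗[ℂ] T}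
    (h : m ∈ Submodule.span ℂ {x : T ⊗[ℂ] T | ∃ a ∈ V, ∃ b ∈ V, x = a ⊗ₜ b}) :
    (a ⊗ₜ 1) * m ∈ Submodule.span ℂ {x : T ⊗[ℂ] T | ∃ a ∈ V, ∃ b ∈ V, x = a ⊗ₜ b} := by
  induction h using Submodule.span_induction with
  | zero => simp
  | add x y _ _ hx hy => rw [mul_add]; exact Submodule.add_mem _ hx hy
  | smul c x _ hx => rw [mul_smul_comm]; exact Submodule.smul_mem _ _ hx
  | mem x hx =>
    obtain ⟨p, hp, q, hq, rfl⟩ := hx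
    exact Submodule.subset_span ⟨a * p, V.mul_mem ha hp, q, hq, by simp⟩

lemma tspan_mul_right {V : Subalgebra ℂ T} {a : T} (ha : a ∈ V) {m : T ⊗[ℂ] T}
    (h : m ∈ Submodule.span ℂ {x : T ⊗[ℂ] T | ∃ a ∈ V, ∃ b ∈ V, x = a ⊗ₜ b}) :
    m * (1 ⊗ₜ a) ∈ Submodule.span ℂ {x : T ⊗[ℂ] T | ∃ a ∈ V, ∃ b ∈ V, x = a ⊗ₜ b} := by
  induction h using Submodule.span_induction with
  | zero => simp
  | add x y _ _ hx hy => rw [add_mul]; exact Submodule.add_mem _ hx hy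
  | smul c x _ hx => rw [smul_mul_assoc]; exact Submodule.smul_mem _ _ hx
  | mem x hx =>
    obtain ⟨p, hp, q, hq, rfl⟩ := hx
    exact Submodule.subset_span ⟨p, hp, q * a, V.mul_mem hq ha, by simp⟩

lemma Good.mul_bas {f : T →ₗ[ℂ] ℂ} (f1 : f 1 = 1) {V W : Subalgebra ℂ T} {M N : EE T}
    (h : Good f V M) (k : Good f W N) : bas f (M * N) = bas f M * bas f N := by
  apply bas_of f1
  simp [Matrix.mul_apply, Fin.sum_univ_two, h.e00, k.e00, k.e10]

lemma Good.mul {f : T →ₗ[ℂ] ℂ} (f1 : f 1 = 1) {V : Subalgebra ℂ T} {M N : EE T}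
    (h : Good f V M) (k : Good f V N) : Good f V (M * N) := by
  refine Good.mk' f1 (V.mul_mem h.mem k.mem) ?_ ?_ ?_ ?_
  · simp [Matrix.mul_apply, Fin.sum_univ_two, h.e00, k.e00, k.e10]
  · simp [Matrix.mul_apply, Fin.sum_univ_two, h.e11, k.e11, h.e10]
  · simp [Matrix.mul_apply, Fin.sum_univ_two, h.e10, k.e10]
  · rw [Matrix.mul_apply, Fin.sum_univ_two, h.e00, k.e11]
    exact Submodule.add_mem _ (tspan_mul_left h.mem k.e01) (tspan_mul_right k.mem h.e01)

lemma Good.weaken {f : T →ₗ[ℂ] ℂ} {V : Subalgebra ℂ T} {M : EE T}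
    (h : Good f V M) : Good f ⊤ M :=
  ⟨trivial, h.e00, h.e11, h.e10, Submodule.span_mono
    (by rintro x ⟨a, _, b, _, rfl⟩; exact ⟨a, trivial, b, trivial, rfl⟩) h.e01⟩

lemma Good.adjoin {f : T →ₗ[ℂ] ℂ} (f1 : f 1 = 1) {V : Subalgebra ℂ T} {X : Set (EE T)}
    (hX : ∀ M ∈ X, Good f V M) {M : EE T} (hM : M ∈ Algebra.adjoin ℂ X) : Good f V M := by
  induction hM using Algebra.adjoin_induction with
  | mem x hx => exact hX x hx
  | algebraMap c => rw [Algebra.algebraMap_eq_smul_one]; exact (Good.one f1).smul f1 c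
  | add x y _ _ hx hy => exact hx.add f1 hy
  | mul x y _ _ hx hy => exact hx.mul f1 hy

lemma lft_add (a b : T) (c e : ℂ) : lft (a + b) (c + e) = lft a c + lft b e := by
  ext i j; fin_cases i <;> fin_cases j <;>
    simp [lft, TensorProduct.add_tmul, TensorProduct.tmul_add, add_smul]

lemma lft_smul (r : ℂ) (a : T) (c : ℂ) : lft (r • a) (r * c) = r • lft a c := by
  ext i j; fin_cases i <;> fin_cases j <;>
    simp [lft, TensorProduct.smul_tmul', mul_smul]

/-- diagonal elements form a subalgebra: derivative zero -/
lemma adjoin_diag_01 {f : T →ₗ[ℂ] ℂ} (f1 : f 1 = 1) {V : Subalgebra ℂ T} {X : Set (EE T)}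
    (hX : ∀ M ∈ X, Good f V M ∧ M 0 1 = 0) {M : EE T} (hM : M ∈ Algebra.adjoin ℂ X) :
    M 0 1 = 0 := by
  induction hM using Algebra.adjoin_induction with
  | mem x hx => exact (hX x hx).2
  | algebraMap c => rw [Algebra.algebraMap_eq_smul_one]; simp
  | add x y _ _ hx hy => simp [hx, hy]
  | mul x y _ _ hx hy => rw [Matrix.mul_apply, Fin.sum_univ_two, hx, hy]; simp

/-- powers of the basic lift -/
lemma lft_pow (s : T) (c : ℂ) (n : ℕ) : (lft s c ^ n) 0 0 = (s ^ n) ⊗ₜ 1 ∧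
    (lft s c ^ n) 1 1 = 1 ⊗ₜ (s ^ n) ∧ (lft s c ^ n) 1 0 = 0 ∧
    (lft s c ^ (n + 1)) 0 1 = c • ∑ p ∈ Finset.HasAntidiagonal.antidiagonal n, (s ^ p.1) ⊗ₜ[ℂ] (s ^ p.2) := by
  have h3 : ∀ n, (lft s c ^ n) 0 0 = (s ^ n) ⊗ₜ 1 ∧
    (lft s c ^ n) 1 1 = 1 ⊗ₜ (s ^ n) ∧ (lft s c ^ n) 1 0 = 0 := by
    intro n
    induction n with
    | zero => simp [Algebra.TensorProduct.one_def]
    | succ n ih =>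
      obtain ⟨h1, h2, h3⟩ := ih
      rw [pow_succ']
      simp only [Matrix.mul_apply, Fin.sum_univ_two, h1, h2, h3]
      simp [lft, pow_succ']
  refine ⟨(h3 n).1, (h3 n).2.1, (h3 n).2.2, ?_⟩
  induction n with
  | zero => simp [lft, Algebra.TensorProduct.one_def]
  | succ n ih =>
    rw [pow_succ', Matrix.mul_apply, Fin.sum_univ_two, ih, (h3 (n+1)).2.1,
      Finset.Nat.antidiagonal_succ]
    simp [lft, Finset.mul_sum, pow_succ', add_comm]

/-- recursive Schwinger-Dyson sum -/
def Dsum {L : Type*} (f : T →ₗ[ℂ] ℂ) (val : L → T) (c : L → ℂ) : T → List L → T → ℂ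
  | _, [], _ => 0
  | u, a :: l, r => c a * (f u * f ((l.map val).prod * r)) + Dsum f val c (u * val a) l r

lemma lft_list {L : Type*} (val : L → T) (c : L → ℂ) (l : List L) :
    ((l.map fun a => lft (val a) (c a)).prod) 0 0 = (l.map val).prod ⊗ₜ 1 ∧
    ((l.map fun a => lft (val a) (c a)).prod) 1 1 = 1 ⊗ₜ (l.map val).prod ∧
    ((l.map fun a => lft (val a) (c a)).prod) 1 0 = 0 := by
  induction l with
  | nil => simp [Algebra.TensorProduct.one_def]
  | cons a l ih =>
    obtain ⟨h1, h2, h3⟩ := ih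
    simp only [List.map_cons, List.prod_cons, Matrix.mul_apply, Fin.sum_univ_two, h1, h2, h3]
    simp [lft]

lemma Dsum_eq {L : Type*} (f : T →ₗ[ℂ] ℂ) (val : L → T) (c : L → ℂ) (l : List L) (u r : T) :
    tau f ((u ⊗ₜ 1) * ((l.map fun a => lft (val a) (c a)).prod) 0 1 * (1 ⊗ₜ r)) =
      Dsum f val c u l r := by
  induction l generalizing u with
  | nil => simp [Dsum]
  | cons a l ih =>
    rw [Dsum, ← ih]
    simp only [List.map_cons, List.prod_cons, Matrix.mul_apply, Fin.sum_univ_two, lft_list]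
    simp [lft, mul_add, add_mul, tau_tmul, ← mul_assoc]
    ring

lemma Psi_list {L : Type*} (f : T →ₗ[ℂ] ℂ) (f1 : f 1 = 1) (h : T) (val : L → T) (c : L → ℂ)
    (l : List L) : Psi f h ((l.map fun a => lft (val a) (c a)).prod) =
      f (h * (l.map val).prod) - Dsum f val c 1 l 1 := by
  rw [← Dsum_eq]
  simp [Psi, lft_list, tau_tmul, f1, ← Algebra.TensorProduct.one_def]

/-- if the defect vanishes on lists, it vanishes on the generated algebra -/
lemma Psi_adjoin {L : Type*} (f : T →ₗ[ℂ] ℂ) (f1 : f 1 = 1) (h : T) (val : L → T) (c : L → ℂ)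
    (X : Set L)
    (hl : ∀ l : List L, (∀ a ∈ l, a ∈ X) → f (h * (l.map val).prod) = Dsum f val c 1 l 1)
    {M : EE T} (hM : M ∈ Algebra.adjoin ℂ ((fun a => lft (val a) (c a)) '' X)) :
    Psi f h M = 0 := by
  rw [← Subalgebra.mem_toSubmodule, Algebra.adjoin_eq_span] at hM
  induction hM using Submodule.span_induction with
  | zero => simp
  | add x y _ _ hx hy => rw [map_add, hx, hy, add_zero]
  | smul c x _ hx => rw [map_smul, hx, smul_zero]
  | mem x hx =>
    obtain ⟨l, hl', rfl⟩ := Submonoid.exists_list_of_mem_closure hx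
    obtain ⟨l', h1, rfl⟩ : ∃ l' : List L, (∀ a ∈ l', a ∈ X) ∧
        l = l'.map (fun a => lft (val a) (c a)) := by
      clear hx
      induction l with
      | nil => exact ⟨[], by simp, by simp⟩
      | cons y l ih =>
        obtain ⟨l', h1, h2⟩ := ih fun z hz => hl' z (by simp [hz])
        obtain ⟨a, ha, hay⟩ := hl' y (by simp)
        refine ⟨a :: l', ?_, by simp [← hay, h2]⟩
        intro b hb
        rcases List.mem_cons.1 hb with rfl | hb
        · exact ha
        · exact h1 b hb
    rw [Psi_list f f1, hl l' h1, sub_self]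

end Aux2

section Aux3
open TensorProduct

/-- the semicircle moments of variance `c` -/
def mu (c : ℂ) (n : ℕ) : ℂ := if Even n then c ^ (n / 2) * catalan (n / 2) else 0

lemma mu_even (c : ℂ) (m : ℕ) : mu c (2 * m) = c ^ m * catalan m := by simp [mu]

lemma mu_odd (c : ℂ) (m : ℕ) : mu c (2 * m + 1) = 0 := by simp [mu]

lemma mu_rec (c : ℂ) (n : ℕ) : mu c (n + 2) =
    c * ∑ p ∈ Finset.HasAntidiagonal.antidiagonal n, mu c p.1 * mu c p.2 := by
  rcases Nat.even_or_odd' n with ⟨m, rfl | rfl⟩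
  · have e : 2 * m + 2 = 2 * (m + 1) := by ring
    rw [e, mu_even, catalan_succ']
    push_cast
    have : ∑ p ∈ Finset.HasAntidiagonal.antidiagonal (2 * m), mu c p.1 * mu c p.2 =
        ∑ q ∈ Finset.HasAntidiagonal.antidiagonal m, mu c (2 * q.1) * mu c (2 * q.2) := by
      symm
      apply Finset.sum_of_injOn (fun q : ℕ × ℕ => (2 * q.1, 2 * q.2))
      · intro a _ b _ h
        simp at h
        ext <;> omega
      · intro q hq
        simp at hq ⊢
        omega
      · intro p hp hp'
        have hpp : p.1 + p.2 = 2 * m := by simpa using hp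
        rcases Nat.even_or_odd' p.1 with ⟨k, hk | hk⟩
        · exfalso
          apply hp'
          refine ⟨(k, m - k), ?_, ?_⟩
          · simp; omega
          · ext
            · simp; omega
            · simp; omega
        · rw [hk, mu_odd, zero_mul]
      · intro q _; rfl
    rw [this, pow_succ', mul_assoc, Finset.mul_sum]
    congr 1
    apply Finset.sum_congr rfl
    intro q hq
    rw [mu_even, mu_even]
    have : q.1 + q.2 = m := by simpa using hq
    rw [← this, pow_add]; ring
  · have e : 2 * m + 1 + 2 = 2 * (m + 1) + 1 := by ring
    rw [e, mu_odd]
    symm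
    apply mul_eq_zero_of_right
    apply Finset.sum_eq_zero
    intro p hp
    have hpp : p.1 + p.2 = 2 * m + 1 := by simpa using hp
    rcases Nat.even_or_odd' p.1 with ⟨k, hk | hk⟩
    · have : p.2 = 2 * (m - k) + 1 := by omega
      rw [this, mu_odd, mul_zero]
    · rw [hk, mu_odd, zero_mul]

variable {T : Type*} [Ring T] [Algebra ℂ T] {ι : Type*}

lemma Psi_pow_eq (f : T →ₗ[ℂ] ℂ) (f1 : f 1 = 1) (s : T) (c : ℂ) (n : ℕ) :
    Psi f s (lft s c ^ (n + 1)) = f (s ^ (n + 2)) -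
      c * ∑ p ∈ Finset.HasAntidiagonal.antidiagonal n, f (s ^ p.1) * f (s ^ p.2) := by
  simp only [Psi, LinearMap.coe_mk, AddHom.coe_mk, (lft_pow s c (n+1)).1,
    (lft_pow s c n).2.2.2, map_smul, map_sum, tau_tmul]
  simp [tau_tmul, f1, ← pow_succ']

lemma Psi_zero_of_semicirc (f : T →ₗ[ℂ] ℂ) (f1 : f 1 = 1) (s : T) (c : ℂ)
    (hs : ∀ n, f (s ^ n) = mu c n) {M : EE T} (hM : M ∈ Algebra.adjoin ℂ {lft s c}) :
    Psi f s M = 0 := by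
  rw [Algebra.adjoin_singleton_eq_range_aeval] at hM
  obtain ⟨p, rfl⟩ := hM
  change Psi f s (Polynomial.aeval (lft s c) p) = 0
  rw [Polynomial.aeval_eq_sum_range, map_sum]
  apply Finset.sum_eq_zero
  intro n _
  rw [map_smul]
  rcases n with _ | n
  · have : f s = 0 := by
      have := hs 1
      rw [show (1:ℕ) = 2 * 0 + 1 by rfl, mu_odd] at this
      simpa using this
    simp [Psi, tau_tmul, f1, this]
  · rw [Psi_pow_eq f f1, hs, mu_rec]
    simp only [hs, sub_self, smul_zero]

lemma tau_tspan_zero {V : Subalgebra ℂ T} (F : T ⊗[ℂ] T →ₗ[ℂ] ℂ)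
    (hF : ∀ p ∈ V, ∀ q ∈ V, F (p ⊗ₜ q) = 0) {m : T ⊗[ℂ] T}
    (h : m ∈ Submodule.span ℂ {x : T ⊗[ℂ] T | ∃ a ∈ V, ∃ b ∈ V, x = a ⊗ₜ b}) : F m = 0 := by
  induction h using Submodule.span_induction with
  | zero => simp
  | add x y _ _ hx hy => rw [map_add, hx, hy, add_zero]
  | smul c x _ hx => rw [map_smul, hx, smul_zero]
  | mem x hx =>
    obtain ⟨p, hp, q, hq, rfl⟩ := hx
    exact hF p hp q hq

/-- the linear functional `m ↦ τ((u⊗1) m (1⊗r))` -/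
def tauUR (f : T →ₗ[ℂ] ℂ) (u r : T) : T ⊗[ℂ] T →ₗ[ℂ] ℂ where
  toFun m := tau f ((u ⊗ₜ 1) * m * (1 ⊗ₜ r))
  map_add' a b := by simp [mul_add, add_mul]
  map_smul' c a := by simp

lemma tauUR_tmul (f : T →ₗ[ℂ] ℂ) (u r p q : T) :
    tauUR f u r (p ⊗ₜ q) = f (u * p) * f (q * r) := by
  simp [tauUR, tau_tmul]

/-- base word of a word of lifts -/
def basL (f : T →ₗ[ℂ] ℂ) (l : List (ι × EE T)) : List (ι × T) := l.map fun p => (p.1, bas f p.2)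

lemma good_wprod {f : T →ₗ[ℂ] ℂ} (f1 : f 1 = 1) (l : List (ι × EE T))
    (hl : ∀ p ∈ l, Good f ⊤ p.2) :
    Good f ⊤ (wprod l) ∧ bas f (wprod l) = wprod (basL f l) := by
  induction l with
  | nil =>
    refine ⟨by rw [wprod_nil]; exact Good.one f1, ?_⟩
    rw [wprod_nil, basL, List.map_nil, wprod_nil]
    exact bas_of f1 (by simp [Algebra.TensorProduct.one_def])
  | cons p l ih =>
    obtain ⟨h1, h2⟩ := ih fun q hq => hl q (by simp [hq])
    have h3 := hl p (by simp)
    rw [wprod_cons]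
    refine ⟨h3.mul f1 h1, ?_⟩
    rw [h3.mul_bas f1 h1, h2]
    simp [basL, wprod_cons]

lemma Good.f_bas {f : T →ₗ[ℂ] ℂ} (f1 : f 1 = 1) {V : Subalgebra ℂ T} {M : EE T} (h : Good f V M) :
    tau f (M 0 0) = f (bas f M) := by
  rw [h.e00, tau_tmul, f1, mul_one]

/-- the state on lifts -/
def fE (f : T →ₗ[ℂ] ℂ) : EE T →ₗ[ℂ] ℂ := f ∘ₗ bas f

lemma fE_one {f : T →ₗ[ℂ] ℂ} (f1 : f 1 = 1) : fE f 1 = 1 := by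
  have : bas f (1 : EE T) = 1 := bas_of f1 (by simp [Algebra.TensorProduct.one_def])
  simp [fE, this, f1]

lemma alt_basL {f : T →ₗ[ℂ] ℂ} {V : ι → Subalgebra ℂ T} {W : ι → Subalgebra ℂ (EE T)}
    (hW : ∀ t, ∀ M ∈ W t, Good f (V t) M) {l : List (ι × EE T)} (hl : Alt (fE f) W l) :
    Alt f V (basL f l) := by
  refine ⟨?_, ?_, ?_⟩
  · rw [basL, List.isChain_map]
    exact hl.chain
  · intro q hq
    obtain ⟨p, hp, rfl⟩ := List.mem_map.1 hq
    exact (hW _ _ (hl.mem p hp)).mem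
  · intro q hq
    obtain ⟨p, hp, rfl⟩ := List.mem_map.1 hq
    exact hl.cent p hp

lemma basL_head {f : T →ₗ[ℂ] ℂ} {l : List (ι × EE T)} {t : ι}
    (h : ∀ q ∈ l.head?, t ≠ q.1) : ∀ q ∈ (basL f l).head?, t ≠ q.1 := by
  cases l with
  | nil => simp [basL]
  | cons p l => simpa [basL] using h

/-- Claim on initial segments. -/
lemma claimC {f : T →ₗ[ℂ] ℂ} (f1 : f 1 = 1) {V : ι → Subalgebra ℂ T} (hfree : FreeL f V)
    {W : ι → Subalgebra ℂ (EE T)} (hW : ∀ t, ∀ M ∈ W t, Good f (V t) M)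
    (l : List (ι × EE T)) (u : List (ι × T)) (hu : u ≠ []) (hl : ∀ p ∈ l, p.2 ∈ W p.1)
    (h : Alt f V (u ++ basL f l)) :
    tau f ((wprod u ⊗ₜ 1) * (wprod l) 0 1) = 0 := by
  induction l generalizing u with
  | nil => simp [wprod_nil]
  | cons z l ih =>
    have hz := hW _ _ (hl z (by simp))
    have hgl := good_wprod f1 l fun p hp => (hW _ _ (hl p (by simp [hp]))).weaken
    have e1 := ih (u ++ [(z.1, bas f z.2)]) (by simp) (fun p hp => hl p (by simp [hp]))
      (by simpa [basL] using h)
    rw [wprod_cons, Matrix.mul_apply, Fin.sum_univ_two, hz.e00, hgl.1.e11, mul_add, map_add]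
    rw [wprod_append, wprod_cons, wprod_nil, mul_one] at e1
    rw [← mul_assoc, Algebra.TensorProduct.tmul_mul_tmul, mul_one, e1, zero_add, ← mul_assoc]
    refine tau_tspan_zero (tauUR f (wprod u) (bas f (wprod l))) ?_ hz.e01
    intro p hp q hq
    rw [tauUR_tmul]
    have h' : Alt f V (u ++ [(z.1, bas f z.2)]) := by
      have : Alt f V ((u ++ [(z.1, bas f z.2)]) ++ basL f l) := by simpa [basL] using h
      exact this.left
    rw [hfree.mul_last f1 hu h' hp, zero_mul]

/-- Step 1: free semicircular elements satisfy the Schwinger-Dyson equation. -/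
lemma step1 [DecidableEq ι] {f : T →ₗ[ℂ] ℂ} (f1 : f 1 = 1) {X : ι → Set T}
    (hfree : AreFree (fun z => f z) X) (g : ι) (s : T) (hg : X g = {s})
    (hs : ∀ n, f (s ^ n) = mu 1 n)
    (l : List (ι × T)) (hl : ∀ p ∈ l, p.2 ∈ X p.1) :
    Psi f s ((l.map fun p => lft p.2 (if p.1 = g then 1 else 0)).prod) = 0 := by
  have hF := hfree.toFreeL
  set V : ι → Subalgebra ℂ T := fun t => Algebra.adjoin ℂ (X t) with hV
  let W : ι → Subalgebra ℂ (EE T) := fun t =>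
    Algebra.adjoin ℂ ((fun a => lft a (if t = g then 1 else 0)) '' X t)
  have hW : ∀ t, ∀ M ∈ W t, Good f (V t) M := by
    intro t M hM
    refine Good.adjoin f1 ?_ hM
    rintro _ ⟨a, ha, rfl⟩
    exact Good.lft f1 (Algebra.subset_adjoin ha) _
  have hW0 : ∀ t, t ≠ g → ∀ M ∈ W t, M 0 1 = 0 := by
    intro t ht M hM
    refine adjoin_diag_01 f1 (V := V t) ?_ hM
    rintro _ ⟨a, ha, rfl⟩
    exact ⟨Good.lft f1 (Algebra.subset_adjoin ha) _, by simp [lft, ht]⟩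
  have hWg : ∀ M ∈ W g, Psi f s M = 0 := by
    intro M hM
    refine Psi_zero_of_semicirc f f1 s 1 hs ?_
    simpa [W, hg] using hM
  have hsV : s ∈ V g := Algebra.subset_adjoin (by simp [hg])
  have hs0 : f s = 0 := by
    have := hs 1
    rw [show (1:ℕ) = 2 * 0 + 1 by rfl, mu_odd] at this
    simpa using this
  -- reduction
  have hmem : (l.map fun p => lft p.2 (if p.1 = g then 1 else 0)).prod ∈ AltSpan (fE f) W := by
    have := AltSpan.of_list (fE_one f1) (V := W)
      (l.map fun p => (p.1, lft p.2 (if p.1 = g then 1 else 0))) (by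
        intro q hq
        obtain ⟨p, hp, rfl⟩ := List.mem_map.1 hq
        exact Algebra.subset_adjoin ⟨p.2, hl p hp, rfl⟩)
    simpa [wprod, Function.comp_def] using this
  have hle : AltSpan (fE f) W ≤ LinearMap.ker (Psi f s) := by
    refine Submodule.span_le.2 ?_
    rintro _ ⟨l, hl, rfl⟩
    change Psi f s (wprod l) = 0
    cases l with
    | nil =>
      rw [wprod_nil]; simp [Psi, tau_tmul, f1, hs0]
    | cons z l =>
      have hz := hW _ _ (hl.mem z (by simp))
      have hgl := good_wprod f1 l fun p hp => (hW _ _ (hl.mem p (by simp [hp]))).weaken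
      have hgz := good_wprod f1 (z :: l) fun p hp => (hW _ _ (hl.mem p hp)).weaken
      have hA := alt_basL hW hl
      have hAl := alt_basL hW hl.tail
      have hch : ∀ q ∈ l.head?, z.1 ≠ q.1 := by
        have := hl.chain
        rw [List.isChain_cons] at this
        exact this.1
      have hC := claimC f1 hF hW l [(z.1, bas f z.2)] (by simp)
        (fun p hp => hl.mem p (by simp [hp])) (by simpa [basL] using hA)
      rw [wprod_cons, wprod_nil, mul_one] at hC
      have e : Psi f s (wprod (z :: l)) = f (s * (bas f z.2 * wprod (basL f l))) -
          tauUR f 1 (wprod (basL f l)) (z.2 0 1) := by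
        simp only [Psi, LinearMap.coe_mk, AddHom.coe_mk]
        rw [hgz.1.e00, Algebra.TensorProduct.tmul_mul_tmul, tau_tmul, mul_one, f1, mul_one, hgz.2,
          wprod_cons, Matrix.mul_apply, Fin.sum_univ_two, hz.e00, hgl.1.e11, map_add, hC, zero_add,
          hgl.2]
        simp [basL, wprod_cons, tauUR, ← Algebra.TensorProduct.one_def]
      by_cases hzg : z.1 = g
      · by_cases hle : l = []
        · subst hle
          have := hWg z.2 (hzg ▸ hl.mem z (by simp))
          rw [wprod_cons, wprod_nil, mul_one, this]
        · have hne : basL f l ≠ [] := by simpa [basL] using hle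
          rw [e, ← mul_assoc, hF.mul_head f1 hAl hne (t := g)
            ((V g).mul_mem hsV (hzg ▸ hz.mem)) (basL_head (hzg ▸ hch)), zero_sub, neg_eq_zero]
          refine tau_tspan_zero (V := V z.1) _ ?_ hz.e01
          intro p hp q hq
          rw [tauUR_tmul, hF.mul_head f1 hAl hne (t := z.1) hq (basL_head hch), mul_zero]
      · rw [e, hW0 _ hzg _ (hl.mem z (by simp)), map_zero, sub_zero]
        have := hF.mul_head f1 hA (by simp [basL]) (t := g) hsV (by
          simp [basL]; exact fun h => hzg h.symm)
        simpa [basL, wprod_cons] using this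
  exact hle hmem

end Aux3

section Aux4
open TensorProduct

variable {T : Type*} [Ring T] [Algebra ℂ T] {ι : Type*}

/-- freeness for words of length less than `n` -/
def FreeN (n : ℕ) (f : T →ₗ[ℂ] ℂ) (V : ι → Subalgebra ℂ T) : Prop :=
  ∀ l : List (ι × T), Alt f V l → l ≠ [] → l.length < n → f (wprod l) = 0

lemma FreeN.mul_head {n : ℕ} {f : T →ₗ[ℂ] ℂ} (f1 : f 1 = 1) {V : ι → Subalgebra ℂ T}
    (h : FreeN n f V)
    {l : List (ι × T)} (hl : Alt f V l) (hne : l ≠ []) (hn : l.length + 1 < n)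
    {t : ι} {a : T} (ha : a ∈ V t)
    (ht : ∀ q ∈ l.head?, t ≠ q.1) : f (a * wprod l) = 0 := by
  have e : a * wprod l = wprod ((t, a - f a • (1 : T)) :: l) + f a • wprod l := by
    rw [wprod_cons]; simp [sub_mul]
  rw [e, map_add, map_smul, h l hl hne (by omega), h _ ⟨?_, ?_, ?_⟩ (by simp) (by simpa using hn)]
  · simp
  · rw [List.isChain_cons]
    exact ⟨ht, hl.chain⟩
  · intro q hq
    rcases List.mem_cons.1 hq with rfl | hq
    · exact cent_mem _ ha
    · exact hl.mem q hq
  · intro q hq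
    rcases List.mem_cons.1 hq with rfl | hq
    · exact cent_zero f1 a
    · exact hl.cent q hq

/-- algebras of lifts -/
def WW (V : Fin 2 → Subalgebra ℂ T) (S : T) (κ : ℂ) (t : Fin 2) : Subalgebra ℂ (EE T) :=
  if t = 0 then Algebra.adjoin ℂ {lft S κ} else Algebra.adjoin ℂ ((fun b => lft b 0) '' (V 1 : Set T))

lemma WW_good {f : T →ₗ[ℂ] ℂ} (f1 : f 1 = 1) {V : Fin 2 → Subalgebra ℂ T} {S : T} (κ : ℂ)
    (hV : V 0 = Algebra.adjoin ℂ {S}) (t : Fin 2) (M : EE T) (hM : M ∈ WW V S κ t) :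
    Good f (V t) M := by
  fin_cases t
  · simp only [WW, Fin.zero_eta, if_true] at hM
    refine Good.adjoin f1 ?_ hM
    rintro _ rfl
    refine Good.lft f1 ?_ _
    change S ∈ V 0
    rw [hV]
    exact Algebra.subset_adjoin rfl
  · simp only [WW, Fin.mk_one, one_ne_zero, if_false] at hM
    refine Good.adjoin f1 ?_ hM
    rintro _ ⟨b, hb, rfl⟩
    exact Good.lft f1 hb _

lemma WW_diag {f : T →ₗ[ℂ] ℂ} (f1 : f 1 = 1) {V : Fin 2 → Subalgebra ℂ T} {S : T} (κ : ℂ)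
    (M : EE T) (hM : M ∈ WW V S κ 1) : M 0 1 = 0 := by
  simp only [WW, one_ne_zero, if_false] at hM
  refine adjoin_diag_01 f1 (V := V 1) ?_ hM
  rintro _ ⟨b, hb, rfl⟩
  exact ⟨Good.lft f1 hb _, by simp [lft]⟩

lemma WW_lift {f : T →ₗ[ℂ] ℂ} (f1 : f 1 = 1) {V : Fin 2 → Subalgebra ℂ T} {S : T} (κ : ℂ)
    (hV : V 0 = Algebra.adjoin ℂ {S}) (t : Fin 2) (a : T) (ha : a ∈ V t) :
    ∃ M ∈ WW V S κ t, bas f M = a := by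
  fin_cases t
  · change a ∈ V 0 at ha
    change ∃ M ∈ WW V S κ 0, bas f M = a
    rw [hV] at ha
    induction ha using Algebra.adjoin_induction with
    | mem x hx =>
      rw [Set.mem_singleton_iff] at hx
      subst hx
      refine ⟨lft x κ, ?_, bas_of f1 (by simp [lft])⟩
      simp only [WW, if_true]
      exact Algebra.subset_adjoin rfl
    | algebraMap c =>
      refine ⟨c • 1, Subalgebra.smul_mem _ (Subalgebra.one_mem _) _, ?_⟩
      rw [map_smul, bas_of f1 (a := 1) (by simp [Algebra.TensorProduct.one_def]),
        Algebra.algebraMap_eq_smul_one]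
    | add x y _ _ hx hy =>
      obtain ⟨M, hM, rfl⟩ := hx
      obtain ⟨N, hN, rfl⟩ := hy
      exact ⟨M + N, Subalgebra.add_mem _ hM hN, by simp⟩
    | mul x y _ _ hx hy =>
      obtain ⟨M, hM, rfl⟩ := hx
      obtain ⟨N, hN, rfl⟩ := hy
      exact ⟨M * N, Subalgebra.mul_mem _ hM hN,
        (WW_good f1 κ hV 0 M hM).mul_bas f1 (WW_good f1 κ hV 0 N hN)⟩
  · refine ⟨lft a 0, ?_, bas_of f1 (by simp [lft])⟩
    simp only [WW, Fin.mk_one, one_ne_zero, if_false]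
    exact Algebra.subset_adjoin ⟨a, ha, rfl⟩

lemma WW_lift_list {f : T →ₗ[ℂ] ℂ} (f1 : f 1 = 1) {V : Fin 2 → Subalgebra ℂ T} {S : T} (κ : ℂ)
    (hV : V 0 = Algebra.adjoin ℂ {S}) (l : List (Fin 2 × T)) (hl : ∀ p ∈ l, p.2 ∈ V p.1) :
    ∃ L : List (Fin 2 × EE T), (∀ p ∈ L, p.2 ∈ WW V S κ p.1) ∧ basL f L = l := by
  induction l with
  | nil => exact ⟨[], by simp, by simp [basL]⟩
  | cons p l ih =>
    obtain ⟨L, h1, h2⟩ := ih fun q hq => hl q (by simp [hq])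
    obtain ⟨M, hM, hM'⟩ := WW_lift f1 κ hV p.1 p.2 (hl p (by simp))
    refine ⟨(p.1, M) :: L, ?_, by simp [basL, hM'] ; simpa [basL] using h2⟩
    intro q hq
    rcases List.mem_cons.1 hq with rfl | hq
    · exact hM
    · exact h1 q hq

lemma claimC' {n : ℕ} {f : T →ₗ[ℂ] ℂ} (f1 : f 1 = 1) {V : Fin 2 → Subalgebra ℂ T} {S : T} (κ : ℂ)
    (hV : V 0 = Algebra.adjoin ℂ {S}) (hN : FreeN n f V)
    (L : List (Fin 2 × EE T)) (hL : ∀ p ∈ L, p.2 ∈ WW V S κ p.1) (hA : Alt f V (basL f L))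
    (hlen : L.length < n) (hlast : ∀ q ∈ L.getLast?, q.1 = 1) (u : T) :
    tau f ((u ⊗ₜ 1) * (wprod L) 0 1) = 0 := by
  induction L generalizing u with
  | nil => simp [wprod_nil]
  | cons z L ih =>
    have hz := WW_good f1 κ hV _ _ (hL z (by simp))
    have hgl := good_wprod f1 L fun p hp => (WW_good f1 κ hV _ _ (hL p (by simp [hp]))).weaken
    have hA' : Alt f V (basL f L) := by
      have : Alt f V ((z.1, bas f z.2) :: basL f L) := by simpa [basL] using hA
      exact this.tail
    have hlast' : ∀ q ∈ L.getLast?, q.1 = 1 := by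
      intro q hq
      apply hlast
      rw [List.getLast?_cons]
      simp at hq ⊢
      simp [hq]
    have e1 := ih (fun p hp => hL p (by simp [hp])) hA' (by simp at hlen; omega) hlast'
      (u * bas f z.2)
    rw [wprod_cons, Matrix.mul_apply, Fin.sum_univ_two, hz.e00, hgl.1.e11, mul_add, map_add]
    rw [← mul_assoc, Algebra.TensorProduct.tmul_mul_tmul, mul_one, e1, zero_add, ← mul_assoc]
    by_cases h1 : z.1 = 1
    · have : z.2 0 1 = 0 := WW_diag f1 κ _ (h1 ▸ hL z (by simp))
      rw [this]; simp
    · have hLne : L ≠ [] := by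
        rintro rfl
        exact h1 (hlast z (by simp))
      refine tau_tspan_zero (tauUR f u (bas f (wprod L))) ?_ hz.e01
      intro p hp q hq
      rw [tauUR_tmul, hgl.2, hN.mul_head f1 hA' (by simpa [basL] using hLne)
        (by simpa [basL] using hlen) hq ?_, mul_zero]
      have := hA.chain
      rw [basL, List.map_cons, List.isChain_cons] at this
      exact this.1

lemma even_case {n : ℕ} {f : T →ₗ[ℂ] ℂ} (f1 : f 1 = 1) {V : Fin 2 → Subalgebra ℂ T} {S : T}
    (κ : ℂ) (hV : V 0 = Algebra.adjoin ℂ {S}) (hN : FreeN n f V)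
    (hPsi : ∀ M ∈ Algebra.adjoin ℂ ({lft S κ} ∪ (fun b => lft b 0) '' (V 1 : Set T)),
      Psi f S M = 0)
    (l : List (Fin 2 × T)) (hA : Alt f V l) (hne : l ≠ [])
    (hlen : l.length < n) (hlast : ∀ q ∈ l.getLast?, q.1 = 1) (a : T) (ha : a ∈ V 0) :
    f (a * wprod l) = 0 := by
  obtain ⟨L, hL, rfl⟩ := WW_lift_list f1 κ hV l hA.mem
  have hgl := good_wprod f1 L fun p hp => (WW_good f1 κ hV _ _ (hL p hp)).weaken
  have hC := claimC' f1 κ hV hN L hL hA (by simpa [basL] using hlen) (by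
    intro q hq
    refine hlast (q.1, bas f q.2) ?_
    rw [basL, List.getLast?_map]
    rw [Option.mem_def] at hq ⊢
    rw [hq]
    rfl)
  have hmem : wprod L ∈ Algebra.adjoin ℂ ({lft S κ} ∪ (fun b => lft b 0) '' (V 1 : Set T)) := by
    refine Subalgebra.list_prod_mem _ ?_
    intro M hM
    obtain ⟨p, hp, rfl⟩ := List.mem_map.1 hM
    have := hL p hp
    unfold WW at this
    split_ifs at this
    · exact Algebra.adjoin_mono Set.subset_union_left this
    · exact Algebra.adjoin_mono Set.subset_union_right this
  have hpow : ∀ m, f (S ^ m * wprod (basL f L)) = 0 := by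
    intro m
    induction m using Nat.strong_induction_on with
    | _ m ih =>
      rcases m with _ | m
      · rw [pow_zero, one_mul]; exact hN _ hA hne hlen
      · have h := hPsi (lft S κ ^ m * wprod L) (Subalgebra.mul_mem _ (Subalgebra.pow_mem _
          (Algebra.subset_adjoin (Set.mem_union_left _ (Set.mem_singleton _))) _) hmem)
        simp only [Psi, LinearMap.coe_mk, AddHom.coe_mk, Matrix.mul_apply, Fin.sum_univ_two,
          (lft_pow S κ m).1, hgl.1.e00, hgl.1.e10, hgl.1.e11, mul_zero, add_zero, map_add, hC,
          zero_add, Algebra.TensorProduct.tmul_mul_tmul, tau_tmul, mul_one, f1, ← mul_assoc,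
          ← pow_succ', hgl.2] at h
        rw [sub_eq_zero] at h
        rw [h]
        rcases m with _ | k
        · simp
        · rw [(lft_pow S κ k).2.2.2, smul_mul_assoc, Finset.sum_mul, map_smul, map_sum]
          rw [Finset.sum_eq_zero, smul_zero]
          intro p hp
          have hpp : p.1 + p.2 = k := by simpa using hp
          rw [Algebra.TensorProduct.tmul_mul_tmul, tau_tmul, ih p.2 (by omega), mul_zero]
  rw [hV, Algebra.adjoin_singleton_eq_range_aeval] at ha
  obtain ⟨p, rfl⟩ := ha
  change f (Polynomial.aeval S p * _) = 0
  rw [Polynomial.aeval_eq_sum_range, Finset.sum_mul, map_sum]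
  apply Finset.sum_eq_zero
  intro m _
  rw [smul_mul_assoc, map_smul, hpow, smul_zero]

lemma step3_free {f : T →ₗ[ℂ] ℂ} (f1 : f 1 = 1) (ftr : ∀ x y, f (x * y) = f (y * x))
    {V : Fin 2 → Subalgebra ℂ T} {S : T}
    (κ : ℂ) (hV : V 0 = Algebra.adjoin ℂ {S})
    (hPsi : ∀ M ∈ Algebra.adjoin ℂ ({lft S κ} ∪ (fun b => lft b 0) '' (V 1 : Set T)),
      Psi f S M = 0) : FreeL f V := by
  have main : ∀ n, FreeN n f V := by
    intro n
    induction n with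
    | zero => intro l _ _ h; omega
    | succ n hN =>
      intro l hA hne hlen
      rcases Nat.lt_or_ge l.length n with h | h
      · exact hN l hA hne h
      cases l with
      | nil => exact absurd rfl hne
      | cons p l =>
        rcases List.eq_nil_or_concat l with rfl | ⟨mid, q, rfl⟩
        · rw [wprod_cons, wprod_nil, mul_one]; exact hA.cent p (by simp)
        · rw [List.concat_eq_append] at *
          have hlen' : mid.length + 2 = n := by simp at h hlen; omega
          have hpm : Alt f V (p :: mid) := by
            have : Alt f V ((p :: mid) ++ [q]) := by simpa using hA
            exact this.left
          have hp : p.2 ∈ V p.1 := hA.mem p (by simp)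
          have hq : q.2 ∈ V q.1 := hA.mem q (by simp)
          have e2 : f (wprod (p :: (mid ++ [q]))) = f (q.2 * wprod (p :: mid)) := by
            rw [wprod_cons, wprod_append, wprod_cons, wprod_nil, mul_one, ← mul_assoc, ftr, wprod_cons]
          by_cases hpq : p.1 = q.1
          · have hmid : mid ≠ [] := by
              rintro rfl
              have := hA.chain
              simp at this
              exact this hpq
            rw [e2, wprod_cons, ← mul_assoc]
            refine hN.mul_head f1 hpm.tail hmid (by omega) ((V p.1).mul_mem (hpq ▸ hq) hp) ?_
            have := hpm.chain
            rw [List.isChain_cons] at this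
            exact this.1
          · by_cases hp0 : p.1 = 0
            · rw [wprod_cons]
              have hq1 : q.1 = 1 := by
                rw [hp0] at hpq
                have := q.1.2
                ext
                have h2 : (q.1 : ℕ) ≠ 0 := fun h => hpq (by ext; simp [h])
                simp; omega
              exact even_case f1 κ hV hN hPsi _ hA.tail (by simp) (by simp; omega)
                (by simp [hq1]) _ (hp0 ▸ hp)
            · have hq0 : q.1 = 0 := by
                have := p.1.2
                have := q.1.2
                have h2 : (p.1 : ℕ) ≠ 0 := fun h => hp0 (by ext; simp [h])
                have h3 : (p.1 : ℕ) ≠ q.1 := fun h => hpq (by ext; simp [h])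
                ext; simp; omega
              rw [e2]
              refine even_case f1 κ hV hN hPsi _ hpm (by simp) (by simp; omega) ?_ _ (hq0 ▸ hq)
              intro r hr
              have hc : ((p :: mid) ++ [q]).IsChain (fun p q => p.1 ≠ q.1) := by
                simpa using hA.chain
              rw [List.isChain_append] at hc
              have h4 := hc.2.2 r hr q (by simp)
              rw [hq0] at h4
              have := r.1.2
              have h2 : (r.1 : ℕ) ≠ 0 := fun h => h4 (by ext; simp [h])
              ext; simp; omega
  exact fun l hA hne => main (l.length + 1) l hA hne (by omega)

lemma step3_mom {f : T →ₗ[ℂ] ℂ} (f1 : f 1 = 1) {S : T} (κ : ℂ)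
    (hPsi : ∀ M ∈ Algebra.adjoin ℂ ({lft S κ} : Set (EE T)), Psi f S M = 0) (n : ℕ) :
    f (S ^ n) = mu κ n := by
  induction n using Nat.strong_induction_on with
  | _ n ih =>
    rcases n with _ | _ | n
    · simp [mu, f1]
    · have := hPsi 1 (Subalgebra.one_mem _)
      simp [Psi, tau_tmul, f1] at this
      simp [mu, this]
    · have := hPsi _ (Subalgebra.pow_mem _ (Algebra.subset_adjoin (Set.mem_singleton _)) (n + 1))
      rw [Psi_pow_eq f f1, sub_eq_zero] at this
      rw [this, mu_rec]
      congr 1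
      apply Finset.sum_congr rfl
      intro p hp
      have hpp : p.1 + p.2 = n := by simpa using hp
      rw [ih _ (by omega), ih _ (by omega)]

end Aux4

section Aux5
open TensorProduct

variable {T : Type*} [Ring T] [Algebra ℂ T] {ι : Type*}

/-- Schwinger-Dyson equation for lists -/
def SD (f : T →ₗ[ℂ] ℂ) (h : T) (c : T × (ι → ℂ) → ℂ) (X : Set (T × (ι → ℂ))) : Prop :=
  ∀ l : List (T × (ι → ℂ)), (∀ a ∈ l, a ∈ X) →
    f (h * (l.map Prod.fst).prod) = Dsum f Prod.fst c 1 l 1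

section D
variable {L : Type*} (f : T →ₗ[ℂ] ℂ) (val : L → T) (c c' : L → ℂ)

lemma Dsum_add_c (u : T) (l : List L) (r : T) :
    Dsum f val (fun a => c a + c' a) u l r = Dsum f val c u l r + Dsum f val c' u l r := by
  induction l generalizing u with
  | nil => simp [Dsum]
  | cons a l ih => simp only [Dsum, ih]; ring

lemma Dsum_smul_c (k : ℂ) (u : T) (l : List L) (r : T) :
    Dsum f val (fun a => k * c a) u l r = k * Dsum f val c u l r := by
  induction l generalizing u with
  | nil => simp [Dsum]
  | cons a l ih => simp only [Dsum, ih]; ring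

lemma Dsum_zero_r (u : T) (l : List L) : Dsum f val c u l 0 = 0 := by
  induction l generalizing u with
  | nil => simp [Dsum]
  | cons a l ih => simp [Dsum, ih]

lemma Dsum_add_r (u : T) (l : List L) (r r' : T) :
    Dsum f val c u l (r + r') = Dsum f val c u l r + Dsum f val c u l r' := by
  induction l generalizing u with
  | nil => simp [Dsum]
  | cons a l ih => simp only [Dsum, ih, mul_add, map_add]; ring

lemma Dsum_sum_r {κ : Type*} (s : Finset κ) (u : T) (l : List L) (r : κ → T) :
    Dsum f val c u l (∑ k ∈ s, r k) = ∑ k ∈ s, Dsum f val c u l (r k) := by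
  classical
  induction s using Finset.induction_on with
  | empty => simp [Dsum_zero_r]
  | insert a s ha ih => rw [Finset.sum_insert ha, Finset.sum_insert ha, Dsum_add_r, ih]

lemma Dsum_concat (u : T) (l : List L) (a : L) (r : T) :
    Dsum f val c u (l ++ [a]) r = Dsum f val c u l (val a * r) +
      c a * (f (u * (l.map val).prod) * f r) := by
  induction l generalizing u with
  | nil => simp [Dsum]
  | cons b l ih =>
    simp only [List.cons_append, Dsum, ih]
    simp [mul_assoc]
    ring
end D

lemma SD.add {f : T →ₗ[ℂ] ℂ} {h h' : T} {c c' : T × (ι → ℂ) → ℂ} {X : Set (T × (ι → ℂ))}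
    (H : SD f h c X) (H' : SD f h' c' X) : SD f (h + h') (fun a => c a + c' a) X := by
  intro l hl
  rw [Dsum_add_c, add_mul, map_add, H l hl, H' l hl]

lemma SD.smul {f : T →ₗ[ℂ] ℂ} {h : T} {c : T × (ι → ℂ) → ℂ} {X : Set (T × (ι → ℂ))}
    (H : SD f h c X) (k : ℂ) : SD f (k • h) (fun a => k * c a) X := by
  intro l hl
  rw [Dsum_smul_c, smul_mul_assoc, map_smul, H l hl, smul_eq_mul]

/-- basic letters -/
def Lam [DecidableEq ι] (X : ι → Set T) : Submodule ℂ (T × (ι → ℂ)) :=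
  Submodule.span ℂ {p | ∃ t, ∃ a ∈ X t, p = (a, Pi.single t 1)}

lemma Lam_mem [DecidableEq ι] {X : ι → Set T} {t : ι} {a : T} (ha : a ∈ X t) :
    (a, Pi.single t 1) ∈ Lam X := Submodule.subset_span ⟨t, a, ha, rfl⟩

lemma step1_SD [DecidableEq ι] {f : T →ₗ[ℂ] ℂ} (f1 : f 1 = 1) {X : ι → Set T}
    (hfree : AreFree (fun z => f z) X) (g : ι) (s : T) (hg : X g = {s})
    (hs : ∀ n, f (s ^ n) = mu 1 n) : SD f s (fun a => a.2 g) (Lam X : Set (T × (ι → ℂ))) := by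
  intro l hl
  have key := fun (M : EE T) => Psi_adjoin (M := M) f f1 s (L := ι × T) Prod.snd
    (fun p => if p.1 = g then 1 else 0) {p | p.2 ∈ X p.1} (fun l hl => by
      have := step1 f1 hfree g s hg hs l hl
      rw [Psi_list f f1 s Prod.snd (fun p => if p.1 = g then 1 else 0)] at this
      exact sub_eq_zero.1 this)
  have := key ((l.map fun a => lft a.1 (a.2 g)).prod) (by
    refine Subalgebra.list_prod_mem _ ?_
    intro M hM
    obtain ⟨a, ha, rfl⟩ := List.mem_map.1 hM
    have ha' := hl a ha
    clear hM ha
    change a ∈ Submodule.span ℂ _ at ha'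
    induction ha' using Submodule.span_induction with
    | zero =>
      have := lft_smul 0 (0 : T) 0
      simp at this
      simp [this]
    | add x y _ _ hx hy => simp only [Prod.fst_add, Prod.snd_add, Pi.add_apply, lft_add]
                           exact Subalgebra.add_mem _ hx hy
    | smul c x _ hx =>
      simp only [Prod.smul_fst, Prod.smul_snd, Pi.smul_apply, smul_eq_mul, lft_smul]
      exact Subalgebra.smul_mem _ hx _
    | mem x hx =>
      obtain ⟨t, a, ha, rfl⟩ := hx
      refine Algebra.subset_adjoin ⟨(t, a), ha, ?_⟩
      simp [Pi.single_apply, eq_comm])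
  rw [Psi_list f f1 s Prod.fst (fun a : T × (ι → ℂ) => a.2 g)] at this
  exact sub_eq_zero.1 this

variable {d : ℕ}

/-- value of a matrix letter -/
def valM (N : Matrix (Fin d) (Fin d) (T × (ι → ℂ)) × ℂ) : Matrix (Fin d) (Fin d) T :=
  Matrix.of fun i j => (N.1 i j).1

/-- value of a word of matrix letters -/
def VM (l : List (Matrix (Fin d) (Fin d) (T × (ι → ℂ)) × ℂ)) : Matrix (Fin d) (Fin d) T :=
  (l.map valM).prod

/-- matrix Schwinger-Dyson sum -/
def DM (f : T →ₗ[ℂ] ℂ) (i j : Fin d) :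
    (Fin d → T) → List (Matrix (Fin d) (Fin d) (T × (ι → ℂ)) × ℂ) → Fin d → ℂ
  | _, [], _ => 0
  | u, m :: l, q => m.2 * (f (u j) * f (VM l i q)) + DM f i j (Matrix.vecMul u (valM m)) l q

lemma DM_zero (f : T →ₗ[ℂ] ℂ) (i j : Fin d)
    (l : List (Matrix (Fin d) (Fin d) (T × (ι → ℂ)) × ℂ)) (q : Fin d) : DM f i j 0 l q = 0 := by
  induction l with
  | nil => simp [DM]
  | cons m l ih => simp [DM, Matrix.zero_vecMul, ih]

lemma DM_add (f : T →ₗ[ℂ] ℂ) (i j : Fin d)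
    (l : List (Matrix (Fin d) (Fin d) (T × (ι → ℂ)) × ℂ)) (q : Fin d) (u v : Fin d → T) :
    DM f i j (u + v) l q = DM f i j u l q + DM f i j v l q := by
  induction l generalizing u v with
  | nil => simp [DM]
  | cons m l ih => simp only [DM, Matrix.add_vecMul, ih, Pi.add_apply, map_add]; ring

lemma DM_sum {κ : Type*} (s : Finset κ) (f : T →ₗ[ℂ] ℂ) (i j : Fin d)
    (l : List (Matrix (Fin d) (Fin d) (T × (ι → ℂ)) × ℂ)) (q : Fin d) (u : κ → Fin d → T) :
    DM f i j (∑ k ∈ s, u k) l q = ∑ k ∈ s, DM f i j (u k) l q := by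
  classical
  induction s using Finset.induction_on with
  | empty => simp [DM_zero]
  | insert a s ha ih => rw [Finset.sum_insert ha, Finset.sum_insert ha, DM_add, ih]

lemma VM_nil : VM ([] : List (Matrix (Fin d) (Fin d) (T × (ι → ℂ)) × ℂ)) = 1 := by simp [VM]
lemma VM_cons (m : Matrix (Fin d) (Fin d) (T × (ι → ℂ)) × ℂ)
    (l : List (Matrix (Fin d) (Fin d) (T × (ι → ℂ)) × ℂ)) : VM (m :: l) = valM m * VM l := by
  simp [VM]

lemma matrix_SD {f : T →ₗ[ℂ] ℂ} {h : T} {c : T × (ι → ℂ) → ℂ} {X : Set (T × (ι → ℂ))}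
    (H : SD f h c X) (i j : Fin d)
    (l : List (Matrix (Fin d) (Fin d) (T × (ι → ℂ)) × ℂ))
    (hl : ∀ N ∈ l, (∀ k m, N.1 k m ∈ X) ∧ ∀ k m, c (N.1 k m) = if k = j ∧ m = i then N.2 else 0)
    (l0 : List (T × (ι → ℂ))) (hl0 : ∀ a ∈ l0, a ∈ X) (p q : Fin d) :
    f (h * ((l0.map Prod.fst).prod * VM l p q)) =
      Dsum f Prod.fst c 1 l0 (VM l p q) + DM f i j (Pi.single p (l0.map Prod.fst).prod) l q := by
  induction l generalizing l0 p with
  | nil =>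
    rw [VM_nil, Matrix.one_apply]
    by_cases hpq : p = q
    · simp [hpq, DM, H l0 hl0]
    · simp [hpq, DM, Dsum_zero_r]
  | cons m l ih =>
    obtain ⟨hm1, hm2⟩ := hl m (by simp)
    have ih' := fun k => ih (fun N hN => hl N (by simp [hN])) (l0 ++ [m.1 p k]) (by
      intro a ha
      rcases List.mem_append.1 ha with ha | ha
      · exact hl0 a ha
      · rw [List.mem_singleton.1 ha]; exact hm1 _ _) k
    have e1 : VM (m :: l) p q = ∑ k, (m.1 p k).1 * VM l k q := by
      rw [VM_cons, Matrix.mul_apply]; rfl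
    have e2 : Matrix.vecMul (Pi.single p (l0.map Prod.fst).prod) (valM m) =
        ∑ k, Pi.single k ((l0.map Prod.fst).prod * (m.1 p k).1) := by
      ext k
      rw [Matrix.single_vecMul, Finset.sum_apply]
      simp [valM, Pi.single_apply]
    rw [e1, Finset.mul_sum, Finset.mul_sum, map_sum, Dsum_sum_r, DM, e2, DM_sum]
    have e3 : ∀ k, f (h * ((l0.map Prod.fst).prod * ((m.1 p k).1 * VM l k q))) =
        Dsum f Prod.fst c 1 l0 ((m.1 p k).1 * VM l k q) +
        c (m.1 p k) * (f (l0.map Prod.fst).prod * f (VM l k q)) +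
        DM f i j (Pi.single k ((l0.map Prod.fst).prod * (m.1 p k).1)) l q := by
      intro k
      have := ih' k
      rw [Dsum_concat] at this
      simpa [mul_assoc] using this
    rw [Finset.sum_congr rfl fun k _ => e3 k, Finset.sum_add_distrib, Finset.sum_add_distrib,
      add_assoc]
    congr 2
    simp only [hm2]
    by_cases hpj : p = j
    · simp [hpj]
    · simp [hpj, Pi.single_apply, Ne.symm hpj]

/-- normalized trace -/
def psiD (d : ℕ) (f : T →ₗ[ℂ] ℂ) : Matrix (Fin d) (Fin d) T →ₗ[ℂ] ℂ where
  toFun M := (∑ i, f (M i i)) / d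
  map_add' M N := by simp [Finset.sum_add_distrib, add_div]
  map_smul' c M := by simp [← Finset.mul_sum, mul_div_assoc]

lemma DM_psi (hd : 0 < d) (f : T →ₗ[ℂ] ℂ)
    (l : List (Matrix (Fin d) (Fin d) (T × (ι → ℂ)) × ℂ)) (M : Matrix (Fin d) (Fin d) T) :
    ∑ i, ∑ j, DM f i j (M j) l i = d * Dsum (psiD d f) valM (fun m => m.2 * d) M l 1 := by
  have hd' : (d : ℂ) ≠ 0 := by exact_mod_cast hd.ne'
  induction l generalizing M with
  | nil => simp [DM, Dsum]
  | cons m l ih =>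
    simp only [DM, Dsum, Finset.sum_add_distrib]
    have e : ∀ j, Matrix.vecMul (M j) (valM m) = (M * valM m) j := fun j => rfl
    simp only [e, ih, mul_one]
    rw [mul_add]
    congr 1
    change _ = (d : ℂ) * (m.2 * d * (psiD d f M * psiD d f (VM l)))
    simp only [psiD, LinearMap.coe_mk, AddHom.coe_mk, ← Finset.mul_sum, ← Finset.sum_mul]
    field_simp

lemma step2 (hd : 0 < d) {f : T →ₗ[ℂ] ℂ} {S : Matrix (Fin d) (Fin d) T}
    {c : Fin d → Fin d → T × (ι → ℂ) → ℂ}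
    {X : Set (T × (ι → ℂ))} (H : ∀ i j, SD f (S i j) (c i j) X)
    (l : List (Matrix (Fin d) (Fin d) (T × (ι → ℂ)) × ℂ))
    (hl : ∀ N ∈ l, (∀ k m, N.1 k m ∈ X) ∧
      ∀ i j k m, c i j (N.1 k m) = if k = j ∧ m = i then N.2 else 0) :
    psiD d f (S * (l.map valM).prod) = Dsum (psiD d f) valM (fun m => m.2 * d) 1 l 1 := by
  have hd' : (d : ℂ) ≠ 0 := by exact_mod_cast hd.ne'
  have h1 := DM_psi hd f l 1
  have h2 : ∀ i j, DM f i j ((1 : Matrix (Fin d) (Fin d) T) j) l i = f (S i j * VM l j i) := by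
    intro i j
    have := matrix_SD (H i j) i j l (fun N hN => ⟨(hl N hN).1, (hl N hN).2 i j⟩) [] (by simp) j i
    simp [Dsum] at this
    rw [this]
    congr 1
    ext k
    simp [Matrix.one_apply, Pi.single_apply, eq_comm]
  simp only [h2] at h1
  change psiD d f (S * VM l) = _
  simp only [psiD, LinearMap.coe_mk, AddHom.coe_mk, Matrix.mul_apply, map_sum]
  rw [div_eq_iff hd', h1, mul_comm]
  rfl

lemma psiD_tr {f : T →ₗ[ℂ] ℂ} (ftr : ∀ x y, f (x * y) = f (y * x))
    (M N : Matrix (Fin d) (Fin d) T) : psiD d f (M * N) = psiD d f (N * M) := by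
  simp only [psiD, LinearMap.coe_mk, AddHom.coe_mk, Matrix.mul_apply, map_sum]
  rw [Finset.sum_comm]
  simp only [ftr]

lemma psiD_one (hd : 0 < d) {f : T →ₗ[ℂ] ℂ} (f1 : f 1 = 1) : psiD d f 1 = 1 := by
  have hd' : (d : ℂ) ≠ 0 := by exact_mod_cast hd.ne'
  simp [psiD, f1, hd']

end Aux5

/-- Proposition 5.3, 2°: a self-adjoint matrix with free semicircular diagonal entries and
free circular off-diagonal entries, everything free from `ℬ`, is semicircular of variance
`d` and free from `M_d(ℬ)`. -/
theorem selfadjoint_matrix_of_semicirculars_is_semicircular_and_free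
    {d : ℕ} (hd : 0 < d)
    (φ : A →ₗ[ℂ] ℂ)
    (hφ1 : φ 1 = 1)
    (hφpos : ∀ x : A, 0 ≤ φ (star x * x))
    (hφtr : ∀ x y : A, φ (x * y) = φ (y * x))
    (B : StarSubalgebra ℂ A)
    (sd : Fin d → A) (x y : Fin d → Fin d → A)
    (hsd_sa : ∀ i, star (sd i) = sd i)
    (hsd_sc : ∀ i, SemicircMoments (fun z => φ z) (sd i))
    (hx_sa : ∀ i j, i < j → star (x i j) = x i j)
    (hx_sc : ∀ i j, i < j → SemicircMoments (fun z => φ z) (x i j))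
    (hy_sa : ∀ i j, i < j → star (y i j) = y i j)
    (hy_sc : ∀ i j, i < j → SemicircMoments (fun z => φ z) (y i j))
    (hfree : AreFree (fun z => φ z)
      (Sum.elim (fun i : Fin d => ({sd i} : Set A))
        (Sum.elim (fun q : {q : Fin d × Fin d // q.1 < q.2} => ({x q.1.1 q.1.2} : Set A))
          (Sum.elim (fun q : {q : Fin d × Fin d // q.1 < q.2} => ({y q.1.1 q.1.2} : Set A))
            (fun _ : Unit => (B : Set A)))))) :
    let S : Matrix (Fin d) (Fin d) A := Matrix.of fun i j =>
      if i < j then circ (x i j) (y i j)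
      else if i = j then sd i
      else star (circ (x j i) (y j i))
    (∀ m : ℕ, phid φ (S ^ (2 * m)) = (d : ℂ) ^ m * catalan m ∧
      phid φ (S ^ (2 * m + 1)) = 0) ∧
    AreFree (fun X => phid φ X)
      (![{S}, {X : Matrix (Fin d) (Fin d) A | ∀ i j, X i j ∈ B}] :
        Fin 2 → Set (Matrix (Fin d) (Fin d) A)) := by
  intro S
  have hmu : ∀ s : A, SemicircMoments (fun z => φ z) s → ∀ n, φ (s ^ n) = mu 1 n := by
    intro s hs n
    rcases Nat.even_or_odd' n with ⟨m, rfl | rfl⟩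
    · rw [mu_even, one_pow, one_mul]; exact (hs m).1
    · rw [mu_odd]; exact (hs m).2
  set X : Fin d ⊕ ({q : Fin d × Fin d // q.1 < q.2} ⊕ ({q : Fin d × Fin d // q.1 < q.2} ⊕ Unit)) →
      Set A := (Sum.elim (fun i : Fin d => ({sd i} : Set A))
        (Sum.elim (fun q : {q : Fin d × Fin d // q.1 < q.2} => ({x q.1.1 q.1.2} : Set A))
          (Sum.elim (fun q : {q : Fin d × Fin d // q.1 < q.2} => ({y q.1.1 q.1.2} : Set A))
            (fun _ : Unit => (B : Set A))))) with hX
  have hS1 : ∀ i j (h : i < j), S i j = ((Real.sqrt 2 : ℂ))⁻¹ • (x i j + Complex.I • y i j) := by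
    intro i j h
    simp [S, h, circ]
  have hS2 : ∀ i, S i i = sd i := by
    intro i
    simp [S]
  have hS3 : ∀ i j (h : i < j),
      S j i = ((Real.sqrt 2 : ℂ))⁻¹ • (x i j + (-Complex.I) • y i j) := by
    intro i j h
    simp [S, h, circ, not_lt_of_gt h, h.ne', star_smul, hx_sa i j h, hy_sa i j h]
  -- Schwinger-Dyson equations for the basic letters
  have SDs : ∀ i, SD φ (sd i) (fun a => a.2 (Sum.inl i)) (SetLike.coe (Lam X)) := fun i =>
    step1_SD hφ1 hfree (Sum.inl i) (sd i) rfl (hmu _ (hsd_sc i))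
  have SDx : ∀ i j (h : i < j), SD φ (x i j) (fun a => a.2 (Sum.inr (Sum.inl ⟨(i, j), h⟩)))
      (SetLike.coe (Lam X)) := fun i j h =>
    step1_SD hφ1 hfree (Sum.inr (Sum.inl ⟨(i, j), h⟩)) (x i j) rfl (hmu _ (hx_sc i j h))
  have SDy : ∀ i j (h : i < j),
      SD φ (y i j) (fun a => a.2 (Sum.inr (Sum.inr (Sum.inl ⟨(i, j), h⟩))))
      (SetLike.coe (Lam X)) := fun i j h =>
    step1_SD hφ1 hfree (Sum.inr (Sum.inr (Sum.inl ⟨(i, j), h⟩))) (y i j) rfl (hmu _ (hy_sc i j h))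
  -- covariances and coefficient vectors
  let c : Fin d → Fin d → A × (Fin d ⊕ ({q : Fin d × Fin d // q.1 < q.2} ⊕
      ({q : Fin d × Fin d // q.1 < q.2} ⊕ Unit)) → ℂ) → ℂ := fun i j a =>
    if h : i < j then ((Real.sqrt 2 : ℂ))⁻¹ * (a.2 (Sum.inr (Sum.inl ⟨(i, j), h⟩)) +
      Complex.I * a.2 (Sum.inr (Sum.inr (Sum.inl ⟨(i, j), h⟩))))
    else if h : j < i then ((Real.sqrt 2 : ℂ))⁻¹ * (a.2 (Sum.inr (Sum.inl ⟨(j, i), h⟩)) +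
      (-Complex.I) * a.2 (Sum.inr (Sum.inr (Sum.inl ⟨(j, i), h⟩))))
    else a.2 (Sum.inl i)
  let v : Fin d → Fin d → (Fin d ⊕ ({q : Fin d × Fin d // q.1 < q.2} ⊕
      ({q : Fin d × Fin d // q.1 < q.2} ⊕ Unit)) → ℂ) := fun i j =>
    if h : i < j then ((Real.sqrt 2 : ℂ))⁻¹ • (Pi.single (Sum.inr (Sum.inl ⟨(i, j), h⟩)) 1 +
      Complex.I • Pi.single (Sum.inr (Sum.inr (Sum.inl ⟨(i, j), h⟩))) 1)
    else if h : j < i then ((Real.sqrt 2 : ℂ))⁻¹ • (Pi.single (Sum.inr (Sum.inl ⟨(j, i), h⟩)) 1 +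
      (-Complex.I) • Pi.single (Sum.inr (Sum.inr (Sum.inl ⟨(j, i), h⟩))) 1)
    else Pi.single (Sum.inl i) 1
  have hSD : ∀ i j, SD φ (S i j) (c i j) (SetLike.coe (Lam X)) := by
    intro i j
    rcases lt_trichotomy i j with h | h | h
    · rw [hS1 i j h]
      have := ((SDx i j h).add ((SDy i j h).smul Complex.I)).smul ((Real.sqrt 2 : ℂ))⁻¹
      simpa only [c, h, dite_true] using this
    · subst h
      rw [hS2 i]
      simpa only [c, lt_irrefl, dite_false] using SDs i
    · rw [hS3 j i h]
      have := ((SDx j i h).add ((SDy j i h).smul (-Complex.I))).smul ((Real.sqrt 2 : ℂ))⁻¹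
      simpa only [c, h, dite_true, not_lt_of_gt h, dite_false] using this
  have hxX : ∀ i j (h : i < j), x i j ∈ X (Sum.inr (Sum.inl ⟨(i, j), h⟩)) := fun i j h => rfl
  have hyX : ∀ i j (h : i < j), y i j ∈ X (Sum.inr (Sum.inr (Sum.inl ⟨(i, j), h⟩))) :=
    fun i j h => rfl
  have hsX : ∀ i, sd i ∈ X (Sum.inl i) := fun i => rfl
  have hSmem : ∀ i j, (S i j, v i j) ∈ Lam X := by
    intro i j
    rcases lt_trichotomy i j with h | h | h
    · rw [hS1 i j h]
      have := (Lam X).smul_mem ((Real.sqrt 2 : ℂ))⁻¹ ((Lam X).add_mem (Lam_mem (hxX i j h))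
        ((Lam X).smul_mem Complex.I (Lam_mem (hyX i j h))))
      simpa only [v, h, dite_true, Prod.smul_mk, Prod.mk_add_mk] using this
    · subst h
      rw [hS2 i]
      simpa only [v, lt_irrefl, dite_false] using Lam_mem (hsX i)
    · rw [hS3 j i h]
      have := (Lam X).smul_mem ((Real.sqrt 2 : ℂ))⁻¹ ((Lam X).add_mem (Lam_mem (hxX j i h))
        ((Lam X).smul_mem (-Complex.I) (Lam_mem (hyX j i h))))
      simpa only [v, h, dite_true, not_lt_of_gt h, dite_false, Prod.smul_mk, Prod.mk_add_mk]
        using this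
  have h22 : ((Real.sqrt 2 : ℂ))⁻¹ * ((Real.sqrt 2 : ℂ))⁻¹ = 1 / 2 := by
    rw [← mul_inv, ← Complex.ofReal_mul, Real.mul_self_sqrt (by norm_num)]
    norm_num
  have hcov : ∀ i j k m (a : A), c i j (a, v k m) = if k = j ∧ m = i then 1 else 0 := by
    intro i j k m a
    rcases lt_trichotomy i j with h | h | h <;> rcases lt_trichotomy k m with h' | h' | h'
    · have e1 : ¬ (k = j ∧ m = i) := by
        rintro ⟨rfl, rfl⟩; exact absurd h (not_lt_of_gt h')
      by_cases e : i = k ∧ j = m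
      · obtain ⟨rfl, rfl⟩ := e
        simp [c, v, h, e1]
        linear_combination ((Real.sqrt 2 : ℂ))⁻¹ * Complex.I_mul_I
      · simp [c, v, h, h', e1, e, Pi.single_apply]
    · subst h'
      simp [c, v, h, Pi.single_apply]
      rintro rfl rfl; exact absurd h (lt_irrefl _)
    · by_cases e : k = j ∧ m = i
      · obtain ⟨rfl, rfl⟩ := e
        simp [c, v, h, not_lt_of_gt h]
        linear_combination (1 - Complex.I * Complex.I) * h22 - (1 / 2) * Complex.I_mul_I
      · have e' : ¬ (i = m ∧ j = k) := fun q => e ⟨q.2.symm, q.1.symm⟩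
        simp [c, v, h, h', not_lt_of_gt h', e, e', Pi.single_apply]
    · subst h
      simp [c, v, h', Pi.single_apply]
      rintro rfl rfl; exact absurd h' (lt_irrefl _)
    · subst h
      subst h'
      simp [c, v, Pi.single_apply, eq_comm]
    · subst h
      simp [c, v, h', not_lt_of_gt h', Pi.single_apply]
      rintro rfl rfl; exact absurd h' (lt_irrefl _)
    · by_cases e : k = j ∧ m = i
      · obtain ⟨rfl, rfl⟩ := e
        simp [c, v, h, not_lt_of_gt h]
        linear_combination (1 - Complex.I * Complex.I) * h22 - (1 / 2) * Complex.I_mul_I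
      · have e' : ¬ (j = k ∧ i = m) := fun q => e ⟨q.1.symm, q.2.symm⟩
        simp [c, v, h, h', not_lt_of_gt h, e, e', Pi.single_apply]
    · subst h'
      simp [c, v, h, not_lt_of_gt h, Pi.single_apply]
      rintro rfl rfl; exact absurd h (lt_irrefl _)
    · have e1 : ¬ (k = j ∧ m = i) := by
        rintro ⟨rfl, rfl⟩; exact absurd h (not_lt_of_gt h')
      by_cases e : j = m ∧ i = k
      · obtain ⟨rfl, rfl⟩ := e
        simp [c, v, h, not_lt_of_gt h, e1]
        linear_combination ((Real.sqrt 2 : ℂ))⁻¹ * Complex.I_mul_I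
      · simp [c, v, h, h', not_lt_of_gt h, not_lt_of_gt h', e1, e, Pi.single_apply]
  -- matrix letters
  let Sh : Matrix (Fin d) (Fin d) (A × (Fin d ⊕ ({q : Fin d × Fin d // q.1 < q.2} ⊕
      ({q : Fin d × Fin d // q.1 < q.2} ⊕ Unit)) → ℂ)) × ℂ :=
    (Matrix.of fun i j => (S i j, v i j), 1)
  let bh : Matrix (Fin d) (Fin d) A → Matrix (Fin d) (Fin d) (A × (Fin d ⊕
      ({q : Fin d × Fin d // q.1 < q.2} ⊕
      ({q : Fin d × Fin d // q.1 < q.2} ⊕ Unit)) → ℂ)) × ℂ := fun b =>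
    (Matrix.of fun i j => (b i j, Pi.single (Sum.inr (Sum.inr (Sum.inr ()))) 1), 0)
  set V : Fin 2 → Subalgebra ℂ (Matrix (Fin d) (Fin d) A) := fun t => Algebra.adjoin ℂ
    ((![{S}, {X : Matrix (Fin d) (Fin d) A | ∀ i j, X i j ∈ B}] :
        Fin 2 → Set (Matrix (Fin d) (Fin d) A)) t) with hVdef
  have hV0 : V 0 = Algebra.adjoin ℂ {S} := rfl
  have hV1 : ∀ b ∈ V 1, ∀ i j, b i j ∈ B := by
    intro b hb
    change b ∈ Algebra.adjoin ℂ {X : Matrix (Fin d) (Fin d) A | ∀ i j, X i j ∈ B} at hb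
    induction hb using Algebra.adjoin_induction with
    | mem x hx => exact hx
    | algebraMap r =>
      intro i j
      rw [Matrix.algebraMap_matrix_apply]
      split_ifs
      · exact algebraMap_mem B r
      · exact zero_mem B
    | add x y _ _ hx hy => intro i j; exact add_mem (hx i j) (hy i j)
    | mul x y _ _ hx hy =>
      intro i j
      rw [Matrix.mul_apply]
      exact sum_mem fun k _ => mul_mem (hx i k) (hy k j)
  have hψ1 := psiD_one hd hφ1
  have hPsi : ∀ M ∈ Algebra.adjoin ℂ ({lft S (d : ℂ)} ∪
      (fun b => lft b 0) '' (V 1 : Set (Matrix (Fin d) (Fin d) A))),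
      Psi (psiD d φ) S M = 0 := by
    intro M hM
    refine Psi_adjoin (psiD d φ) hψ1 S valM (fun m => m.2 * d)
      ({Sh} ∪ bh '' (V 1 : Set (Matrix (Fin d) (Fin d) A))) ?_ (M := M) ?_
    · intro l hl
      refine step2 hd hSD l ?_
      intro N hN
      rcases hl N hN with hN | ⟨b, hb, rfl⟩
      · rw [Set.mem_singleton_iff] at hN
        subst hN
        exact ⟨hSmem, fun i j k m => hcov i j k m _⟩
      · refine ⟨fun k m => Lam_mem (X := X) (hV1 b hb k m), fun i j k m => ?_⟩
        simp [bh, c]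
    · refine Algebra.adjoin_mono ?_ hM
      rintro _ (h | ⟨b, hb, rfl⟩)
      · rw [Set.mem_singleton_iff] at h
        refine ⟨Sh, Or.inl rfl, ?_⟩
        rw [h]
        simp only [Sh, one_mul]
        rfl
      · refine ⟨bh b, Or.inr ⟨b, hb, rfl⟩, ?_⟩
        simp only [bh, zero_mul]
        rfl
  have hmom := step3_mom hψ1 (S := S) (d : ℂ) fun M hM =>
    hPsi M (Algebra.adjoin_mono Set.subset_union_left hM)
  refine ⟨fun m => ⟨?_, ?_⟩, ?_⟩
  · rw [← mu_even]; exact hmom _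
  · rw [← mu_odd (d : ℂ) m]; exact hmom _
  · exact (step3_free hψ1 (psiD_tr hφtr) (d : ℂ) hV0 hPsi).toAreFree
end
end

section
/- Let ℬ ⊆ 𝒜 be a unital *-subalgebra and d ≥ 1. For 1 ≤ i, j ≤ d let x_ij, y_ij ∈ 𝒜 be self-adjoint, standard semicircular in moments, and set c_ij := (x_ij + i·y_ij)/√2 (so each c_ij is circular of variance 1). Assume the family of sets {x_ij} (1 ≤ i,j ≤ d), {y_ij} (1 ≤ i,j ≤ d), ℬ is free with respect to φ. Put C := (c_ij)_{i,j=1}^{d} ∈ M_d(𝒜), S₁ := (C + C*)/√(2d) and S₂ := (C − C*)/(i·√(2d)). Then S₁ and S₂ are self-adjoint and standard semicircular in moments with respect to φ_d, the sets {S₁}, {S₂}, M_d(ℬ) are free with respect to φ_d; in particular C is a circular element of variance d in M_d(𝒜) and {C, C*} is free from M_d(ℬ). (Proposition 5.3, 1°.) -/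
open scoped BigOperators
open ComplexOrder

noncomputable section

variable {A : Type*} [Ring A] [Algebra ℂ A] [StarRing A] [StarModule ℂ A]

open scoped TensorProduct

namespace SD

section DD
variable {Λ : Type*}

theorem t_smul_mul (c : ℂ) (m n : FreeAlgebra ℂ Λ ⊗[ℂ] FreeAlgebra ℂ Λ) :
    (c • m) * n = c • (m * n) := smul_mul_assoc ..

theorem t_mul_smul (c : ℂ) (m n : FreeAlgebra ℂ Λ ⊗[ℂ] FreeAlgebra ℂ Λ) :
    m * (c • n) = c • (m * n) := Algebra.mul_smul_comm ..

/-- The derivation in matrix form. -/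
def delHom (c : Λ → ℂ) : FreeAlgebra ℂ Λ →ₐ[ℂ]
    Matrix (Fin 2) (Fin 2) (FreeAlgebra ℂ Λ ⊗[ℂ] FreeAlgebra ℂ Λ) :=
  FreeAlgebra.lift ℂ (fun l =>
    !![FreeAlgebra.ι ℂ l ⊗ₜ[ℂ] 1, c l • 1; 0, 1 ⊗ₜ[ℂ] FreeAlgebra.ι ℂ l])

/-- The free difference quotient. -/
def del (c : Λ → ℂ) (f : FreeAlgebra ℂ Λ) : FreeAlgebra ℂ Λ ⊗[ℂ] FreeAlgebra ℂ Λ :=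
  delHom c f 0 1

theorem delHom_diag (c : Λ → ℂ) (f : FreeAlgebra ℂ Λ) :
    delHom c f 0 0 = f ⊗ₜ[ℂ] 1 ∧ delHom c f 1 0 = 0 ∧ delHom c f 1 1 = 1 ⊗ₜ[ℂ] f := by
  induction f using FreeAlgebra.induction with
  | grade0 r =>
    rw [AlgHom.commutes]
    refine ⟨?_, ?_, ?_⟩
    · simp only [Matrix.algebraMap_matrix_apply, if_true]
      exact Algebra.TensorProduct.algebraMap_apply r
    · simp [Matrix.algebraMap_matrix_apply]
    · simp only [Matrix.algebraMap_matrix_apply, if_true]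
      exact Algebra.TensorProduct.algebraMap_apply' r
  | grade1 l => simp [delHom]
  | mul a b ha hb =>
    simp [Matrix.mul_apply, Fin.sum_univ_two, ha, hb]
  | add a b ha hb =>
    simp [ha, hb, TensorProduct.add_tmul, TensorProduct.tmul_add]

theorem del_mul (c : Λ → ℂ) (f g : FreeAlgebra ℂ Λ) :
    del c (f * g) = (f ⊗ₜ[ℂ] 1) * del c g + del c f * (1 ⊗ₜ[ℂ] g) := by
  simp [del, Matrix.mul_apply, Fin.sum_univ_two, delHom_diag]

theorem del_add (c : Λ → ℂ) (f g : FreeAlgebra ℂ Λ) :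
    del c (f + g) = del c f + del c g := by simp [del]

theorem del_smul (c : Λ → ℂ) (r : ℂ) (f : FreeAlgebra ℂ Λ) :
    del c (r • f) = r • del c f := by simp [del]

theorem del_one (c : Λ → ℂ) : del c (1 : FreeAlgebra ℂ Λ) = 0 := by
  simp [del]

theorem del_ι (c : Λ → ℂ) (l : Λ) : del c (FreeAlgebra.ι ℂ l) = c l • 1 := by
  simp [del, delHom]

/-- `(ψ ⊗ ψ)`. -/
def tens (ψ : FreeAlgebra ℂ Λ →ₗ[ℂ] ℂ) : FreeAlgebra ℂ Λ ⊗[ℂ] FreeAlgebra ℂ Λ →ₗ[ℂ] ℂ :=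
  LinearMap.mul' ℂ ℂ ∘ₗ TensorProduct.map ψ ψ

/-- `DD c ψ f p q = (ψ ⊗ ψ) ((p ⊗ 1) * ∂ f * (1 ⊗ q))`. -/
def DD (c : Λ → ℂ) (ψ : FreeAlgebra ℂ Λ →ₗ[ℂ] ℂ) :
    FreeAlgebra ℂ Λ →ₗ[ℂ] FreeAlgebra ℂ Λ →ₗ[ℂ] FreeAlgebra ℂ Λ →ₗ[ℂ] ℂ where
  toFun f := LinearMap.mk₂ ℂ (fun p q => tens ψ ((p ⊗ₜ[ℂ] 1) * del c f * (1 ⊗ₜ[ℂ] q)))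
    (by intros; simp [TensorProduct.add_tmul, add_mul])
    (by intros; simp [← TensorProduct.smul_tmul', t_smul_mul])
    (by intros; simp [TensorProduct.tmul_add, mul_add])
    (by intros; simp [TensorProduct.tmul_smul, t_mul_smul])
  map_add' f g := by
    ext p q
    simp [del_add, mul_add, add_mul]
  map_smul' r f := by
    ext p q
    simp [del_smul, t_mul_smul, t_smul_mul]

variable (c : Λ → ℂ) (ψ : FreeAlgebra ℂ Λ →ₗ[ℂ] ℂ)

theorem DD_apply (f p q : FreeAlgebra ℂ Λ) :
    DD c ψ f p q = tens ψ ((p ⊗ₜ[ℂ] 1) * del c f * (1 ⊗ₜ[ℂ] q)) := rfl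

theorem DD_one (p q : FreeAlgebra ℂ Λ) : DD c ψ 1 p q = 0 := by
  simp [DD_apply, del_one]

theorem DD_algebraMap (r : ℂ) (p q : FreeAlgebra ℂ Λ) :
    DD c ψ (algebraMap ℂ _ r) p q = 0 := by
  simp [Algebra.algebraMap_eq_smul_one, DD_one]

theorem DD_ι (l : Λ) (p q : FreeAlgebra ℂ Λ) :
    DD c ψ (FreeAlgebra.ι ℂ l) p q = c l * (ψ p * ψ q) := by
  simp [DD_apply, del_ι, tens, t_smul_mul]

theorem DD_mul (f g p q : FreeAlgebra ℂ Λ) :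
    DD c ψ (f * g) p q = DD c ψ g (p * f) q + DD c ψ f p (g * q) := by
  simp only [DD_apply, del_mul, mul_add, add_mul, map_add]
  congr 2
  · rw [← mul_assoc (p ⊗ₜ[ℂ] (1 : FreeAlgebra ℂ Λ))]
    simp
  · simp only [mul_assoc]
    simp

/-- Powers of one letter. -/
theorem DD_pow (l : Λ) (hl : c l = 1) (n : ℕ) (p q : FreeAlgebra ℂ Λ) :
    DD c ψ (FreeAlgebra.ι ℂ l ^ n) p q =
      ∑ j ∈ Finset.range n,
        ψ (p * FreeAlgebra.ι ℂ l ^ j) * ψ (FreeAlgebra.ι ℂ l ^ (n - 1 - j) * q) := by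
  induction n generalizing p q with
  | zero => simp [DD_one]
  | succ n ih =>
    rw [pow_succ', DD_mul, ih, DD_ι, hl, Finset.sum_range_succ']
    congr 1
    · apply Finset.sum_congr rfl
      intro j hj
      rw [mul_assoc, ← pow_succ']
      have : n + 1 - 1 - (j + 1) = n - 1 - j := by omega
      rw [this]
    · simp

/-- If `ψ (p u) ψ (v q) = 0` for all `u, v` in the algebra then `D` vanishes there. -/
theorem DD_vanish (s : Set Λ) (a : FreeAlgebra ℂ Λ)
    (ha : a ∈ Algebra.adjoin ℂ (Set.image (FreeAlgebra.ι ℂ) s)) :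
    ∀ p q : FreeAlgebra ℂ Λ,
    (∀ u ∈ Algebra.adjoin ℂ (Set.image (FreeAlgebra.ι ℂ) s), ∀ v ∈ Algebra.adjoin ℂ (Set.image (FreeAlgebra.ι ℂ) s),
      ψ (p * u) * ψ (v * q) = 0) → DD c ψ a p q = 0 := by
  induction ha using Algebra.adjoin_induction with
  | mem x hx =>
    obtain ⟨l, hl, rfl⟩ := hx
    intro p q h
    have := h 1 (one_mem _) 1 (one_mem _)
    rw [mul_one, one_mul] at this
    rw [DD_ι, this, mul_zero]
  | algebraMap r => intro p q _; exact DD_algebraMap c ψ r p q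
  | add x y hx hy ihx ihy =>
    intro p q h
    rw [map_add, LinearMap.add_apply, LinearMap.add_apply, ihx p q h, ihy p q h, add_zero]
  | mul x y hx hy ihx ihy =>
    intro p q h
    rw [DD_mul, ihy, ihx, add_zero]
    · intro u hu v hv
      rw [← mul_assoc]
      exact h u hu _ (mul_mem hv hy)
    · intro u hu v hv
      rw [mul_assoc]
      exact h _ (mul_mem hx hu) v hv

/-- `D` vanishes on letters of covariance zero. -/
theorem DD_zero (s : Set Λ) (hs : ∀ l ∈ s, c l = 0) (a : FreeAlgebra ℂ Λ)
    (ha : a ∈ Algebra.adjoin ℂ (Set.image (FreeAlgebra.ι ℂ) s)) :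
    ∀ p q : FreeAlgebra ℂ Λ, DD c ψ a p q = 0 := by
  induction ha using Algebra.adjoin_induction with
  | mem x hx =>
    obtain ⟨l, hl, rfl⟩ := hx
    intro p q
    rw [DD_ι, hs l hl, zero_mul]
  | algebraMap r => intro p q; exact DD_algebraMap c ψ r p q
  | add x y hx hy ihx ihy =>
    intro p q
    rw [map_add, LinearMap.add_apply, LinearMap.add_apply, ihx p q, ihy p q, add_zero]
  | mul x y hx hy ihx ihy =>
    intro p q
    rw [DD_mul, ihy, ihx, add_zero]

end DD

/-- semicircle moments -/
def scm (n : ℕ) : ℂ := if Even n then catalan (n / 2) else 0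

theorem scm_even (m : ℕ) : scm (2 * m) = catalan m := by simp [scm]
theorem scm_odd (m : ℕ) : scm (2 * m + 1) = 0 := by simp [scm]

theorem sum_range_even_odd (f : ℕ → ℂ) (m : ℕ) :
    ∑ j ∈ Finset.range (2 * m), f j = ∑ i ∈ Finset.range m, (f (2 * i) + f (2 * i + 1)) := by
  induction m with
  | zero => simp
  | succ m ih =>
    rw [show 2 * (m + 1) = 2 * m + 1 + 1 by ring, Finset.sum_range_succ, Finset.sum_range_succ, ih,
      Finset.sum_range_succ]
    ring

theorem scm_rec (n : ℕ) :
    scm (n + 1) = ∑ j ∈ Finset.range n, scm j * scm (n - 1 - j) := by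
  rcases Nat.even_or_odd' n with ⟨m, rfl | rfl⟩
  · rw [scm_odd, sum_range_even_odd]
    symm
    apply Finset.sum_eq_zero
    intro i hi
    have hi := Finset.mem_range.1 hi
    rw [show 2 * m - 1 - 2 * i = 2 * (m - 1 - i) + 1 by omega, scm_odd, scm_odd]
    simp
  · rw [show 2 * m + 1 + 1 = 2 * (m + 1) by ring, scm_even, Finset.sum_range_succ,
      sum_range_even_odd, catalan_succ, Finset.sum_fin_eq_sum_range, Nat.cast_sum,
      Finset.sum_range_succ]
    congr 1
    · apply Finset.sum_congr rfl
      intro i hi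
      have hi := Finset.mem_range.1 hi
      rw [dif_pos (by omega)]
      rw [show 2 * m + 1 - 1 - 2 * i = 2 * (m - i) by omega, scm_odd, scm_even, scm_even]
      simp
    · rw [dif_pos (by omega), show 2 * m + 1 - 1 - 2 * m = 2 * (m - m) by omega, scm_even, scm_even]
      simp

theorem semicirc_iff {T : Type*} [Monoid T] (φ : T → ℂ) (s : T) :
    SemicircMoments φ s ↔ ∀ n, φ (s ^ n) = scm n := by
  constructor
  · intro h n
    rcases Nat.even_or_odd' n with ⟨m, rfl | rfl⟩
    · rw [(h m).1, scm_even]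
    · rw [(h m).2, scm_odd]
  · intro h m
    rw [h, h, scm_even, scm_odd]
    simp

section Free
variable {T : Type*} [Ring T] [Algebra ℂ T] {ι : Type*}

theorem free_list {φ : T → ℂ} {S : ι → Set T} (h : AreFree φ S) (L : List (ι × T))
    (hne : L ≠ []) (hch : (L.map Prod.fst).IsChain (· ≠ ·))
    (hmem : ∀ a ∈ L, a.2 ∈ Algebra.adjoin ℂ (S a.1)) (h0 : ∀ a ∈ L, φ a.2 = 0) :
    φ ((L.map Prod.snd).prod) = 0 := by
  obtain ⟨n, hn⟩ : ∃ n, L.length = n + 1 := by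
    cases L with
    | nil => exact absurd rfl hne
    | cons a l => exact ⟨l.length, rfl⟩
  have key := h n (fun m => (L[(m : ℕ)]'(by omega)).1) (fun m => (L[(m : ℕ)]'(by omega)).2)
    (fun m => hmem _ (List.getElem_mem _)) (fun m => h0 _ (List.getElem_mem _))
    (fun m => by
      have := List.isChain_iff_getElem.1 hch m (by simp; omega)
      simpa using this)
  have e : List.ofFn (fun m : Fin (n + 1) => (L[(m : ℕ)]'(by omega)).2) = L.map Prod.snd := by
    apply List.ext_getElem
    · simp [hn]
    · intro i h1 h2
      simp only [List.getElem_ofFn, List.getElem_map]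
  rw [e] at key
  exact key

theorem free_of_list {φ : T → ℂ} {S : ι → Set T}
    (h : ∀ L : List (ι × T), L ≠ [] → (L.map Prod.fst).IsChain (· ≠ ·) →
      (∀ a ∈ L, a.2 ∈ Algebra.adjoin ℂ (S a.1)) → (∀ a ∈ L, φ a.2 = 0) →
      φ ((L.map Prod.snd).prod) = 0) : AreFree φ S := by
  intro n t z hz h0 ht
  have key := h (List.ofFn (fun m => (t m, z m))) (by simp) ?_ ?_ ?_
  · rw [List.map_ofFn] at key
    exact key
  · rw [List.isChain_iff_getElem]
    intro i hi
    simp only [List.length_map, List.length_ofFn] at hi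
    simp only [List.getElem_ofFn, List.getElem_map]
    exact ht ⟨i, by omega⟩
  · intro a ha
    obtain ⟨m, rfl⟩ := (List.mem_ofFn' _ _).1 ha
    exact hz m
  · intro a ha
    obtain ⟨m, rfl⟩ := (List.mem_ofFn' _ _).1 ha
    exact h0 m

theorem free_mono {φ : T → ℂ} {S : ι → Set T} (h : AreFree φ S) {κ : Type*} (e : κ → ι)
    (he : Function.Injective e) {S' : κ → Set T}
    (hS : ∀ k, S' k ⊆ (Algebra.adjoin ℂ (S (e k)) : Set T)) : AreFree φ S' := by
  intro n t z hz h0 ht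
  refine h n (fun m => e (t m)) z (fun m => ?_) h0 (fun m => he.ne (ht m))
  exact Algebra.adjoin_le (hS (t m)) (hz m)

end Free

/-- covariance -/
def cv {ι M : Type*} [DecidableEq ι] (g : ι) : ι ⊕ M → ℂ :=
  Sum.elim (fun i => if i = g then 1 else 0) (fun _ => 0)

section Forward
variable {T : Type*} [Ring T] [Algebra ℂ T] {ι : Type*} 

/-- evaluation functional -/
def psi {Λ : Type*} (φ : T →ₗ[ℂ] ℂ) (v : Λ → T) : FreeAlgebra ℂ Λ →ₗ[ℂ] ℂ :=
  φ ∘ₗ (FreeAlgebra.lift ℂ v).toLinearMap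

theorem psi_apply {Λ : Type*} (φ : T →ₗ[ℂ] ℂ) (v : Λ → T) (f : FreeAlgebra ℂ Λ) :
    psi φ v f = φ (FreeAlgebra.lift ℂ v f) := rfl

/-- A good list : alternating centered. -/
def Good {Λ κ : Type*} (ψ : FreeAlgebra ℂ Λ →ₗ[ℂ] ℂ) (col : Λ → κ)
    (L : List (κ × FreeAlgebra ℂ Λ)) : Prop :=
  (L.map Prod.fst).IsChain (· ≠ ·) ∧
  ∀ a ∈ L, a.2 ∈ Algebra.adjoin ℂ (Set.image (FreeAlgebra.ι ℂ) {l | col l = a.1}) ∧ ψ a.2 = 0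

section span
variable {Λ κ : Type*} {ψ : FreeAlgebra ℂ Λ →ₗ[ℂ] ℂ} {col : Λ → κ}

theorem Good.tail {a} {L : List (κ × FreeAlgebra ℂ Λ)} (h : Good ψ col (a :: L)) :
    Good ψ col L :=
  ⟨(List.IsChain.tail h.1), fun b hb => h.2 b (List.mem_cons_of_mem _ hb)⟩

theorem ι_mem (l : Λ) :
    FreeAlgebra.ι ℂ l ∈ Algebra.adjoin ℂ (Set.image (FreeAlgebra.ι ℂ) {l' | col l' = col l}) :=
  Algebra.subset_adjoin ⟨l, rfl, rfl⟩

theorem centered_mem (hψ : ψ 1 = 1) {s : Set Λ} {f : FreeAlgebra ℂ Λ}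
    (hf : f ∈ Algebra.adjoin ℂ (Set.image (FreeAlgebra.ι ℂ) s)) :
    f - ψ f • 1 ∈ Algebra.adjoin ℂ (Set.image (FreeAlgebra.ι ℂ) s) ∧ ψ (f - ψ f • 1) = 0 := by
  constructor
  · exact sub_mem hf (Subalgebra.smul_mem _ (one_mem _) _)
  · simp [hψ]

theorem Good.span (hψ : ψ 1 = 1) (f : FreeAlgebra ℂ Λ) :
    f ∈ Submodule.span ℂ {g | ∃ L, Good ψ col L ∧ g = (L.map Prod.snd).prod} := by
  set M := Submodule.span ℂ {g | ∃ L, Good ψ col L ∧ g = (L.map Prod.snd).prod} with hM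
  have h1 : (1 : FreeAlgebra ℂ Λ) ∈ M :=
    Submodule.subset_span ⟨[], ⟨by simp, by simp⟩, by simp⟩
  have hmul : ∀ m ∈ M, f * m ∈ M := by
    induction f using FreeAlgebra.induction with
    | grade0 r =>
      intro m hm
      rw [← Algebra.smul_def]
      exact M.smul_mem _ hm
    | grade1 l =>
      intro m hm
      induction hm using Submodule.span_induction with
      | mem m hm =>
        obtain ⟨L, hL, rfl⟩ := hm
        by_cases hc : ∃ a L', L = (col l, a) :: L'
        · obtain ⟨a, L', rfl⟩ := hc
          have ha := hL.2 _ List.mem_cons_self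
          have hla : FreeAlgebra.ι ℂ l * a ∈
              Algebra.adjoin ℂ (Set.image (FreeAlgebra.ι ℂ) {l' | col l' = col l}) :=
            mul_mem (ι_mem l) ha.1
          have e : FreeAlgebra.ι ℂ l * (List.map Prod.snd ((col l, a) :: L')).prod =
            (List.map Prod.snd ((col l, FreeAlgebra.ι ℂ l * a -
              ψ (FreeAlgebra.ι ℂ l * a) • 1) :: L')).prod
              + ψ (FreeAlgebra.ι ℂ l * a) • (List.map Prod.snd L').prod := by
            simp [sub_mul, mul_assoc]
          rw [e]
          refine M.add_mem (Submodule.subset_span ⟨_, ⟨?_, ?_⟩, rfl⟩)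
            (M.smul_mem _ (Submodule.subset_span ⟨L', hL.tail, rfl⟩))
          · exact hL.1
          · intro b hb
            rcases List.mem_cons.1 hb with rfl | hb
            · exact centered_mem hψ hla
            · exact hL.2 b (List.mem_cons_of_mem _ hb)
        · have e : FreeAlgebra.ι ℂ l * (List.map Prod.snd L).prod =
            (List.map Prod.snd ((col l, FreeAlgebra.ι ℂ l -
              ψ (FreeAlgebra.ι ℂ l) • 1) :: L)).prod
              + ψ (FreeAlgebra.ι ℂ l) • (List.map Prod.snd L).prod := by
            simp [sub_mul]
          rw [e]
          refine M.add_mem (Submodule.subset_span ⟨_, ⟨?_, ?_⟩, rfl⟩)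
            (M.smul_mem _ (Submodule.subset_span ⟨L, hL, rfl⟩))
          · cases L with
            | nil => simp
            | cons a L' =>
              simp only [List.map_cons, List.isChain_cons_cons]
              refine ⟨fun h => hc ⟨a.2, L', by rw [h]⟩, hL.1⟩
          · intro b hb
            rcases List.mem_cons.1 hb with rfl | hb
            · exact centered_mem hψ (ι_mem l)
            · exact hL.2 b hb
      | zero => rw [mul_zero]; exact M.zero_mem
      | add x y _ _ hx hy => rw [mul_add]; exact M.add_mem hx hy
      | smul r x _ hx => rw [mul_smul_comm]; exact M.smul_mem _ hx
    | mul a b ha hb => intro m hm; rw [mul_assoc]; exact ha _ (hb _ hm)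
    | add a b ha hb => intro m hm; rw [add_mul]; exact M.add_mem (ha _ hm) (hb _ hm)
  have := hmul 1 h1
  rwa [mul_one] at this

end span

variable [DecidableEq ι]

theorem forward (φ : T →ₗ[ℂ] ℂ) (hφ1 : φ 1 = 1) (s : ι → T) (B : Set T)
    (hsc : ∀ i n, φ (s i ^ n) = scm n)
    (hfree : AreFree (fun z => φ z) (Sum.elim (fun i : ι => ({s i} : Set T)) (fun _ : Unit => B)))
    (g : ι) (f : FreeAlgebra ℂ (ι ⊕ B)) :
    psi φ (Sum.elim s (fun b : B => (b : T))) (FreeAlgebra.ι ℂ (Sum.inl g) * f) =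
      DD (cv g) (psi φ (Sum.elim s (fun b : B => (b : T)))) f 1 1 := by
  set v : ι ⊕ B → T := Sum.elim s (fun b : B => (b : T)) with hv
  set ψ := psi φ v with hψdef
  have hψ1 : ψ 1 = 1 := by simp [hψdef, psi_apply, hφ1]
  let col : ι ⊕ B → ι ⊕ Unit := Sum.map id (fun _ => ())
  let X : FreeAlgebra ℂ (ι ⊕ B) := FreeAlgebra.ι ℂ (Sum.inl g)
  have hXpow : ∀ n, ψ (X ^ n) = scm n := by
    intro n
    simp [hψdef, psi_apply, X, hv, hsc]
  have hX0 : ψ X = 0 := by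
    have := hXpow 1
    rw [pow_one] at this
    rw [this]
    exact scm_odd 0
  -- freeness on the free algebra
  have hF : ∀ L, L ≠ [] → Good ψ col L → ψ ((L.map Prod.snd).prod) = 0 := by
    intro L hne hL
    have := free_list hfree (L.map (fun a => (a.1, FreeAlgebra.lift ℂ v a.2))) (by simpa using hne)
      (by
        have := hL.1
        rw [List.map_map]
        exact this) ?_ ?_
    · rw [hψdef, psi_apply, map_list_prod, List.map_map]
      rw [List.map_map] at this
      exact this
    · intro a ha
      obtain ⟨b, hb, rfl⟩ := List.mem_map.1 ha
      have h1 := (hL.2 b hb).1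
      have h2 : FreeAlgebra.lift ℂ v b.2 ∈ (Algebra.adjoin ℂ
          (Set.image (FreeAlgebra.ι ℂ) {l | col l = b.1})).map (FreeAlgebra.lift ℂ v) :=
        ⟨_, h1, rfl⟩
      rw [AlgHom.map_adjoin] at h2
      refine Algebra.adjoin_mono ?_ h2
      rintro _ ⟨_, ⟨l, hl, rfl⟩, rfl⟩
      have hl : col l = b.1 := hl
      simp only [← hl]
      rcases l with i | m
      · simp [col, hv]
      · simp [col, hv]
    · intro a ha
      obtain ⟨b, hb, rfl⟩ := List.mem_map.1 ha
      exact (hL.2 b hb).2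
  have hcolg : ∀ l, col l = Sum.inl g ↔ l = Sum.inl g := by
    rintro (i | m) <;> simp [col]
  have hXmem : X ∈ Algebra.adjoin ℂ (Set.image (FreeAlgebra.ι ℂ) {l | col l = Sum.inl g}) :=
    Algebra.subset_adjoin ⟨Sum.inl g, rfl, rfl⟩
  -- claim on D for long words
  have hD : ∀ L2 L1, Good ψ col (L1 ++ L2) → 2 ≤ (L1 ++ L2).length →
      DD (cv g) ψ ((L2.map Prod.snd).prod) ((L1.map Prod.snd).prod) 1 = 0 := by
    intro L2
    induction L2 with
    | nil => intro L1 _ _; simp [DD_one]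
    | cons a L2 ih =>
      intro L1 hL hlen
      rw [List.map_cons, List.prod_cons, DD_mul]
      have h1 := ih (L1 ++ [a]) (by simpa using hL) (by simpa using hlen)
      rw [List.map_append, List.prod_append, List.map_singleton, List.prod_singleton] at h1
      rw [h1, zero_add, mul_one]
      have ha := (hL.2 a (by simp))
      by_cases hc : a.1 = Sum.inl g
      · refine DD_vanish _ _ _ _ ha.1 _ _ ?_
        intro u hu w hw
        by_cases hL1 : L1 = []
        · subst hL1
          have hL2 : L2 ≠ [] := by
            rintro rfl
            simp at hlen
          have hgood : Good ψ col ((a.1, w - ψ w • 1) :: L2) := by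
            refine ⟨hL.1, ?_⟩
            intro b hb
            rcases List.mem_cons.1 hb with rfl | hb
            · exact centered_mem hψ1 hw
            · exact hL.2 b (by simp [hb])
          have e1 := hF _ (by simp) hgood
          have e2 := hF _ hL2 hgood.tail
          simp only [List.map_cons, List.prod_cons, sub_mul, map_sub, smul_mul_assoc, map_smul,
            one_mul, e2, smul_zero, sub_zero] at e1
          rw [e1, mul_zero]
        · have hgood1 : Good ψ col L1 := by
            refine ⟨?_, fun b hb => hL.2 b (by simp [hb])⟩
            have := hL.1
            rw [List.map_append] at this
            exact this.left_of_append
          have hgood : Good ψ col (L1 ++ [(a.1, u - ψ u • 1)]) := by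
            refine ⟨?_, ?_⟩
            · have := hL.1
              rw [List.append_cons, List.map_append] at this
              have := this.left_of_append
              simpa using this
            · intro b hb
              rcases List.mem_append.1 hb with hb | hb
              · exact hgood1.2 b hb
              · rw [List.mem_singleton] at hb
                subst hb
                exact centered_mem hψ1 hu
          have e1 := hF _ (by simp) hgood
          have e2 := hF _ hL1 hgood1
          simp only [List.map_append, List.prod_append, List.map_singleton, List.prod_singleton,
            mul_sub, map_sub, mul_smul_comm, map_smul,
            mul_one, e2, smul_zero, sub_zero] at e1
          rw [e1, zero_mul]
      · refine DD_zero _ _ _ ?_ _ ha.1 _ _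
        rintro (i | m) hl
        · have hl : col (Sum.inl i) = a.1 := hl
          have : i ≠ g := by
            rintro rfl
            exact hc hl.symm
          simp [cv, this]
        · simp [cv]
  have hspan := Good.span (ψ := ψ) (col := col) hψ1 f
  change ψ (X * f) = _
  induction hspan using Submodule.span_induction with
  | mem m hm =>
    obtain ⟨L, hL, rfl⟩ := hm
    rcases L with _ | ⟨a, _ | ⟨b, L⟩⟩
    · simp [hX0, DD_one]
    · have ha := hL.2 a (by simp)
      by_cases hc : a.1 = Sum.inl g
      · simp only [List.map_cons, List.map_nil, List.prod_singleton]
        have ha1 := ha.1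
        have hset : {l | col l = a.1} = {Sum.inl g} := by
          ext l
          rw [hc]
          exact hcolg l
        rw [hset, Set.image_singleton, Algebra.adjoin_singleton_eq_range_aeval] at ha1
        obtain ⟨p, hp⟩ := ha1
        rw [← hp]
        change ψ (X * Polynomial.aeval X p) = DD (cv g) ψ (Polynomial.aeval X p) 1 1
        clear hp
        induction p using Polynomial.induction_on' with
        | add p q hp hq => simp only [map_add, mul_add, LinearMap.add_apply, hp, hq]
        | monomial n r =>
          rw [Polynomial.aeval_monomial, ← Algebra.smul_def, mul_smul_comm, map_smul, map_smul,
            LinearMap.smul_apply, LinearMap.smul_apply, ← pow_succ', hXpow, DD_pow, scm_rec]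
          · simp only [one_mul, mul_one]
            congr 1
            apply Finset.sum_congr rfl
            intro j _
            rw [← hXpow, ← hXpow]
          · simp [cv]
      · have e1 := hF ((Sum.inl g, X) :: [a]) (by simp) ⟨by simp [Ne.symm hc], by
          intro b hb
          rcases List.mem_cons.1 hb with rfl | hb
          · exact ⟨hXmem, hX0⟩
          · exact hL.2 b hb⟩
        simp only [List.map_cons, List.map_nil, List.prod_cons, List.prod_nil, mul_one] at e1 ⊢
        rw [e1]
        symm
        refine DD_zero _ _ _ ?_ _ ha.1 _ _
        rintro (i | m) hl
        · have hl : col (Sum.inl i) = a.1 := hl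
          have : i ≠ g := by
            rintro rfl
            exact hc hl.symm
          simp [cv, this]
        · simp [cv]
    · have h2 := hD (a :: b :: L) [] (by simpa using hL) (by simp)
      simp only [List.map_nil, List.prod_nil] at h2
      rw [h2]
      have ha := hL.2 a (by simp)
      by_cases hc : a.1 = Sum.inl g
      · have hXa : X * a.2 ∈ Algebra.adjoin ℂ (Set.image (FreeAlgebra.ι ℂ) {l | col l = a.1}) := by
          refine mul_mem ?_ ha.1
          rw [hc]; exact hXmem
        have hgood : Good ψ col ((a.1, X * a.2 - ψ (X * a.2) • 1) :: b :: L) := by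
            refine ⟨hL.1, ?_⟩
            intro c hb
            rcases List.mem_cons.1 hb with rfl | hb
            · exact centered_mem hψ1 hXa
            · exact hL.2 c (List.mem_cons_of_mem _ hb)
        have e1 := hF _ (by simp) hgood
        have e2 := hF _ (by simp) hgood.tail
        rw [List.map_cons, List.prod_cons] at e1 ⊢
        simp only [sub_mul, map_sub, smul_mul_assoc, map_smul,
            one_mul, e2, smul_zero, sub_zero] at e1
        rw [← mul_assoc]
        exact e1
      · have e1 := hF ((Sum.inl g, X) :: a :: b :: L) (by simp) ⟨by
            rw [List.map_cons, List.map_cons, List.isChain_cons_cons]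
            exact ⟨Ne.symm hc, hL.1⟩, by
          intro b hb
          rcases List.mem_cons.1 hb with rfl | hb
          · exact ⟨hXmem, hX0⟩
          · exact hL.2 b hb⟩
        rw [List.map_cons, List.prod_cons] at e1
        exact e1
  | zero => simp
  | add x y _ _ hx hy => simp only [mul_add, map_add, LinearMap.add_apply, hx, hy]
  | smul r x _ hx => simp only [mul_smul_comm, map_smul, LinearMap.smul_apply, hx]

end Forward

set_option linter.unusedSectionVars false

section Backward
variable {ι M κ : Type*} [DecidableEq ι]

/-- word -/
def Wd {Λ : Type*} (w : List Λ) : FreeAlgebra ℂ Λ := (w.map (FreeAlgebra.ι ℂ)).prod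

theorem Wd_nil {Λ : Type*} : Wd ([] : List Λ) = 1 := by simp [Wd]
theorem Wd_cons {Λ : Type*} (l : Λ) (w : List Λ) : Wd (l :: w) = FreeAlgebra.ι ℂ l * Wd w := by
  simp [Wd]
theorem Wd_append {Λ : Type*} (u w : List Λ) : Wd (u ++ w) = Wd u * Wd w := by
  simp [Wd]

/-- centered word -/
def cw {Λ : Type*} (ψ : FreeAlgebra ℂ Λ →ₗ[ℂ] ℂ) (w : List Λ) : FreeAlgebra ℂ Λ :=
  Wd w - ψ (Wd w) • 1

/-- product of centered words -/
def Zp {Λ κ' : Type*} (ψ : FreeAlgebra ℂ Λ →ₗ[ℂ] ℂ) (L : List (κ' × List Λ)) : FreeAlgebra ℂ Λ :=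
  (L.map (fun a => cw ψ a.2)).prod

/-- good list of words -/
def GW {Λ κ' : Type*} (col : Λ → κ') (L : List (κ' × List Λ)) : Prop :=
  (L.map Prod.fst).IsChain (· ≠ ·) ∧ ∀ a ∈ L, ∀ l ∈ a.2, col l = a.1

/-- size -/
def sz {Λ κ' : Type*} (L : List (κ' × List Λ)) : ℕ := (L.map (fun a => a.2.length)).sum

section basic
variable {Λ κ' : Type*} {ψ : FreeAlgebra ℂ Λ →ₗ[ℂ] ℂ} {col : Λ → κ'}

theorem Zp_nil : Zp ψ ([] : List (κ' × List Λ)) = 1 := by simp [Zp]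
theorem Zp_cons (a : κ' × List Λ) (L) : Zp ψ (a :: L) = cw ψ a.2 * Zp ψ L := by simp [Zp]
theorem Zp_append (L L' : List (κ' × List Λ)) : Zp ψ (L ++ L') = Zp ψ L * Zp ψ L' := by simp [Zp]
theorem Zp_single (a : κ' × List Λ) : Zp ψ [a] = cw ψ a.2 := by simp [Zp]
theorem sz_cons (a : κ' × List Λ) (L) : sz (a :: L) = a.2.length + sz L := by simp [sz]
theorem sz_append (L L' : List (κ' × List Λ)) : sz (L ++ L') = sz L + sz L' := by simp [sz]
theorem sz_nil : sz ([] : List (κ' × List Λ)) = 0 := by simp [sz]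
theorem Wd_eq (w : List Λ) : Wd w = cw ψ w + ψ (Wd w) • 1 := by simp [cw]
theorem cw_nil (h : ψ 1 = 1) : cw ψ ([] : List Λ) = 0 := by simp [cw, Wd_nil, h]
theorem psi_cw (h : ψ 1 = 1) (w : List Λ) : ψ (cw ψ w) = 0 := by simp [cw, h]

theorem GW.tail {a} {L : List (κ' × List Λ)} (h : GW col (a :: L)) : GW col L :=
  ⟨h.1.tail, fun b hb => h.2 b (List.mem_cons_of_mem _ hb)⟩

theorem GW.left {L L' : List (κ' × List Λ)} (h : GW col (L ++ L')) : GW col L := by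
  refine ⟨?_, fun b hb => h.2 b (List.mem_append_left _ hb)⟩
  have := h.1
  rw [List.map_append] at this
  exact this.left_of_append

/-- replace the first word -/
theorem GW.repl {c : κ'} {w w' : List Λ} {L : List (κ' × List Λ)} (h : GW col ((c, w) :: L))
    (hw : ∀ l ∈ w', col l = c) : GW col ((c, w') :: L) := by
  refine ⟨h.1, ?_⟩
  intro a ha
  rcases List.mem_cons.1 ha with rfl | ha
  · exact hw
  · exact h.2 a (List.mem_cons_of_mem _ ha)

theorem GW.repl_last {c : κ'} {w w' : List Λ} {L : List (κ' × List Λ)} (h : GW col (L ++ [(c, w)]))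
    (hw : ∀ l ∈ w', col l = c) : GW col (L ++ [(c, w')]) := by
  refine ⟨by simpa using h.1, ?_⟩
  intro a ha
  rcases List.mem_append.1 ha with ha | ha
  · exact h.2 a (List.mem_append_left _ ha)
  · rw [List.mem_singleton] at ha
    subst ha
    exact hw

end basic

/-- color -/
def colr (cG : ι → κ) : ι ⊕ M → Option κ := Sum.elim (fun i => some (cG i)) (fun _ => none)

variable {ψ : FreeAlgebra ℂ (ι ⊕ M) →ₗ[ℂ] ℂ} {cG : ι → κ}

/-- `D` kills words with vanishing right factor. -/
theorem sub_i (N : ℕ)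
    (IH : ∀ L : List (Option κ × List (ι ⊕ M)), GW (colr cG) L → L ≠ [] → sz L < N →
      ψ (Zp ψ L) = 0) (c : ι ⊕ M → ℂ) (k : Option κ) (L : List (Option κ × List (ι ⊕ M)))
    (hL : L ≠ []) (v : List (ι ⊕ M)) :
    ∀ p, GW (colr cG) ((k, v) :: L) → v.length + sz L < N → DD c ψ (Wd v) p (Zp ψ L) = 0 := by
  induction v with
  | nil => intro p _ _; rw [Wd_nil, DD_one]
  | cons l v ih =>
    intro p hG hlen
    have hG' : GW (colr cG) ((k, v) :: L) :=
      hG.repl (fun l' hl' => hG.2 _ List.mem_cons_self l' (List.mem_cons_of_mem _ hl'))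
    simp only [List.length_cons] at hlen
    rw [Wd_cons, DD_mul, ih _ hG' (by omega), DD_ι, zero_add, Wd_eq (ψ := ψ) v, add_mul, map_add]
    have e1 := IH _ hG' (by simp) (by rw [sz_cons]; simp; omega)
    have e2 := IH _ hG.tail hL (by omega)
    rw [Zp_cons] at e1
    simp only at e1
    rw [e1, smul_mul_assoc, one_mul, map_smul, e2]
    simp

theorem sandwich (N : ℕ)
    (IH : ∀ L : List (Option κ × List (ι ⊕ M)), GW (colr cG) L → L ≠ [] → sz L < N →
      ψ (Zp ψ L) = 0) (k : Option κ) (L : List (Option κ × List (ι ⊕ M)))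
    (hL : L ≠ []) (w u : List (ι ⊕ M)) (hG : GW (colr cG) ((k, w) :: (L ++ [(k, u)])))
    (hlen : w.length + sz L + u.length < N) :
    ψ (Wd w * Zp ψ L * Wd u) = 0 := by
  have e1 := IH _ hG (by simp) (by simp [sz_cons, sz_append, sz_nil]; omega)
  have e2 := IH _ hG.tail (by simp) (by simp [sz_cons, sz_append, sz_nil]; omega)
  have hG3 : GW (colr cG) ((k, w) :: L) := by
    rw [← List.cons_append] at hG
    exact hG.left
  have e3 := IH _ hG3 (by simp) (by simp [sz_cons]; omega)
  have e4 := IH _ hG3.tail hL (by omega)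
  simp only [Zp_cons, Zp_append, Zp_nil, mul_one] at e1 e2 e3
  rw [Wd_eq (ψ := ψ) w, Wd_eq (ψ := ψ) u]
  simp only [add_mul, mul_add, smul_mul_assoc, mul_smul_comm, one_mul, mul_one, map_add, map_smul,
    mul_assoc, e1, e2, e3, e4]
  simp

/-- `D` kills words with vanishing left factor. -/
theorem sub_ii (N : ℕ)
    (IH : ∀ L : List (Option κ × List (ι ⊕ M)), GW (colr cG) L → L ≠ [] → sz L < N →
      ψ (Zp ψ L) = 0) (c : ι ⊕ M → ℂ) (k : Option κ) (L : List (Option κ × List (ι ⊕ M)))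
    (hL : L ≠ []) (w v : List (ι ⊕ M)) :
    ∀ u q, GW (colr cG) ((k, w) :: (L ++ [(k, u ++ v)])) →
      w.length + sz L + (u ++ v).length < N →
      DD c ψ (Wd v) (Wd w * Zp ψ L * Wd u) q = 0 := by
  induction v with
  | nil => intro u q _ _; rw [Wd_nil, DD_one]
  | cons l v ih =>
    intro u q hG hlen
    have h1 := ih (u ++ [l]) q (by simpa using hG) (by simpa using hlen)
    rw [Wd_append, Wd_cons, Wd_nil, mul_one, ← mul_assoc] at h1
    rw [Wd_cons, DD_mul, h1, DD_ι, zero_add, sandwich N IH k L hL w u]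
    · simp
    · rw [← List.cons_append] at hG ⊢
      exact hG.repl_last
        (fun l' hl' => hG.2 _ (List.mem_append_right _ (List.mem_singleton_self _)) l'
          (List.mem_append_left _ hl'))
    · simp at hlen; omega

theorem word_mem {Λ κ' : Type*} (col : Λ → κ') (k : κ') (w : List Λ) (hw : ∀ l ∈ w, col l = k) :
    Wd w ∈ Algebra.adjoin ℂ (Set.image (FreeAlgebra.ι ℂ) {l | col l = k}) := by
  apply list_prod_mem
  intro x hx
  obtain ⟨l, hl, rfl⟩ := List.mem_map.1 hx
  exact Algebra.subset_adjoin ⟨l, hw l hl, rfl⟩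

theorem sub_iii (N : ℕ)
    (IH : ∀ L : List (Option κ × List (ι ⊕ M)), GW (colr cG) L → L ≠ [] → sz L < N →
      ψ (Zp ψ L) = 0) (g : ι) (w : List (ι ⊕ M)) (L2 : List (Option κ × List (ι ⊕ M))) :
    ∀ L1, GW (colr cG) ((some (cG g), w) :: (L1 ++ L2)) → w.length + sz (L1 ++ L2) < N →
      DD (cv g) ψ (Zp ψ L2) (Wd w * Zp ψ L1) 1 = 0 := by
  induction L2 with
  | nil => intro L1 _ _; rw [Zp_nil, DD_one]
  | cons a L2 ih =>
    intro L1 hG hlen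
    have h1 := ih (L1 ++ [a]) (by simpa using hG) (by simpa using hlen)
    rw [Zp_append, Zp_single, ← mul_assoc] at h1
    rw [Zp_cons, DD_mul, h1, zero_add, mul_one]
    have e : DD (cv g) ψ (cw ψ a.2) (Wd w * Zp ψ L1) (Zp ψ L2) =
        DD (cv g) ψ (Wd a.2) (Wd w * Zp ψ L1) (Zp ψ L2) := by
      simp [cw, DD_one]
    rw [e]
    have hcola : ∀ l ∈ a.2, colr cG l = a.1 := hG.2 a (by simp)
    by_cases hc : a.1 = some (cG g)
    · have hL1 : L1 ≠ [] := by
        rintro rfl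
        have := hG.1
        simp only [List.nil_append, List.map_cons, List.isChain_cons_cons] at this
        exact this.1 hc.symm
      have := sub_ii N IH (cv g) (some (cG g)) L1 hL1 w a.2 [] (Zp ψ L2) (by
        have : (some (cG g), w) :: (L1 ++ a :: L2) =
          ((some (cG g), w) :: (L1 ++ [(some (cG g), a.2)])) ++ L2 := by
          rw [← hc]; simp
        rw [this] at hG
        exact hG.left) (by
          simp [sz_append, sz_cons] at hlen ⊢
          omega)
      rwa [Wd_nil, mul_one] at this
    · refine DD_zero _ _ _ ?_ _ (word_mem (colr cG) a.1 a.2 hcola) _ _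
      rintro (i | m) hl
      · have hl : colr cG (Sum.inl i : ι ⊕ M) = a.1 := hl
        have : i ≠ g := by
          rintro rfl
          exact hc hl.symm
        simp [cv, this]
      · simp [cv]

theorem stage_a (hψ1 : ψ 1 = 1)
    (hSD : ∀ g f, ψ (FreeAlgebra.ι ℂ (Sum.inl g) * f) = DD (cv g) ψ f 1 1) (N : ℕ)
    (IH : ∀ L : List (Option κ × List (ι ⊕ M)), GW (colr cG) L → L ≠ [] → sz L < N →
      ψ (Zp ψ L) = 0) (k : κ) (w : List (ι ⊕ M)) (L : List (Option κ × List (ι ⊕ M)))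
    (hG : GW (colr cG) ((some k, w) :: L)) (hlen : sz ((some k, w) :: L) ≤ N) :
    ψ (Zp ψ ((some k, w) :: L)) = 0 := by
  have hcw : ∀ l ∈ w, colr cG l = some k := hG.2 _ List.mem_cons_self
  rcases w with _ | ⟨(g | m), w⟩
  · rw [Zp_cons, cw_nil hψ1, zero_mul, map_zero]
  · have hk : cG g = k := by simpa [colr] using hcw (Sum.inl g) List.mem_cons_self
    subst hk
    by_cases hL : L = []
    · subst hL
      rw [Zp_single]
      exact psi_cw hψ1 _
    · rw [sz_cons] at hlen
      simp only [List.length_cons] at hlen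
      have hG' : GW (colr cG) ((some (cG g), w) :: L) :=
        hG.repl (fun l' hl' => hcw l' (List.mem_cons_of_mem _ hl'))
      have e1 := IH _ hG.tail hL (by omega)
      have e2 := sub_i N IH (cv g) (some (cG g)) L hL w 1 hG' (by omega)
      have e3 := sub_iii N IH g w L [] hG' (by simpa using (by omega))
      rw [Zp_nil, mul_one] at e3
      rw [Zp_cons, cw, sub_mul, map_sub, smul_mul_assoc, one_mul, map_smul, e1, smul_zero, sub_zero,
        Wd_cons, mul_assoc, hSD, DD_mul, one_mul, mul_one, e2, e3, add_zero]
  · have := hcw (Sum.inr m) List.mem_cons_self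
    simp [colr] at this

theorem stage_b (hψ1 : ψ 1 = 1) (htr : ∀ f g, ψ (f * g) = ψ (g * f)) (N : ℕ)
    (IH : ∀ k w, ∀ L : List (Option κ × List (ι ⊕ M)), GW (colr cG) ((some k, w) :: L) →
      sz ((some k, w) :: L) ≤ N → ψ (Zp ψ ((some k, w) :: L)) = 0)
    (w : List (ι ⊕ M)) (L : List (Option κ × List (ι ⊕ M)))
    (hG : GW (colr cG) ((none, w) :: L)) (hlen : sz ((none, w) :: L) ≤ N) :
    ψ (Zp ψ ((none, w) :: L)) = 0 := by
  rw [Zp_cons]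
  simp only
  rcases L with _ | ⟨⟨_ | k, u⟩, L⟩
  · rw [Zp_nil, mul_one]; exact psi_cw hψ1 _
  · exact absurd hG.1 (by simp)
  · have hcw : ∀ l ∈ w, colr cG l = none := hG.2 _ List.mem_cons_self
    rw [htr]
    rcases List.eq_nil_or_concat L with rfl | ⟨L', ⟨c, v⟩, rfl⟩
    · have := IH k u [(none, w)] ⟨by simp, by
        intro a ha
        rcases List.mem_cons.1 ha with rfl | ha
        · exact hG.2 _ (by simp)
        · rw [List.mem_singleton] at ha
          subst ha
          exact hcw⟩ (by simp [sz_cons, sz_nil] at hlen ⊢; omega)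
      rw [Zp_cons, Zp_single] at this
      rw [Zp_single]
      exact this
    · rcases c with _ | c
      · have hcv : ∀ l ∈ v, colr cG l = none := hG.2 (none, v) (by simp)
        have hG' : GW (colr cG) (((some k, u) :: L') ++ [(none, v)]) := by
          simpa using hG.tail
        have hlen' : w.length + (u.length + (sz L' + v.length)) ≤ N := by
          simpa [sz_cons, sz_append, sz_nil] using hlen
        have e1 := IH k u (L' ++ [(none, v ++ w)]) (by
          rw [← List.cons_append]
          refine hG'.repl_last ?_
          intro l hl
          rcases List.mem_append.1 hl with hl | hl
          · exact hcv l hl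
          · exact hcw l hl) (by simp [sz_cons, sz_append, sz_nil]; omega)
        have e2 := IH k u (L' ++ [(none, v)]) (by rw [← List.cons_append]; exact hG') (by simp [sz_cons, sz_append, sz_nil]; omega)
        have e3 := IH k u (L' ++ [(none, w)]) (by rw [← List.cons_append]; exact hG'.repl_last hcw)
          (by simp [sz_cons, sz_append, sz_nil]; omega)
        have e4 := IH k u L' hG'.left (by simp [sz_cons]; omega)
        rw [← List.cons_append, Zp_append, Zp_single] at e1 e2 e3
        rw [List.concat_eq_append, ← List.cons_append, Zp_append, Zp_single]
        generalize Zp ψ ((some k, u) :: L') = z at *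
        simp only at e1 e2 e3 ⊢
        have hz : z * cw ψ v * cw ψ w = z * cw ψ (v ++ w) - ψ (Wd v) • (z * cw ψ w) -
            ψ (Wd w) • (z * cw ψ v) + (ψ (Wd (v ++ w)) - ψ (Wd v) * ψ (Wd w)) • z := by
          simp only [cw, Wd_append, mul_sub, sub_mul, mul_smul_comm, smul_mul_assoc, mul_one,
            smul_sub, sub_smul, mul_assoc, smul_smul]
          rw [mul_comm (ψ (Wd v)) (ψ (Wd w))]
          abel
        rw [hz]
        simp [e1, e2, e3, e4]
      · have := IH k u (L' ++ [(some c, v)] ++ [(none, w)]) ⟨by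
            have h := hG.tail.1
            have h2 : List.map Prod.fst ((some k, u) :: (L' ++ [(some c, v)] ++ [(none, w)])) =
              List.map Prod.fst ((some k, u) :: L'.concat (some c, v)) ++ [none] := by simp
            rw [h2, List.isChain_append]
            refine ⟨h, by simp, ?_⟩
            intro x hx y hy
            simp [List.getLast?_cons] at hx hy
            subst hx hy
            simp, by
          intro a ha
          have : a ∈ (none, w) :: (some k, u) :: L'.concat (some c, v) := by
            simp at ha ⊢; tauto
          exact hG.2 a this⟩ (by simp [sz_cons, sz_append, sz_nil] at hlen ⊢; omega)
        rw [← List.cons_append, Zp_append, Zp_single] at this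
        rw [List.concat_eq_append]
        exact this

theorem back_words (hψ1 : ψ 1 = 1) (htr : ∀ f g, ψ (f * g) = ψ (g * f))
    (hSD : ∀ g f, ψ (FreeAlgebra.ι ℂ (Sum.inl g) * f) = DD (cv g) ψ f 1 1) (N : ℕ) :
    ∀ L : List (Option κ × List (ι ⊕ M)), GW (colr cG) L → L ≠ [] → sz L < N →
      ψ (Zp ψ L) = 0 := by
  induction N with
  | zero => intro L _ _ h; omega
  | succ N IH =>
    intro L hG hne hlen
    rcases L with _ | ⟨⟨_ | k, w⟩, L⟩
    · exact absurd rfl hne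
    · exact stage_b hψ1 htr N (fun k w L h1 h2 => stage_a hψ1 hSD N IH k w L h1 h2) w L hG (by omega)
    · exact stage_a hψ1 hSD N IH k w L hG (by omega)

end Backward

section Back2
variable {T : Type*} [Ring T] [Algebra ℂ T] {ι M κ : Type*} [DecidableEq ι]

theorem centered_span {Λ κ' : Type*} (φ : T →ₗ[ℂ] ℂ) (v : Λ → T) (col : Λ → κ') (k : κ') (z : T)
    (hz : z ∈ Algebra.adjoin ℂ (Set.image v {l | col l = k})) (h0 : φ z = 0) :
    z ∈ Submodule.span ℂ {y | ∃ w : List Λ, (∀ l ∈ w, col l = k) ∧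
      y = FreeAlgebra.lift ℂ v (cw (psi φ v) w)} := by
  set S := Submodule.span ℂ {y | ∃ w : List Λ, (∀ l ∈ w, col l = k) ∧
      y = FreeAlgebra.lift ℂ v (cw (psi φ v) w)} with hS
  have key : z - φ z • 1 ∈ S := by
    clear h0
    rw [← Subalgebra.mem_toSubmodule, Algebra.adjoin_eq_span] at hz
    induction hz using Submodule.span_induction with
    | mem x hx =>
      obtain ⟨l, hl, rfl⟩ := Submonoid.exists_list_of_mem_closure hx
      have : ∃ w : List Λ, (∀ l ∈ w, col l = k) ∧ l = w.map v := by
        clear hx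
        induction l with
        | nil => exact ⟨[], by simp, by simp⟩
        | cons a l ih =>
          obtain ⟨w, hw, hw'⟩ := ih (fun y hy => hl y (List.mem_cons_of_mem _ hy))
          obtain ⟨b, hb, hb'⟩ := hl a List.mem_cons_self
          refine ⟨b :: w, ?_, by rw [List.map_cons, hb', hw']⟩
          intro c hc
          rcases List.mem_cons.1 hc with rfl | hc
          · exact hb
          · exact hw c hc
      obtain ⟨w, hw, rfl⟩ := this
      refine Submodule.subset_span ⟨w, hw, ?_⟩
      have e : FreeAlgebra.lift ℂ v (Wd w) = (w.map v).prod := by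
        simp [Wd, map_list_prod, Function.comp_def]
      simp [cw, psi_apply, e]
    | zero => simp
    | add x y _ _ hx hy =>
      have : x + y - φ (x + y) • (1 : T) = (x - φ x • 1) + (y - φ y • 1) := by
        rw [map_add, add_smul]; abel
      rw [this]; exact S.add_mem hx hy
    | smul r x _ hx =>
      have : r • x - φ (r • x) • (1 : T) = r • (x - φ x • 1) := by
        rw [map_smul, smul_sub, smul_smul, smul_eq_mul]
      rw [this]; exact S.smul_mem _ hx
  rwa [h0, zero_smul, sub_zero] at key

theorem backward (φ : T →ₗ[ℂ] ℂ) (hφ1 : φ 1 = 1) (htr : ∀ f g, φ (f * g) = φ (g * f))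
    (v : ι ⊕ M → T)
    (hSD : ∀ g f, psi φ v (FreeAlgebra.ι ℂ (Sum.inl g) * f) = DD (cv g) (psi φ v) f 1 1)
    (cG : ι → κ) :
    AreFree (fun z => φ z) (fun k : Option κ => Set.image v {l | colr cG l = k}) := by
  have hW : ∀ L : List (Option κ × List (ι ⊕ M)), GW (colr cG) L → L ≠ [] →
      psi φ v (Zp (psi φ v) L) = 0 := by
    intro L h1 h2
    exact back_words (by simp [psi_apply, hφ1]) (fun f g => by simp [psi_apply, htr]) hSD
      (sz L + 1) L h1 h2 (by omega)
  apply free_of_list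
  intro L hne hch hmem h0
  have gen : ∀ (L : List (Option κ × T)) (L1 : List (Option κ × List (ι ⊕ M))),
      L1.map Prod.fst ++ L.map Prod.fst ≠ [] →
      (L1.map Prod.fst ++ L.map Prod.fst).IsChain (· ≠ ·) →
      (∀ a ∈ L1, ∀ l ∈ a.2, colr cG l = a.1) →
      (∀ a ∈ L, a.2 ∈ Algebra.adjoin ℂ (Set.image v {l | colr cG l = a.1})) →
      (∀ a ∈ L, φ a.2 = 0) →
      φ (FreeAlgebra.lift ℂ v (Zp (psi φ v) L1) * (L.map Prod.snd).prod) = 0 := by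
    intro L
    induction L with
    | nil =>
      intro L1 hne hch hc _ _
      have := hW L1 ⟨by simpa using hch, hc⟩ (by simpa using hne)
      rw [psi_apply] at this
      simpa using this
    | cons a L ih =>
      intro L1 hne hch hc hmem h0
      have ha := centered_span φ v (colr cG) a.1 a.2 (hmem a List.mem_cons_self)
        (h0 a List.mem_cons_self)
      rw [List.map_cons, List.prod_cons]
      generalize a.2 = y at ha ⊢
      induction ha using Submodule.span_induction with
      | mem x hx =>
        obtain ⟨w, hw, rfl⟩ := hx
        have := ih (L1 ++ [(a.1, w)]) (by simp) (by simpa using hch) (by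
          intro b hb
          rcases List.mem_append.1 hb with hb | hb
          · exact hc b hb
          · rw [List.mem_singleton] at hb
            subst hb
            exact hw) (fun b hb => hmem b (List.mem_cons_of_mem _ hb))
            (fun b hb => h0 b (List.mem_cons_of_mem _ hb))
        rw [Zp_append, Zp_single, map_mul (FreeAlgebra.lift ℂ v), mul_assoc] at this
        exact this
      | zero => simp
      | add x y _ _ hx hy => rw [add_mul, mul_add, map_add, hx, hy, add_zero]
      | smul r x _ hx => rw [smul_mul_assoc, mul_smul_comm, map_smul, hx, smul_zero]
  have := gen L [] (by simpa using hne) (by simpa using hch) (by simp) hmem h0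
  simpa [Zp_nil] using this

theorem back_semicirc (φ : T →ₗ[ℂ] ℂ) (hφ1 : φ 1 = 1) (v : ι ⊕ M → T)
    (hSD : ∀ g f, psi φ v (FreeAlgebra.ι ℂ (Sum.inl g) * f) = DD (cv g) (psi φ v) f 1 1)
    (g : ι) : SemicircMoments (fun z => φ z) (v (Sum.inl g)) := by
  rw [semicirc_iff]
  have e : ∀ n, psi φ v (FreeAlgebra.ι ℂ (Sum.inl g) ^ n) = φ (v (Sum.inl g) ^ n) := by
    intro n; simp [psi_apply]
  intro n
  induction n using Nat.strong_induction_on with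
  | _ n ih =>
    rcases n with _ | n
    · simp [hφ1, scm]
    · rw [← e, pow_succ', hSD, DD_pow _ _ _ (by simp [cv]), scm_rec]
      apply Finset.sum_congr rfl
      intro j hj
      have := Finset.mem_range.1 hj
      rw [one_mul, mul_one, e, e, ← ih j (by omega), ← ih (n - 1 - j) (by omega)]

end Back2

section Mat
variable {A : Type*} [Ring A] [Algebra ℂ A] {d : ℕ}

/-- linear version of `phid`; no star structure needed -/
def phidL (φ : A →ₗ[ℂ] ℂ) : Matrix (Fin d) (Fin d) A →ₗ[ℂ] ℂ where
  toFun X := phid φ X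
  map_add' X Y := by simp [phid, Finset.sum_add_distrib, add_div]
  map_smul' r X := by simp [phid, ← Finset.mul_sum, mul_div_assoc]

theorem phidL_apply (φ : A →ₗ[ℂ] ℂ) (X : Matrix (Fin d) (Fin d) A) : phidL φ X = phid φ X := rfl

theorem DDmat_mul {Λ : Type*} (c : Λ → ℂ) (ψ : FreeAlgebra ℂ Λ →ₗ[ℂ] ℂ)
    (X Y P Q : Matrix (Fin d) (Fin d) (FreeAlgebra ℂ Λ)) (i j : Fin d) :
    ∑ k, ∑ l, DD c ψ ((X * Y) k l) (P j k) (Q l i) =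
      ∑ k, ∑ l, DD c ψ (Y k l) ((P * X) j k) (Q l i) +
      ∑ k, ∑ l, DD c ψ (X k l) (P j k) ((Y * Q) l i) := by
  simp only [Matrix.mul_apply, map_sum, LinearMap.sum_apply, DD_mul, Finset.sum_add_distrib]
  congr 1
  · have h1 : ∀ k, ∑ l, ∑ m, DD c ψ (Y m l) (P j k * X k m) (Q l i) =
        ∑ m, ∑ l, DD c ψ (Y m l) (P j k * X k m) (Q l i) := fun k => Finset.sum_comm
    simp only [h1]
    rw [Finset.sum_comm]
    apply Finset.sum_congr rfl
    intro m _
    exact Finset.sum_comm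
  · apply Finset.sum_congr rfl
    intro k _
    exact Finset.sum_comm

variable {K : Type*} [Fintype K] [DecidableEq K]

/-- values of the letters of the matrix system -/
def vmat (s : K → A) (B : Set A) (cof : Fin 2 → Fin d → Fin d → K → ℂ) :
    Fin 2 ⊕ {X : Matrix (Fin d) (Fin d) A // ∀ i j, X i j ∈ B} → Matrix (Fin d) (Fin d) A :=
  Sum.elim (fun a => Matrix.of fun i j => ∑ κ, cof a i j κ • s κ) (fun X => X.1)

/-- letters of the matrix system, as matrices of noncommutative polynomials -/
def lmat (B : Set A) (cof : Fin 2 → Fin d → Fin d → K → ℂ) :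
    Fin 2 ⊕ {X : Matrix (Fin d) (Fin d) A // ∀ i j, X i j ∈ B} →
      Matrix (Fin d) (Fin d) (FreeAlgebra ℂ (K ⊕ B)) :=
  Sum.elim (fun a => Matrix.of fun i j => ∑ κ, cof a i j κ • FreeAlgebra.ι ℂ (Sum.inl κ))
    (fun X => Matrix.of fun i j => FreeAlgebra.ι ℂ (Sum.inr ⟨X.1 i j, X.2 i j⟩))

variable (φ : A →ₗ[ℂ] ℂ) (s : K → A) (B : Set A) (cof : Fin 2 → Fin d → Fin d → K → ℂ)

theorem ev_mat (f : FreeAlgebra ℂ (Fin 2 ⊕ {X : Matrix (Fin d) (Fin d) A // ∀ i j, X i j ∈ B}))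
    (i j : Fin d) :
    FreeAlgebra.lift ℂ (vmat s B cof) f i j =
      FreeAlgebra.lift ℂ (Sum.elim s (fun b : B => (b : A)))
        (FreeAlgebra.lift ℂ (lmat B cof) f i j) := by
  have h : FreeAlgebra.lift ℂ (vmat s B cof) =
      ((FreeAlgebra.lift ℂ (Sum.elim s (fun b : B => (b : A)))).mapMatrix).comp
        (FreeAlgebra.lift ℂ (lmat B cof)) := by
    ext l i j
    rcases l with a | X
    · simp [vmat, lmat]
    · simp [vmat, lmat]
  rw [h]
  simp

theorem psi_mat (f : FreeAlgebra ℂ (Fin 2 ⊕ {X : Matrix (Fin d) (Fin d) A // ∀ i j, X i j ∈ B})) :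
    psi (phidL φ) (vmat s B cof) f =
      (∑ i, psi φ (Sum.elim s (fun b : B => (b : A)))
        (FreeAlgebra.lift ℂ (lmat B cof) f i i)) / d := by
  simp only [psi_apply, phidL_apply, phid, ev_mat]

theorem transfer (hd : (d : ℂ) ≠ 0)
    (hcov : ∀ a b i j k l, ∑ κ, cof a i j κ * cof b k l κ =
      if b = a ∧ l = i ∧ k = j then 1 / (d : ℂ) else 0) (a : Fin 2)
    (f : FreeAlgebra ℂ (Fin 2 ⊕ {X : Matrix (Fin d) (Fin d) A // ∀ i j, X i j ∈ B})) :
    ∀ p q, DD (cv a) (psi (phidL φ) (vmat s B cof)) f p q =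
      (∑ i, ∑ j, ∑ κ, cof a i j κ * ∑ k, ∑ l,
        DD (cv κ) (psi φ (Sum.elim s (fun b : B => (b : A))))
          (FreeAlgebra.lift ℂ (lmat B cof) f k l)
          (FreeAlgebra.lift ℂ (lmat B cof) p j k)
          (FreeAlgebra.lift ℂ (lmat B cof) q l i)) / d := by
  set ψ := psi φ (Sum.elim s (fun b : B => (b : A))) with hψ
  set Γ := FreeAlgebra.lift ℂ (lmat (d := d) B cof) with hΓ
  induction f using FreeAlgebra.induction with
  | grade0 r =>
    intro p q
    rw [DD_algebraMap]
    symm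
    rw [div_eq_zero_iff]
    left
    refine Finset.sum_eq_zero fun i _ => Finset.sum_eq_zero fun j _ =>
      Finset.sum_eq_zero fun κ _ => ?_
    rw [Finset.sum_eq_zero, mul_zero]
    intro k _
    refine Finset.sum_eq_zero fun l _ => ?_
    rw [AlgHom.commutes, Matrix.algebraMap_matrix_apply]
    split_ifs
    · exact DD_algebraMap ..
    · simp
  | grade1 l =>
    intro p q
    rw [DD_ι, psi_mat, psi_mat]
    rcases l with b | X
    · have h1 : ∀ k l, Γ (FreeAlgebra.ι ℂ (Sum.inl b)) k l =
          ∑ κ, cof b k l κ • FreeAlgebra.ι ℂ (Sum.inl κ) := by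
        intro k l
        simp [hΓ, lmat]
      have h2 : ∀ (κ : K) (k l : Fin d) (P Q : FreeAlgebra ℂ (K ⊕ B)),
          DD (cv κ) ψ (Γ (FreeAlgebra.ι ℂ (Sum.inl b)) k l) P Q
          = cof b k l κ * (ψ P * ψ Q) := by
        intro κ k l P Q
        rw [h1]
        simp only [map_sum, map_smul, LinearMap.sum_apply, LinearMap.smul_apply, DD_ι, cv,
          Sum.elim_inl, smul_eq_mul]
        simp
      simp only [h2]
      have h3 : ∀ i j, ∑ κ, cof a i j κ * ∑ k, ∑ l, cof b k l κ *
          (ψ (Γ p j k) * ψ (Γ q l i)) =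
          if b = a then 1 / (d : ℂ) * (ψ (Γ p j j) * ψ (Γ q i i)) else 0 := by
        intro i j
        simp only [Finset.mul_sum, ← mul_assoc]
        rw [Finset.sum_comm]
        have : ∀ k, ∑ κ, ∑ l, cof a i j κ * cof b k l κ * ψ (Γ p j k) * ψ (Γ q l i) =
            ∑ l, (∑ κ, cof a i j κ * cof b k l κ) * ψ (Γ p j k) * ψ (Γ q l i) := by
          intro k
          rw [Finset.sum_comm]
          simp only [Finset.sum_mul]
        simp only [this, hcov]
        by_cases hba : b = a
        · simp only [hba, true_and, if_true, ite_and, ite_mul, zero_mul]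
          simp
        · simp [hba]
      simp only [h3, cv, Sum.elim_inl]
      by_cases hba : b = a
      · simp only [hba, if_true, ← Finset.mul_sum, ← Finset.sum_mul]
        field_simp
        try rfl
      · simp [hba]
    · have h1 : ∀ (κ : K) (k l : Fin d) (P Q : FreeAlgebra ℂ (K ⊕ B)),
          DD (cv κ) ψ (Γ (FreeAlgebra.ι ℂ (Sum.inr X)) k l) P Q = 0 := by
        intro κ k l P Q
        simp [hΓ, lmat, DD_ι, cv]
      simp only [h1]
      simp [cv]
  | mul f g hf hg =>
    intro p q
    rw [DD_mul, hf, hg]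
    simp only [map_mul, DDmat_mul, mul_add, Finset.sum_add_distrib, add_div]
  | add f g hf hg =>
    intro p q
    simp only [map_add, LinearMap.add_apply, hf, hg, Matrix.add_apply, mul_add,
      Finset.sum_add_distrib, add_div]

theorem matrix_SD (hd : (d : ℂ) ≠ 0)
    (hcov : ∀ a b i j k l, ∑ κ, cof a i j κ * cof b k l κ =
      if b = a ∧ l = i ∧ k = j then 1 / (d : ℂ) else 0)
    (hfw : ∀ (g : K) (f : FreeAlgebra ℂ (K ⊕ B)),
      psi φ (Sum.elim s (fun b : B => (b : A))) (FreeAlgebra.ι ℂ (Sum.inl g) * f) =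
      DD (cv g) (psi φ (Sum.elim s (fun b : B => (b : A)))) f 1 1) (a : Fin 2)
    (f : FreeAlgebra ℂ (Fin 2 ⊕ {X : Matrix (Fin d) (Fin d) A // ∀ i j, X i j ∈ B})) :
    psi (phidL φ) (vmat s B cof) (FreeAlgebra.ι ℂ (Sum.inl a) * f) =
      DD (cv a) (psi (phidL φ) (vmat s B cof)) f 1 1 := by
  rw [transfer φ s B cof hd hcov, psi_mat]
  congr 1
  apply Finset.sum_congr rfl
  intro i _
  rw [map_mul, Matrix.mul_apply, map_sum]
  apply Finset.sum_congr rfl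
  intro j _
  have h1 : FreeAlgebra.lift ℂ (lmat (d := d) B cof) (FreeAlgebra.ι ℂ (Sum.inl a)) i j =
          ∑ κ, cof a i j κ • FreeAlgebra.ι ℂ (Sum.inl κ) := by
    simp [lmat]
  rw [h1, Finset.sum_mul, map_sum]
  apply Finset.sum_congr rfl
  intro κ _
  rw [smul_mul_assoc, map_smul, hfw, smul_eq_mul]
  have hone : FreeAlgebra.lift ℂ (lmat (d := d) B cof) 1 = 1 := map_one _
  rw [hone]
  refine congrArg (cof a i j κ * ·) ?_
  rw [Finset.sum_eq_single j, Finset.sum_eq_single i]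
  · simp
  · intro l _ hl
    rw [Matrix.one_apply_ne hl]
    simp
  · simp
  · intro k _ hk
    rw [Matrix.one_apply_ne (Ne.symm hk)]
    simp
  · simp

end Mat

/-- normalization -/
def alp (d : ℕ) : ℂ := ((Real.sqrt (2 * d) : ℂ))⁻¹ * ((Real.sqrt 2 : ℂ))⁻¹

theorem alp_sq (d : ℕ) : alp d * alp d = 1 / (4 * d) := by
  have h1 : (Real.sqrt (2 * d) : ℂ) * (Real.sqrt (2 * d) : ℂ) = 2 * d := by
    rw [← Complex.ofReal_mul, Real.mul_self_sqrt (by positivity)]; push_cast; rfl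
  have h2 : (Real.sqrt 2 : ℂ) * (Real.sqrt 2 : ℂ) = 2 := by
    rw [← Complex.ofReal_mul, Real.mul_self_sqrt (by positivity)]; push_cast; rfl
  have : alp d * alp d = ((Real.sqrt (2 * d) : ℂ) * (Real.sqrt (2 * d) : ℂ))⁻¹ *
      ((Real.sqrt 2 : ℂ) * (Real.sqrt 2 : ℂ))⁻¹ := by
    rw [alp, mul_inv, mul_inv]; ring
  rw [this, h1, h2, ← mul_inv, one_div]
  congr 1
  ring

/-- coefficients of the entries of `S₁`, `S₂` -/
def cof (d : ℕ) (a : Fin 2) (i j : Fin d) : (Fin d × Fin d) ⊕ (Fin d × Fin d) → ℂ :=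
  if a = 0 then
    Sum.elim (fun q => alp d * ((if q = (i, j) then 1 else 0) + (if q = (j, i) then 1 else 0)))
      (fun q => alp d * Complex.I *
        ((if q = (i, j) then 1 else 0) - (if q = (j, i) then 1 else 0)))
  else
    Sum.elim (fun q => alp d * Complex.I *
        ((if q = (j, i) then 1 else 0) - (if q = (i, j) then 1 else 0)))
      (fun q => alp d * ((if q = (i, j) then 1 else 0) + (if q = (j, i) then 1 else 0)))

theorem cof_zero (d : ℕ) (i j : Fin d) : cof d 0 i j =
    Sum.elim (fun q => alp d * ((if q = (i, j) then 1 else 0) + (if q = (j, i) then 1 else 0)))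
      (fun q => alp d * Complex.I *
        ((if q = (i, j) then 1 else 0) - (if q = (j, i) then 1 else 0))) := rfl

theorem cof_one (d : ℕ) (i j : Fin d) : cof d 1 i j =
    Sum.elim (fun q => alp d * Complex.I *
        ((if q = (j, i) then 1 else 0) - (if q = (i, j) then 1 else 0)))
      (fun q => alp d * ((if q = (i, j) then 1 else 0) + (if q = (j, i) then 1 else 0))) := rfl

theorem sum_ind {Q : Type*} [Fintype Q] [DecidableEq Q] (α β γ δ α' β' : ℂ) (p p' r r' : Q) :
    ∑ q, (α * (β * (if q = p then 1 else 0) + γ * (if q = p' then 1 else 0))) *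
      (α' * (β' * (if q = r then 1 else 0) + δ * (if q = r' then 1 else 0))) =
    α * α' * (β * β' * (if p = r then 1 else 0) + β * δ * (if p = r' then 1 else 0) +
      γ * β' * (if p' = r then 1 else 0) + γ * δ * (if p' = r' then 1 else 0)) := by
  have h : ∀ q, (α * (β * (if q = p then 1 else 0) + γ * (if q = p' then 1 else 0))) *
      (α' * (β' * (if q = r then 1 else 0) + δ * (if q = r' then 1 else 0))) =
      (if q = p then α * β * (α' * (β' * (if q = r then 1 else 0) + δ * (if q = r' then 1 else 0)))
        else 0) +
      (if q = p' then
        α * γ * (α' * (β' * (if q = r then 1 else 0) + δ * (if q = r' then 1 else 0))) else 0) := by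
    intro q
    split_ifs <;> ring
  simp only [h, Finset.sum_add_distrib, Finset.sum_ite_eq', Finset.mem_univ, if_true]
  ring

theorem cof_cov {d : ℕ} (hd : 0 < d) (a b : Fin 2) (i j k l : Fin d) :
    ∑ κ, cof d a i j κ * cof d b k l κ =
      if b = a ∧ l = i ∧ k = j then 1 / (d : ℂ) else 0 := by
  have hdC : (d : ℂ) ≠ 0 := by exact_mod_cast hd.ne'
  have hI := Complex.I_mul_I
  have hα := alp_sq d
  have s1 := fun (α γ δ α' β β' : ℂ) => sum_ind α β γ δ α' β' (i, j) (j, i) (k, l) (l, k)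
  have e1 : ((i, j) = (l, k)) ↔ (l = i ∧ k = j) := by simp [Prod.ext_iff, eq_comm]
  have e2 : ((j, i) = (k, l)) ↔ (l = i ∧ k = j) := by
    simp [Prod.ext_iff, eq_comm]; tauto
  have e3 : ((j, i) = (l, k)) ↔ ((i, j) = (k, l)) := by
    simp [Prod.ext_iff]; tauto
  have h1 : ∀ u w : ℂ, u + w = 1 * u + 1 * w := by intros; ring
  have h2 : ∀ u w : ℂ, u - w = 1 * u + (-1) * w := by intros; ring
  have h3 : ∀ u w : ℂ, u - w = (-1) * w + 1 * u := by intros; ring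
  have hα4 : alp d * alp d * 4 = 1 / d := by
    rw [hα]; field_simp
  rw [Fintype.sum_sum_type]
  fin_cases a <;> fin_cases b <;>
    simp only [Fin.zero_eta, Fin.mk_one, cof_zero, cof_one, Sum.elim_inl, Sum.elim_inr]
  · simp only [h1 (ite _ _ _), h2 (ite _ _ _), s1, e1, e2, e3]
    rw [show alp d * Complex.I * (alp d * Complex.I) = - (alp d * alp d) by
      linear_combination alp d * alp d * hI]
    simp only [true_and]
    split_ifs <;> first | ring1 | linear_combination hα4
  · simp only [h1 (ite _ _ _), h2 (ite (_ = (i, j)) _ _), h3 (ite (_ = (l, k)) _ _), s1, e1, e2, e3]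
    simp only [show ((0 : Fin 2) = 1) = False by simp, show ((1 : Fin 2) = 0) = False by simp,
      false_and, if_false]
    split_ifs <;> ring
  · simp only [h1 (ite _ _ _), h3 (ite (_ = (j, i)) _ _), h2 (ite (_ = (k, l)) _ _), s1, e1, e2, e3]
    simp only [show ((0 : Fin 2) = 1) = False by simp, show ((1 : Fin 2) = 0) = False by simp,
      false_and, if_false]
    split_ifs <;> ring
  · simp only [h1 (ite _ _ _), h3 (ite _ _ _), s1, e1, e2, e3]
    rw [show alp d * Complex.I * (alp d * Complex.I) = - (alp d * alp d) by
      linear_combination alp d * alp d * hI]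
    simp only [true_and]
    split_ifs <;> first | ring1 | linear_combination hα4

end SD

/-- Proposition 5.3, 1°: a matrix `C` whose entries are free circular elements,
free from `ℬ`, is circular of variance `d` in `M_d(𝒜)` — more precisely the real and
imaginary parts `S₁ = (C + C*)/√(2d)`, `S₂ = (C − C*)/(i√(2d))` are self-adjoint,
standard semicircular in moments, and `{S₁}, {S₂}, M_d(ℬ)` are free; in particular
`{C, C*}` is free from `M_d(ℬ)`. -/
theorem matrix_of_circulars_is_circular_and_free
    {d : ℕ} (hd : 0 < d)
    (φ : A →ₗ[ℂ] ℂ)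
    (hφ1 : φ 1 = 1)
    (hφpos : ∀ x : A, 0 ≤ φ (star x * x))
    (hφtr : ∀ x y : A, φ (x * y) = φ (y * x))
    (B : StarSubalgebra ℂ A)
    (x y : Fin d → Fin d → A)
    (hx_sa : ∀ i j, star (x i j) = x i j)
    (hx_sc : ∀ i j, SemicircMoments (fun z => φ z) (x i j))
    (hy_sa : ∀ i j, star (y i j) = y i j)
    (hy_sc : ∀ i j, SemicircMoments (fun z => φ z) (y i j))
    (hfree : AreFree (fun z => φ z)
      (Sum.elim (fun q : Fin d × Fin d => ({x q.1 q.2} : Set A))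
        (Sum.elim (fun q : Fin d × Fin d => ({y q.1 q.2} : Set A))
          (fun _ : Unit => (B : Set A))))) :
    let C : Matrix (Fin d) (Fin d) A := Matrix.of fun i j => circ (x i j) (y i j)
    let S₁ : Matrix (Fin d) (Fin d) A :=
      ((Real.sqrt (2 * d) : ℂ))⁻¹ • (C + star C)
    let S₂ : Matrix (Fin d) (Fin d) A :=
      (Complex.I * (Real.sqrt (2 * d) : ℂ))⁻¹ • (C - star C)
    star S₁ = S₁ ∧ star S₂ = S₂ ∧
    SemicircMoments (fun X => phid φ X) S₁ ∧
    SemicircMoments (fun X => phid φ X) S₂ ∧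
    AreFree (fun X => phid φ X)
      (![{S₁}, {S₂}, {X : Matrix (Fin d) (Fin d) A | ∀ i j, X i j ∈ B}] :
        Fin 3 → Set (Matrix (Fin d) (Fin d) A)) ∧
    AreFree (fun X => phid φ X)
      (![{C, star C}, {X : Matrix (Fin d) (Fin d) A | ∀ i j, X i j ∈ B}] :
        Fin 2 → Set (Matrix (Fin d) (Fin d) A)) := by
  intro C S₁ S₂
  have hdC : (d : ℂ) ≠ 0 := by exact_mod_cast hd.ne'
  have hcov := SD.cof_cov hd
  let s : (Fin d × Fin d) ⊕ (Fin d × Fin d) → A :=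
    Sum.elim (fun q => x q.1 q.2) (fun q => y q.1 q.2)
  have hsc : ∀ i n, φ (s i ^ n) = SD.scm n := by
    rintro (q | q) n
    · exact (SD.semicirc_iff _ _).1 (hx_sc q.1 q.2) n
    · exact (SD.semicirc_iff _ _).1 (hy_sc q.1 q.2) n
  have hfree' : AreFree (fun z => φ z)
      (Sum.elim (fun i => ({s i} : Set A)) (fun _ : Unit => (B : Set A))) := by
    refine SD.free_mono hfree (Equiv.sumAssoc _ _ _) (Equiv.injective _) ?_
    rintro ((q | q) | u)
    · exact Algebra.subset_adjoin
    · exact Algebra.subset_adjoin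
    · exact Algebra.subset_adjoin
  have hfw := SD.forward φ hφ1 s (B : Set A) hsc hfree'
  have hSD := SD.matrix_SD φ s (B : Set A) (SD.cof d) hdC hcov hfw
  set v' := SD.vmat s (B : Set A) (SD.cof d) with hv'
  have hreal : ∀ r : ℝ, star ((r : ℂ)⁻¹) = (r : ℂ)⁻¹ := by
    intro r
    rw [star_inv₀]
    congr 1
    exact Complex.conj_ofReal r
  have hI : star Complex.I = - Complex.I := Complex.conj_I
  have hcs : ∀ i j, star (circ (x i j) (y i j)) =
      ((Real.sqrt 2 : ℂ))⁻¹ • (x i j - Complex.I • y i j) := by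
    intro i j
    rw [circ, star_smul, star_add, star_smul, hx_sa, hy_sa, hreal, hI, neg_smul, sub_eq_add_neg]
  have hS1 : v' (Sum.inl 0) = S₁ := by
    ext i j
    simp only [hv', SD.vmat, SD.cof_zero, Sum.elim_inl, Matrix.of_apply, S₁, C, Matrix.smul_apply,
      Matrix.add_apply, Matrix.star_apply, hcs, s]
    rw [circ]
    simp only [Fintype.sum_sum_type, Sum.elim_inl, Sum.elim_inr, mul_add, mul_sub, add_smul,
      sub_smul, Finset.sum_add_distrib, Finset.sum_sub_distrib, mul_ite, mul_one, mul_zero,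
      ite_smul, zero_smul, Finset.sum_ite_eq', Finset.mem_univ, if_true, smul_add, smul_sub,
      smul_smul, SD.alp]
    module
  have hS2 : v' (Sum.inl 1) = S₂ := by
    ext i j
    simp only [hv', SD.vmat, SD.cof_one, Sum.elim_inl, Matrix.of_apply, S₂, C, Matrix.smul_apply,
      Matrix.sub_apply, Matrix.star_apply, hcs, s]
    rw [circ]
    simp only [Fintype.sum_sum_type, Sum.elim_inl, Sum.elim_inr, mul_add, mul_sub, add_smul,
      sub_smul, Finset.sum_add_distrib, Finset.sum_sub_distrib, mul_ite, mul_one, mul_zero,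
      ite_smul, zero_smul, Finset.sum_ite_eq', Finset.mem_univ, if_true, smul_add, smul_sub,
      smul_smul, SD.alp, mul_inv, Complex.inv_I, neg_mul, mul_neg, neg_smul]
    have hII : ∀ u w : ℂ, Complex.I * u * (w * Complex.I) = - (u * w) := by
      intro u w
      linear_combination u * w * Complex.I_mul_I
    simp only [hII]
    module
  have hM : ∀ X : Matrix (Fin d) (Fin d) A, (∀ i j, X i j ∈ B) →
      ∃ m, v' (Sum.inr m) = X := fun X hX => ⟨⟨X, hX⟩, rfl⟩
  have hφd1 : SD.phidL (d := d) φ 1 = 1 := by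
    simp [SD.phidL_apply, phid, hφ1, hdC]
  have hφdtr : ∀ X Y : Matrix (Fin d) (Fin d) A,
      SD.phidL φ (X * Y) = SD.phidL φ (Y * X) := by
    intro X Y
    simp only [SD.phidL_apply, phid, Matrix.mul_apply, map_sum]
    rw [Finset.sum_comm]
    simp only [hφtr]
  have hsc1 := SD.back_semicirc _ hφd1 v' hSD 0
  have hsc2 := SD.back_semicirc _ hφd1 v' hSD 1
  rw [hS1] at hsc1
  rw [hS2] at hsc2
  have hsaC : star (star C) = C := star_star C
  have hS1sa : star S₁ = S₁ := by
    simp only [S₁]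
    rw [star_smul, star_add, star_star, hreal, add_comm]
  have hS2sa : star S₂ = S₂ := by
    simp only [S₂]
    rw [star_smul, star_sub, star_star, mul_inv, star_mul', hreal, star_inv₀, hI, ← neg_sub C,
      smul_neg, ← neg_smul]
    congr 1
    rw [inv_neg]
    ring
  refine ⟨hS1sa, hS2sa, hsc1, hsc2, ?_, ?_⟩
  · have h5 := SD.backward _ hφd1 hφdtr v' hSD (id : Fin 2 → Fin 2)
    refine SD.free_mono h5 (![some 0, some 1, none] : Fin 3 → Option (Fin 2)) (by decide) ?_
    intro k
    fin_cases k
    · rintro _ rfl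
      exact Algebra.subset_adjoin ⟨Sum.inl 0, by simp [SD.colr], hS1⟩
    · rintro _ rfl
      exact Algebra.subset_adjoin ⟨Sum.inl 1, by simp [SD.colr], hS2⟩
    · intro X hX
      obtain ⟨m, hm⟩ := hM X hX
      exact Algebra.subset_adjoin ⟨Sum.inr m, by simp [SD.colr], hm⟩
  · have h6 := SD.backward _ hφd1 hφdtr v' hSD (fun _ : Fin 2 => ())
    refine SD.free_mono h6 (![some (), none] : Fin 2 → Option Unit) (by decide) ?_
    have hd2 : (Real.sqrt (2 * d) : ℂ) ≠ 0 := by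
      have : (0 : ℝ) < d := by exact_mod_cast hd
      have : (0 : ℝ) < Real.sqrt (2 * d) := Real.sqrt_pos.2 (by positivity)
      exact_mod_cast this.ne'
    intro k
    fin_cases k
    · have m1 : S₁ ∈ Algebra.adjoin ℂ (Set.image v' {l | SD.colr (fun _ : Fin 2 => ()) l = some ()}) :=
        Algebra.subset_adjoin ⟨Sum.inl 0, by simp [SD.colr], hS1⟩
      have m2 : S₂ ∈ Algebra.adjoin ℂ (Set.image v' {l | SD.colr (fun _ : Fin 2 => ()) l = some ()}) :=
        Algebra.subset_adjoin ⟨Sum.inl 1, by simp [SD.colr], hS2⟩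
      have e1 : C + star C = (Real.sqrt (2 * d) : ℂ) • S₁ := by
        simp only [S₁]
        rw [smul_smul, mul_inv_cancel₀ hd2, one_smul]
      have e2 : C - star C = (Complex.I * (Real.sqrt (2 * d) : ℂ)) • S₂ := by
        simp only [S₂]
        rw [smul_smul, mul_inv_cancel₀ (mul_ne_zero Complex.I_ne_zero hd2), one_smul]
      have n1 := Subalgebra.smul_mem _ m1 (Real.sqrt (2 * d) : ℂ)
      have n2 := Subalgebra.smul_mem _ m2 (Complex.I * (Real.sqrt (2 * d) : ℂ))
      rw [← e1] at n1
      rw [← e2] at n2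
      have hCe : C = (2 : ℂ)⁻¹ • ((C + star C) + (C - star C)) := by module
      have hCs : star C = (2 : ℂ)⁻¹ • ((C + star C) - (C - star C)) := by module
      have hC := Subalgebra.smul_mem _ (add_mem n1 n2) (2 : ℂ)⁻¹
      have hC' := Subalgebra.smul_mem _ (sub_mem n1 n2) (2 : ℂ)⁻¹
      rw [← hCe] at hC
      rw [← hCs] at hC'
      intro X hX
      have hX : X = C ∨ X = star C := hX
      rcases hX with rfl | rfl
      · exact hC
      · exact hC'
    · intro X hX
      obtain ⟨m, hm⟩ := hM X hX
      exact Algebra.subset_adjoin ⟨Sum.inr m, by simp [SD.colr], hm⟩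
end
end
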